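/- arXiv:2506.03215 — 2 statements merged into one kernel-verified Lean document; each statement's English description precedes it below -/
import Mathlib

section
/- Let h ≥ 2 be an integer. There exists a constant τ = τ(h, K) with τ < 1 such that for every u ∈ ℕ and all distinct prime ideals p_1, …, p_u of O_K, the number of h-free ideals m of O_K with N(m) ≤ x and p_i | m for all i = 1, …, u equals (∏_{i=1}^u (N(p_i)^{h−1} − 1)/(N(p_i)^h − 1)) · (κ/ζ_K(h)) · x + O_{h,u}(x^τ / ∏_{i=1}^u N(p_i)^τ), where the implied constant depends only on h, u, and K. -/
open Filter Topology
open scoped BigOperators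

noncomputable section

variable (K : Type) [Field K] [NumberField K]

/-- `m` is an `h`-free ideal: no prime ideal divides `m` to order `h` or more. -/
def IsHFree (h : ℕ) (m : Ideal (NumberField.RingOfIntegers K)) : Prop :=
  m ≠ 0 ∧ ∀ p : Ideal (NumberField.RingOfIntegers K), p.IsPrime → ¬ p ^ h ∣ m

/-- The residue `κ` of the Dedekind zeta function of `K` at `s = 1`. -/
def kappa : ℝ :=
  (2 ^ NumberField.InfinitePlace.nrRealPlaces K *
      (2 * Real.pi) ^ NumberField.InfinitePlace.nrComplexPlaces K *
      (NumberField.classNumber K) * NumberField.Units.regulator K) /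
    ((NumberField.Units.torsionOrder K) * Real.sqrt |(NumberField.discr K : ℝ)|)

/-- The Dedekind zeta function of `K` at a real argument, as a sum over nonzero ideals. -/
def zetaKR (s : ℝ) : ℝ :=
  ∑' m : {m : Ideal (NumberField.RingOfIntegers K) // m ≠ 0},
    ((Ideal.absNorm m.1 : ℝ)) ^ (-s)

section
open MeasureTheory in
theorem lattice_upper {E ι : Type*} [NormedAddCommGroup E] [NormedSpace ℝ E] [MeasurableSpace E]
    [BorelSpace E] [Fintype ι] (b : Module.Basis ι ℝ E) (μ : Measure E) [μ.IsAddHaarMeasure]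
    (A : Finset E) (hA : ∀ v ∈ A, v ∈ Submodule.span ℤ (Set.range b)) (B : Set E)
    (hB : ∀ v ∈ A, ∀ f ∈ ZSpan.fundamentalDomain b, v + f ∈ B) :
    (A.card : ENNReal) * μ (ZSpan.fundamentalDomain b) ≤ μ B := by
  classical
  have : FiniteDimensional ℝ E := b.finiteDimensional_of_finite
  have hmeas := ZSpan.fundamentalDomain_measurableSet b
  have key : μ (⋃ v ∈ A, (fun f => v + f) '' ZSpan.fundamentalDomain b)
      = ∑ v ∈ A, μ ((fun f => v + f) '' ZSpan.fundamentalDomain b) := by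
    apply measure_biUnion_finset
    · intro v hv w hw hvw
      rw [Function.onFun, Set.disjoint_left]
      rintro _ ⟨f, hf, rfl⟩ ⟨g, hg, hfg⟩
      apply hvw
      simp only at hfg
      have h1 : ZSpan.fract b (v + f) = f := by
        rw [ZSpan.fract_zSpan_add b f (hA v hv), ZSpan.fract_eq_self.mpr hf]
      have h2 : ZSpan.fract b (w + g) = g := by
        rw [ZSpan.fract_zSpan_add b g (hA w hw), ZSpan.fract_eq_self.mpr hg]
      have : f = g := by rw [← h1, ← h2, hfg]
      subst this
      exact (add_right_cancel hfg).symm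
    · intro v _
      exact hmeas.const_vadd v
  calc (A.card : ENNReal) * μ (ZSpan.fundamentalDomain b)
      = ∑ v ∈ A, μ ((fun f => v + f) '' ZSpan.fundamentalDomain b) := by
        simp [measure_preimage_add]
    _ = _ := key.symm
    _ ≤ μ B := by
        apply measure_mono
        simp only [Set.iUnion_subset_iff]
        rintro v hv _ ⟨f, hf, rfl⟩
        exact hB v hv f hf

open MeasureTheory in
theorem lattice_lower {E ι : Type*} [NormedAddCommGroup E] [NormedSpace ℝ E] [MeasurableSpace E]
    [BorelSpace E] [Fintype ι] (b : Module.Basis ι ℝ E) (μ : Measure E) [μ.IsAddHaarMeasure]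
    (A : Finset E) (B : Set E)
    (hB : ∀ z ∈ B, ∀ v ∈ Submodule.span ℤ (Set.range b),
      z - v ∈ ZSpan.fundamentalDomain b → v ∈ A) :
    μ B ≤ (A.card : ENNReal) * μ (ZSpan.fundamentalDomain b) := by
  classical
  calc μ B ≤ μ (⋃ v ∈ A, (fun f => v + f) '' ZSpan.fundamentalDomain b) := by
        apply measure_mono
        intro z hz
        have h1 : z - (ZSpan.floor b z : E) ∈ ZSpan.fundamentalDomain b :=
          ZSpan.fract_mem_fundamentalDomain b z
        simp only [Set.mem_iUnion]
        exact ⟨_, hB z hz _ (ZSpan.floor b z).2 h1, _, h1, by simp⟩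
    _ ≤ ∑ v ∈ A, μ ((fun f => v + f) '' ZSpan.fundamentalDomain b) :=
        measure_biUnion_finset_le _ _
    _ = _ := by simp [measure_preimage_add]

open NumberField NumberField.InfinitePlace NumberField.mixedEmbedding
  NumberField.Units NumberField.Units.dirichletUnitTheorem NumberField.mixedEmbedding.fundamentalCone

section

open scoped Classical in
/-- parameter box -/
def pBox (s a b : ℝ) : Set (realSpace K) :=
  Set.univ.pi fun w ↦ if w = w₀ then Set.Iic s else Set.Ico a b

/-- the corresponding region of the mixed space -/
def pReg (s a b : ℝ) : Set (mixedSpace K) := normAtAllPlaces ⁻¹' (expMapBasis '' pBox K s a b)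

theorem measurableSet_pBox (s a b : ℝ) : MeasurableSet (pBox K s a b) := by
  refine MeasurableSet.univ_pi fun _ ↦ ?_
  split_ifs
  · exact measurableSet_Iic
  · exact measurableSet_Ico

theorem measurableSet_pReg (s a b : ℝ) : MeasurableSet (pReg K s a b) := by
  refine MeasurableSet.preimage ?_ (continuous_normAtAllPlaces K).measurable
  exact MeasurableSet.image_of_continuousOn_injOn (measurableSet_pBox K s a b)
    (continuous_expMapBasis K).continuousOn (injective_expMapBasis K).injOn

open scoped Classical in
open ENNReal MeasureTheory in
theorem setLIntegral_pBox_exp {n : ℕ} (hn : 0 < n) (s a b : ℝ) (hab : a ≤ b) :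
    ∫⁻ (x : realSpace K) in pBox K s a b, .ofReal (Real.exp (x w₀ * n)) =
      ENNReal.ofReal (Real.exp (n * s) / n * (b - a) ^ (Fintype.card (InfinitePlace K) - 1)) := by
  classical
  have hn : 0 < (n : ℝ) := Nat.cast_pos.mpr hn
  rw [volume_pi, pBox, Measure.restrict_pi_pi, lintegral_eq_lmarginal_univ 0,
    lmarginal_erase' _ (by fun_prop) (Finset.mem_univ w₀), if_pos rfl]
  simp_rw [Function.update_self, lmarginal, lintegral_const, Measure.pi_univ, if_neg
    (Finset.ne_of_mem_erase (Subtype.prop _)), Measure.restrict_apply_univ, Real.volume_Ico,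
    mul_comm _ (n : ℝ)]
  rw [← ofReal_integral_eq_lintegral_ofReal (integrableOn_exp_mul_Iic hn _), integral_exp_mul_Iic
    hn]
  · rw [ENNReal.ofReal_mul (by positivity), ENNReal.ofReal_pow (by linarith)]
    simp
  filter_upwards with _ using Real.exp_nonneg _

open scoped Classical in
open ENNReal MeasureTheory in
theorem exists_volume_pReg : ∃ V : ℝ, 0 ≤ V ∧ ∀ s a b : ℝ, a ≤ b →
    volume (pReg K s a b) = ENNReal.ofReal (V * Real.exp (Module.finrank ℚ K * s) *
      (b - a) ^ (Fintype.card (InfinitePlace K) - 1)) := by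
  classical
  have hn : 0 < Module.finrank ℚ K := Module.finrank_pos
  set W : ENNReal := 2 ^ nrRealPlaces K * .ofReal (2 * Real.pi) ^ nrComplexPlaces K *
    ((2 : ENNReal)⁻¹ ^ nrComplexPlaces K * ENNReal.ofReal (regulator K) * (Module.finrank ℚ K))
    with hW
  have hWtop : W ≠ ⊤ := by
    rw [hW]
    finiteness
  refine ⟨W.toReal / Module.finrank ℚ K, by positivity, fun s a b hab => ?_⟩
  have h0 : volume (pReg K s a b) = W * ∫⁻ (x : realSpace K) in pBox K s a b,
      .ofReal (Real.exp (x w₀ * Module.finrank ℚ K)) := by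
    rw [pReg, volume_eq_two_pow_mul_two_pi_pow_mul_integral Set.preimage_image_preimage (measurableSet_pReg K s a b),
      normAtAllPlaces_image_preimage_expMapBasis,
      setLIntegral_expMapBasis_image (measurableSet_pBox K s a b) (by fun_prop)]
    simp_rw [ENNReal.inv_mul_cancel_right
      (Finset.prod_ne_zero_iff.mpr fun _ _ ↦ ofReal_ne_zero_iff.mpr (expMapBasis_pos _ _))
      (prod_ne_top fun _ _ ↦ ofReal_ne_top)]
    rw [hW, ← mul_assoc]
  rw [h0, setLIntegral_pBox_exp K hn s a b hab]
  nth_rw 1 [← ENNReal.ofReal_toReal hWtop]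
  rw [← ENNReal.ofReal_mul (by positivity)]
  congr 1
  ring

end

end

section
open NumberField NumberField.InfinitePlace NumberField.mixedEmbedding
  NumberField.Units NumberField.Units.dirichletUnitTheorem NumberField.mixedEmbedding.fundamentalCone

section

variable {K} in
/-- logarithmic coordinates -/
def psi (z : mixedSpace K) : realSpace K :=
  (completeBasis K).equivFunL (fun w => (mult w : ℝ) * Real.log (normAtPlace w z))

variable {K} in
theorem expMapBasis_psi {z : mixedSpace K} (hz : ∀ w, 0 < normAtPlace w z) :
    expMapBasis (psi z) = normAtAllPlaces z := by
  rw [expMapBasis_apply, psi]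
  have : (completeBasis K).equivFun.symm ((completeBasis K).equivFunL
      (fun w => (mult w : ℝ) * Real.log (normAtPlace w z))) =
      (fun w => (mult w : ℝ) * Real.log (normAtPlace w z)) :=
    (completeBasis K).equivFun.symm_apply_apply _
  rw [this]
  ext w
  rw [expMap_apply, inv_mul_cancel_left₀ mult_coe_ne_zero, Real.exp_log (hz w)]

variable {K} in
theorem mem_pReg {z : mixedSpace K} {s a b : ℝ} :
    z ∈ pReg K s a b ↔ (∀ w, 0 < normAtPlace w z) ∧ psi z w₀ ≤ s ∧
      ∀ w, w ≠ w₀ → a ≤ psi z w ∧ psi z w < b := by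
  classical
  have h1 : psi z ∈ pBox K s a b ↔ psi z w₀ ≤ s ∧
      ∀ w, w ≠ w₀ → a ≤ psi z w ∧ psi z w < b := by
    simp only [pBox, Set.mem_univ_pi]
    constructor
    · intro h
      refine ⟨by simpa using h w₀, fun w hw => by simpa [hw] using h w⟩
    · rintro ⟨h1, h2⟩ w
      by_cases hw : w = w₀
      · subst hw; simpa using h1
      · simpa [hw] using h2 w hw
  rw [← h1]
  constructor
  · rintro ⟨y, hy, hyz⟩
    have hpos : ∀ w, 0 < normAtPlace w z := fun w => by
      have := expMapBasis_pos y w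
      rw [hyz] at this
      exact this
    refine ⟨hpos, ?_⟩
    rw [← expMapBasis_psi hpos] at hyz
    rwa [← injective_expMapBasis K hyz]
  · rintro ⟨hpos, h⟩
    exact ⟨_, h, expMapBasis_psi hpos⟩

variable {K} in
theorem norm_eq_exp_psi {z : mixedSpace K} (hz : ∀ w, 0 < normAtPlace w z) :
    mixedEmbedding.norm z = Real.exp (Module.finrank ℚ K * psi z w₀) := by
  rw [← norm_normAtAllPlaces, ← expMapBasis_psi hz, norm_expMapBasis, Real.exp_nat_mul]

theorem exists_lower_expMapBasis : ∃ c : ℝ, 0 < c ∧ ∀ x : realSpace K,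
    (∀ w, w ≠ w₀ → |x w| ≤ 2) → ∀ w, c * Real.exp (x w₀) ≤ expMapBasis x w := by
  classical
  set S : Set (realSpace K) := Set.univ.pi fun w ↦ if w = w₀ then {0} else Set.Icc (-2) 2
  have hS : IsCompact S := by
    refine isCompact_univ_pi fun w => ?_
    split_ifs
    · exact isCompact_singleton
    · exact isCompact_Icc
  have hne : S.Nonempty := ⟨0, fun w _ => by dsimp only; split_ifs <;> simp⟩
  have h1 : ∀ w, ∃ c : ℝ, 0 < c ∧ ∀ x ∈ S, c ≤ expMapBasis x w := by
    intro w
    obtain ⟨x, hx, hmin⟩ := hS.exists_isMinOn hne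
      (f := fun x => expMapBasis x w)
      (((continuous_apply w).comp (continuous_expMapBasis K)).continuousOn)
    exact ⟨_, expMapBasis_pos x w, fun y hy => hmin hy⟩
  choose c hc0 hc using h1
  obtain ⟨w1, hw1⟩ := Finite.exists_min c
  refine ⟨c w1, hc0 w1, fun x hx w => ?_⟩
  rw [expMapBasis_apply'', Pi.smul_apply, smul_eq_mul, mul_comm]
  refine mul_le_mul_of_nonneg_left ((hw1 w).trans (hc w _ ?_)) (Real.exp_nonneg _)
  intro w' _
  dsimp only
  split_ifs with h
  · simp
  · exact abs_le.mp (hx w' h)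

theorem abs_log_sub_log_le {a b m : ℝ} (hm : 0 < m) (ha : m ≤ a) (hb : m ≤ b) :
    |Real.log a - Real.log b| ≤ |a - b| / m := by
  wlog hab : b ≤ a generalizing a b
  · rw [abs_sub_comm, abs_sub_comm a b]
    exact this hb ha (le_of_not_ge hab)
  have hb0 : 0 < b := hm.trans_le hb
  have ha0 : 0 < a := hm.trans_le ha
  rw [abs_of_nonneg (sub_nonneg.mpr (Real.log_le_log hb0 hab)), abs_of_nonneg (sub_nonneg.mpr hab),
    ← Real.log_div ha0.ne' hb0.ne']
  have := Real.log_le_sub_one_of_pos (div_pos ha0 hb0)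
  calc _ ≤ a / b - 1 := this
    _ = (a - b) / b := by field_simp
    _ ≤ _ := by gcongr

open scoped Classical in
variable {K} in
theorem abs_normAtPlace_sub_le (w : InfinitePlace K) (x y : mixedSpace K) :
    |normAtPlace w x - normAtPlace w y| ≤ ‖x - y‖ := by
  have h : ∀ x y : mixedSpace K, normAtPlace w x - normAtPlace w y ≤ ‖x - y‖ := by
    intro x y
    have h1 := normAtPlace_add_le w (x - y) y
    rw [sub_add_cancel] at h1
    have h2 : normAtPlace w (x - y) ≤ ‖x - y‖ := by
      rw [norm_eq_sup'_normAtPlace]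
      exact Finset.le_sup' (fun w ↦ normAtPlace w (x - y)) (Finset.mem_univ w)
    linarith
  rw [abs_le]
  refine ⟨?_, h x y⟩
  have := h y x
  rw [norm_sub_rev] at this
  linarith

open scoped Classical in
theorem exists_psi_lipschitz (R : ℝ) (hR : 0 ≤ R) : ∃ D : ℝ, 0 < D ∧ ∀ (z v : mixedSpace K) (σ : ℝ),
    (∀ w, 0 < normAtPlace w z) → (∀ w, w ≠ w₀ → |psi z w| ≤ 2) → σ ≤ psi z w₀ →
    ‖z - v‖ ≤ R → D * Real.exp (-σ) ≤ 1 →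
    (∀ w, 0 < normAtPlace w v) ∧ ∀ w, |psi v w - psi z w| < D * Real.exp (-σ) := by
  obtain ⟨c, hc, hlow⟩ := exists_lower_expMapBasis K
  set O : ℝ := ‖((completeBasis K).equivFunL : realSpace K →L[ℝ] realSpace K)‖ with hO
  have hO0 : 0 ≤ O := norm_nonneg _
  refine ⟨(O + 1) * (4 * (R + 1) / c), by positivity, fun z v σ hz hz2 hσ hzv hD => ?_⟩
  have hE : 0 < Real.exp (-σ) := Real.exp_pos _
  have hEE : Real.exp σ * Real.exp (-σ) = 1 := by rw [← Real.exp_add]; simp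
  set m : ℝ := c * Real.exp σ / 2 with hm
  have hm0 : 0 < m := by positivity
  have hminv : 1 / m = 2 / c * Real.exp (-σ) := by
    rw [hm, Real.exp_neg]; field_simp
  have hRm : R ≤ m := by
    have h1 : 4 * (R + 1) / c * Real.exp (-σ) ≤ 1 := by
      refine le_trans ?_ hD
      rw [mul_assoc]
      refine le_mul_of_one_le_left (by positivity) (by linarith)
    have h2 : 4 * (R + 1) / c * Real.exp (-σ) = 2 * (R + 1) * (1 / m) := by
      rw [hminv]; ring
    rw [h2, mul_one_div, div_le_one hm0] at h1
    linarith
  have hzl : ∀ w, 2 * m ≤ normAtPlace w z := by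
    intro w
    have h1 := hlow (psi z) hz2 w
    rw [expMapBasis_psi hz] at h1
    refine le_trans ?_ h1
    rw [hm]
    have := Real.exp_le_exp.mpr hσ
    nlinarith
  have hvl : ∀ w, m ≤ normAtPlace w v := by
    intro w
    have h1 := (abs_le.mp (abs_normAtPlace_sub_le w z v)).2
    have := hzl w
    linarith
  refine ⟨fun w => hm0.trans_le (hvl w), fun w => ?_⟩
  set d : realSpace K := (fun w => (mult w : ℝ) * Real.log (normAtPlace w v)) -
    (fun w => (mult w : ℝ) * Real.log (normAtPlace w z)) with hd
  have hdn : ‖d‖ ≤ 2 * (R / m) := by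
    rw [pi_norm_le_iff_of_nonneg (by positivity)]
    intro w
    rw [hd, Pi.sub_apply, ← mul_sub, norm_mul, Real.norm_eq_abs, Real.norm_eq_abs]
    have h1 := abs_log_sub_log_le hm0 (hvl w) (by linarith [hzl w] : m ≤ normAtPlace w z)
    have h2 : |normAtPlace w v - normAtPlace w z| ≤ R := by
      rw [abs_sub_comm]; exact (abs_normAtPlace_sub_le w z v).trans hzv
    have h3 : |((mult w : ℕ) : ℝ)| ≤ 2 := by
      rw [Nat.abs_cast]
      have : mult w ≤ 2 := by unfold InfinitePlace.mult; split_ifs <;> norm_num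
      exact_mod_cast this
    refine mul_le_mul h3 (h1.trans ?_) (abs_nonneg _) (by norm_num)
    gcongr
  have hpsi : psi v - psi z = ((completeBasis K).equivFunL : realSpace K →L[ℝ] realSpace K) d := by
    simp [psi, hd]
  calc |psi v w - psi z w| = ‖(psi v - psi z) w‖ := by simp [Real.norm_eq_abs]
    _ ≤ ‖psi v - psi z‖ := norm_le_pi_norm _ w
    _ ≤ O * ‖d‖ := by rw [hpsi]; exact ContinuousLinearMap.le_opNorm _ _
    _ ≤ O * (2 * (R / m)) := by gcongr
    _ = O * (4 * R / c) * Real.exp (-σ) := by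
        rw [div_eq_mul_one_div R m, hminv]; ring
    _ < _ := by
        apply mul_lt_mul_of_pos_right _ hE
        have : 0 < 4 * (R+1) / c := by positivity
        have h2 : 4 * R / c ≤ 4 * (R+1)/c := by gcongr; linarith
        nlinarith

end

end

section
open NumberField NumberField.InfinitePlace NumberField.mixedEmbedding
  NumberField.Units NumberField.Units.dirichletUnitTheorem NumberField.mixedEmbedding.fundamentalCone

section

open scoped nonZeroDivisors

theorem finite_ideals_le (s : ℝ) :
    Finite {I : (Ideal (𝓞 K))⁰ // (Ideal.absNorm (I : Ideal (𝓞 K)) : ℝ) ≤ s} := by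
  by_cases hs : 0 ≤ s
  · simp_rw [← Nat.le_floor_iff hs]
    exact Ideal.finite_setOfPred_absNorm_le₀ ⌊s⌋₊
  · have : IsEmpty {I : (Ideal (𝓞 K))⁰ // (Ideal.absNorm (I : Ideal (𝓞 K)) : ℝ) ≤ s} :=
      ⟨fun I => hs (le_trans (Nat.cast_nonneg _) I.2)⟩
    infer_instance

theorem exists_trivial_bound : ∃ C : ℝ, 0 ≤ C ∧ ∀ s : ℝ, 1 ≤ s →
    (Nat.card {I : (Ideal (𝓞 K))⁰ // (Ideal.absNorm (I : Ideal (𝓞 K)) : ℝ) ≤ s} : ℝ) ≤ C * s := by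
  have h := NumberField.Ideal.tendsto_norm_le_div_atTop₀ K
  set κ := (2 ^ nrRealPlaces K * (2 * Real.pi) ^ nrComplexPlaces K * regulator K * classNumber K : ℝ) /
            (torsionOrder K * Real.sqrt |discr K|)
  have h1 := h.eventually (eventually_le_nhds (lt_add_one κ))
  obtain ⟨s0, hs0⟩ := eventually_atTop.mp h1
  set s1 := max s0 1
  have hs1 : 1 ≤ s1 := le_max_right _ _
  have hb := hs0 s1 (le_max_left _ _)
  set g : ℝ → ℝ := fun s => (Nat.card {I : (Ideal (𝓞 K))⁰ // (Ideal.absNorm (I : Ideal (𝓞 K)) : ℝ) ≤ s} : ℝ) with hg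
  have hmono : ∀ s t, s ≤ t → g s ≤ g t := by
    intro s t hst
    have := finite_ideals_le K t
    exact Nat.cast_le.mpr (Nat.card_le_card_of_injective
      (fun I => (⟨I.1, I.2.trans hst⟩ : {I : (Ideal (𝓞 K))⁰ // (Ideal.absNorm (I : Ideal (𝓞 K)) : ℝ) ≤ t}))
      (fun a b hab => Subtype.ext (by simpa using hab)))
  have hg0 : ∀ s, 0 ≤ g s := fun s => Nat.cast_nonneg _
  refine ⟨|κ + 1| + g s1, by have := hg0 s1; positivity, fun s hs => ?_⟩
  change g s ≤ _
  rcases le_total s s1 with h2 | h2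
  · have := hmono s s1 h2
    have h3 := hg0 s1
    have := abs_nonneg (κ + 1)
    nlinarith
  · have h3 : g s / s ≤ κ + 1 := hs0 s ((le_max_left _ _).trans h2)
    rw [div_le_iff₀ (by linarith)] at h3
    have := le_abs_self (κ + 1)
    have := hg0 s1
    nlinarith

variable {K} in
theorem mem_cone_iff {z : mixedSpace K} : z ∈ fundamentalCone K ↔ (∀ w, 0 < normAtPlace w z) ∧
    ∀ w, w ≠ w₀ → 0 ≤ psi z w ∧ psi z w < 1 := by
  classical
  by_cases hz : ∀ w, 0 < normAtPlace w z
  · have hn : mixedEmbedding.norm z ≠ 0 := by rw [norm_eq_exp_psi hz]; positivity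
    rw [fundamentalCone, Set.mem_sdiff, Set.mem_preimage, ← logMap_normAtAllPlaces,
      ← expMapBasis_psi hz, logMap_expMapBasis]
    simp [hz, hn, Set.mem_Ico]
  · refine ⟨fun h => (hz fun w ↦ fundamentalCone.normAtPlace_pos_of_mem h w).elim, fun h => (hz h.1).elim⟩

theorem finite_idealSet (J : (Ideal (𝓞 K))⁰) (T : ℝ) :
    Finite {a : idealSet K J // mixedEmbedding.norm (a : mixedSpace K) ≤ T} := by
  classical
  by_cases hT : 0 ≤ T
  · simp_rw [← intNorm_idealSetEquiv_apply, ← Nat.le_floor_iff hT]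
    refine Set.Finite.preimage' (f := fun a : idealSet K J => intNorm (idealSetEquiv K J a).val)
      (Set.finite_Iic ⌊T⌋₊) fun n _ => ?_
    have h1 : Finite {I : (Ideal (𝓞 K))⁰ // (J : Ideal (𝓞 K)) ∣ I ∧ Submodule.IsPrincipal (I : Ideal (𝓞 K)) ∧
        Ideal.absNorm (I : Ideal (𝓞 K)) = n} := by
      have := finite_ideals_le K n
      refine Finite.of_injective (β := {I : (Ideal (𝓞 K))⁰ // (Ideal.absNorm (I : Ideal (𝓞 K)) : ℝ) ≤ n})
        (fun I => ⟨I.1, by rw [I.2.2.2]⟩) (fun a b hab => Subtype.ext (by simpa using hab))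
    have h2 := Finite.of_equiv _ (idealSetEquivNorm K J n).symm
    simp_rw [← intNorm_idealSetEquiv_apply, Nat.cast_inj] at h2
    exact h2
  · have : IsEmpty {a : idealSet K J // mixedEmbedding.norm (a : mixedSpace K) ≤ T} :=
      ⟨fun I => hT (le_trans (mixedEmbedding.norm_nonneg _) I.2)⟩
    infer_instance

theorem idealSet_trivial_bound (J : (Ideal (𝓞 K))⁰) : ∃ C : ℝ, 0 ≤ C ∧ ∀ T : ℝ, 1 ≤ T →
    (Nat.card {a : idealSet K J // mixedEmbedding.norm (a : mixedSpace K) ≤ T} : ℝ) ≤ C * T := by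
  obtain ⟨C, hC, h⟩ := exists_trivial_bound K
  refine ⟨C * torsionOrder K, by positivity, fun T hT => ?_⟩
  rw [← card_isPrincipal_dvd_norm_le, Nat.cast_mul]
  have h1 := h T hT
  have := finite_ideals_le K T
  have h2 := Nat.card_le_card_of_injective
      (fun I : {I : (Ideal (𝓞 K))⁰ // (J : Ideal (𝓞 K)) ∣ I ∧ Submodule.IsPrincipal (I : Ideal (𝓞 K)) ∧
      Ideal.absNorm (I : Ideal (𝓞 K)) ≤ T} => (⟨I.1, I.2.2.2⟩ : {I : (Ideal (𝓞 K))⁰ // (Ideal.absNorm (I : Ideal (𝓞 K)) : ℝ) ≤ T}))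
      (fun a b hab => Subtype.ext (by simpa using hab))
  have h3 : (Nat.card {I : (Ideal (𝓞 K))⁰ // (J : Ideal (𝓞 K)) ∣ I ∧ Submodule.IsPrincipal (I : Ideal (𝓞 K)) ∧
      Ideal.absNorm (I : Ideal (𝓞 K)) ≤ T} : ℝ) ≤ C * T := le_trans (Nat.cast_le.mpr h2) h1
  have : (0:ℝ) ≤ torsionOrder K := Nat.cast_nonneg _
  nlinarith

theorem upper_calc (n r : ℕ) (ε : ℝ) (h0 : 0 ≤ ε) (h1 : ε ≤ 1) :
    Real.exp (n * ε) * (1 + 2 * ε) ^ r ≤ 1 + ((n + 2 * r) * Real.exp (n + 2 * r)) * ε := by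
  have h2 : (1 + 2 * ε) ^ r ≤ Real.exp (2 * ε) ^ r := by
    gcongr
    linarith [Real.add_one_le_exp (2 * ε)]
  rw [← Real.exp_nat_mul] at h2
  set y : ℝ := (n + 2 * r) * ε with hy
  have hy0 : 0 ≤ y := by positivity
  have h3 : Real.exp (n * ε) * (1 + 2 * ε) ^ r ≤ Real.exp y := by
    calc _ ≤ Real.exp (n * ε) * Real.exp (r * (2 * ε)) := by gcongr
      _ = _ := by rw [← Real.exp_add]; congr 1; rw [hy]; ring
  have h4 : Real.exp y ≤ 1 + y * Real.exp y := by
    have := Real.add_one_le_exp (-y)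
    have h5 : Real.exp (-y) * Real.exp y = 1 := by rw [← Real.exp_add]; simp
    nlinarith [Real.exp_pos y]
  have h6 : Real.exp y ≤ Real.exp (n + 2 * r) := by
    apply Real.exp_le_exp.mpr
    rw [hy]
    exact mul_le_of_le_one_right (by positivity) h1
  calc _ ≤ 1 + y * Real.exp y := h3.trans h4
    _ ≤ 1 + y * Real.exp (n + 2 * r) := by gcongr
    _ = _ := by rw [hy]; ring

theorem lower_calc (n r : ℕ) (ε : ℝ) (h0 : 0 ≤ ε) (h1 : ε ≤ 1 / 2) :
    1 - (n + 2 * r) * ε ≤ Real.exp (-(n * ε)) * (1 - 2 * ε) ^ r := by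
  have h2 : 1 - n * ε ≤ Real.exp (-(n * ε)) := by linarith [Real.add_one_le_exp (-(n * ε))]
  have h3 : 1 + r * (-(2 * ε)) ≤ (1 - 2 * ε) ^ r := by
    have := one_add_mul_le_pow (a := -(2 * ε)) (by linarith) r
    rwa [← sub_eq_add_neg 1 (2 * ε)] at this
  have h4 : (1 - 2 * ε) ^ r ≤ 1 := pow_le_one₀ (by linarith) (by linarith)
  have h5 : 0 ≤ (1 - 2 * ε) ^ r := pow_nonneg (by linarith) _
  have h6 : (0:ℝ) ≤ n * ε := by positivity
  nlinarith

end

end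

section
open NumberField NumberField.InfinitePlace NumberField.mixedEmbedding
  NumberField.Units NumberField.Units.dirichletUnitTheorem NumberField.mixedEmbedding.fundamentalCone

section

open scoped nonZeroDivisors

/-- Number of points of norm at most `T` in the ideal set of `J`. -/
def cntJ (J : (Ideal (𝓞 K))⁰) (T : ℝ) : ℕ :=
  Nat.card {a : idealSet K J // mixedEmbedding.norm (a : mixedSpace K) ≤ T}

theorem exists_finset_idealSet (J : (Ideal (𝓞 K))⁰) (T : ℝ) : ∃ A : Finset (mixedSpace K),
    (∀ v, v ∈ A ↔ v ∈ idealSet K J ∧ mixedEmbedding.norm v ≤ T) ∧ A.card = cntJ K J T := by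
  classical
  have := finite_idealSet K J T
  have hf : {v : mixedSpace K | v ∈ idealSet K J ∧ mixedEmbedding.norm v ≤ T}.Finite := by
    refine (Set.finite_range (fun a : {a : idealSet K J // mixedEmbedding.norm (a : mixedSpace K) ≤ T}
      => (a.1 : mixedSpace K))).subset ?_
    rintro v ⟨hv, hv2⟩
    exact ⟨⟨⟨v, hv⟩, hv2⟩, rfl⟩
  refine ⟨hf.toFinset, fun v => by simp, ?_⟩
  rw [← Set.ncard_eq_toFinset_card _ hf, cntJ]
  exact Nat.card_congr (Equiv.subtypeSubtypeEquivSubtypeInter (· ∈ idealSet K J) (fun v => mixedEmbedding.norm v ≤ T)).symm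

open scoped Classical in
open MeasureTheory in
theorem geom_bounds (J : (Ideal (𝓞 K))⁰) : ∃ V c D : ℝ, 0 ≤ V ∧ 0 < c ∧ 0 < D ∧
    ∀ s σ ε : ℝ, ε = D * Real.exp (-σ) → ε ≤ 1 / 2 →
    (cntJ K J (Real.exp (Module.finrank ℚ K * s)) * c ≤
      cntJ K J (Real.exp (Module.finrank ℚ K * σ)) * c +
      V * Real.exp (Module.finrank ℚ K * (s + ε)) * (1 + 2 * ε) ^ (Fintype.card (InfinitePlace K) - 1)) ∧
    (V * Real.exp (Module.finrank ℚ K * (s - ε)) * (1 - 2 * ε) ^ (Fintype.card (InfinitePlace K) - 1) ≤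
      cntJ K J (Real.exp (Module.finrank ℚ K * s)) * c +
      V * Real.exp (Module.finrank ℚ K * σ) * (1 - 2 * ε) ^ (Fintype.card (InfinitePlace K) - 1)) := by
  have hn : (0 : ℝ) < Module.finrank ℚ K := Nat.cast_pos.mpr Module.finrank_pos
  obtain ⟨V, hV, hvol⟩ := exists_volume_pReg K
  set b := fractionalIdealLatticeBasis K (FractionalIdeal.mk0 K J) with hb
  have hspan : ∀ v, v ∈ Submodule.span ℤ (Set.range b) ↔
      v ∈ (mixedEmbedding.idealLattice K (FractionalIdeal.mk0 K J)) := by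
    intro v
    rw [mem_span_fractionalIdealLatticeBasis, mem_idealLattice]
    rfl
  have hFb := ZSpan.fundamentalDomain_isBounded b
  obtain ⟨R, hR0, hR⟩ := hFb.exists_pos_norm_le
  obtain ⟨D, hD, hlip⟩ := exists_psi_lipschitz K R hR0.le
  set F := ZSpan.fundamentalDomain b with hF
  have hF0 : volume F ≠ 0 := ZSpan.measure_fundamentalDomain_ne_zero b
  have hFt : volume F ≠ ⊤ := hFb.measure_lt_top.ne
  have hc : 0 < (volume F).toReal := ENNReal.toReal_pos hF0 hFt
  have hFc : volume F = ENNReal.ofReal (volume F).toReal := (ENNReal.ofReal_toReal hFt).symm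
  refine ⟨V, (volume F).toReal, D, hV, hc, hD, fun s σ ε hε hε2 => ?_⟩
  have hε0 : 0 < ε := by rw [hε]; positivity
  have hlip2 := fun z v h1 h2 h3 h4 => hlip z v σ h1 h2 h3 h4 (by rw [← hε]; linarith)
  rw [← hε] at hlip2
  obtain ⟨A1, hA1, hA1c⟩ := exists_finset_idealSet K J (Real.exp (Module.finrank ℚ K * s))
  obtain ⟨A2, hA2, hA2c⟩ := exists_finset_idealSet K J (Real.exp (Module.finrank ℚ K * σ))
  rw [← hA1c, ← hA2c]
  constructor
  · have key := lattice_upper b volume (A1 \ A2) (fun v hv => by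
        rw [Finset.mem_sdiff, hA1] at hv
        exact (hspan v).mpr hv.1.1.2) (pReg K (s + ε) (-ε) (1 + ε)) (by
        intro v hv f hf
        rw [Finset.mem_sdiff, hA1, hA2] at hv
        obtain ⟨⟨hv1, hv2⟩, hv3⟩ := hv
        have hv4 : ¬ mixedEmbedding.norm v ≤ Real.exp (Module.finrank ℚ K * σ) := fun h => hv3 ⟨hv1, h⟩
        obtain ⟨hp, hpsi⟩ := mem_cone_iff.mp hv1.1
        rw [norm_eq_exp_psi hp, Real.exp_le_exp, mul_le_mul_iff_right₀ hn] at hv2 hv4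
        obtain ⟨h1, h2⟩ := hlip2 v (v + f) hp (fun w hw => by
          rw [abs_le]; have := hpsi w hw; constructor <;> linarith) (le_of_not_ge hv4) (by
          simpa using hR f hf)
        rw [mem_pReg]
        refine ⟨h1, ?_, fun w hw => ?_⟩
        · have := abs_lt.mp (h2 w₀); linarith
        · have := abs_lt.mp (h2 w); have := hpsi w hw; constructor <;> linarith)
    rw [hvol _ _ _ (by linarith), hFc, ← ENNReal.ofReal_natCast, ← ENNReal.ofReal_mul (Nat.cast_nonneg _),
      ENNReal.ofReal_le_ofReal_iff (mul_nonneg (mul_nonneg hV (Real.exp_nonneg _)) (pow_nonneg (by linarith) _))] at key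
    have h3 : (A1.card : ℝ) ≤ (A1 \ A2).card + A2.card := by
      exact_mod_cast Finset.card_le_card_sdiff_add_card
    rw [show 1 + ε - -ε = 1 + 2 * ε by ring] at key
    nlinarith
  · have key := lattice_lower b volume A1 (pReg K (s - ε) ε (1 - ε) \ pReg K σ ε (1 - ε)) (by
        intro z hz v hv hzv
        rw [Set.mem_sdiff, mem_pReg, mem_pReg] at hz
        obtain ⟨⟨hp, hz1, hz2⟩, hz3⟩ := hz
        have hz4 : σ ≤ psi z w₀ := by
          by_contra h
          exact hz3 ⟨hp, le_of_not_ge h, hz2⟩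
        obtain ⟨h1, h2⟩ := hlip2 z v hp (fun w hw => by
          rw [abs_le]; have := hz2 w hw; constructor <;> linarith) hz4 (hR _ hzv)
        rw [hA1]
        refine ⟨⟨mem_cone_iff.mpr ⟨h1, fun w hw => ?_⟩, (hspan v).mp hv⟩, ?_⟩
        · have := abs_lt.mp (h2 w); have := hz2 w hw; constructor <;> linarith
        · rw [norm_eq_exp_psi h1, Real.exp_le_exp, mul_le_mul_iff_right₀ hn]
          have := abs_lt.mp (h2 w₀); linarith)
    have h4 : volume (pReg K (s - ε) ε (1 - ε)) ≤
        volume (pReg K (s - ε) ε (1 - ε) \ pReg K σ ε (1 - ε)) + volume (pReg K σ ε (1 - ε)) := by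
      refine (measure_mono ?_).trans (measure_union_le _ _)
      intro z hz
      by_cases h : z ∈ pReg K σ ε (1 - ε)
      · exact Or.inr h
      · exact Or.inl ⟨hz, h⟩
    have h5 := h4.trans (add_le_add_left key _)
    have h0 : 0 ≤ 1 - 2 * ε := by linarith
    have hcA : 0 ≤ (A1.card : ℝ) * (volume F).toReal := mul_nonneg (Nat.cast_nonneg _) hc.le
    have hx0 : 0 ≤ V * Real.exp (Module.finrank ℚ K * σ) * (1 - 2 * ε) ^ (Fintype.card (InfinitePlace K) - 1) :=
      mul_nonneg (mul_nonneg hV (Real.exp_nonneg _)) (pow_nonneg h0 _)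
    rw [hvol _ _ _ (by linarith), hvol _ _ _ (by linarith), hFc, ← ENNReal.ofReal_natCast,
      ← ENNReal.ofReal_mul (Nat.cast_nonneg _), show 1 - ε - ε = 1 - 2 * ε by ring,
      ← ENNReal.ofReal_add hcA hx0, ENNReal.ofReal_le_ofReal_iff (add_nonneg hcA hx0)] at h5
    exact h5

end

end

section
open NumberField NumberField.InfinitePlace NumberField.mixedEmbedding
  NumberField.Units NumberField.Units.dirichletUnitTheorem NumberField.mixedEmbedding.fundamentalCone

section

open scoped nonZeroDivisors

theorem cntJ_asymp (J : (Ideal (𝓞 K))⁰) : ∃ A M : ℝ, 0 ≤ M ∧ ∀ T : ℝ, 1 ≤ T →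
    |(cntJ K J T : ℝ) - A * T| ≤ M * T ^ ((Module.finrank ℚ K : ℝ) / (Module.finrank ℚ K + 1)) := by
  obtain ⟨V, c, D, hV, hc, hD, H⟩ := geom_bounds K J
  obtain ⟨C, hC, htriv⟩ := idealSet_trivial_bound K J
  have htriv : ∀ T : ℝ, 1 ≤ T → (cntJ K J T : ℝ) ≤ C * T := htriv
  have hn : (0 : ℝ) < Module.finrank ℚ K := Nat.cast_pos.mpr Module.finrank_pos
  generalize Module.finrank ℚ K = n at *
  generalize Fintype.card (InfinitePlace K) - 1 = r at *
  set Q : ℝ := (n + 2 * r) * Real.exp (n + 2 * r) with hQ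
  have hQ0 : 0 ≤ Q := by positivity
  refine ⟨V / c, (C + V / c) * (2 * D) + (C + V / c * Q * D + V / c * (n + 2 * r) * D + V / c),
    by positivity, fun T hT => ?_⟩
  set W := V / c with hW
  have hW0 : 0 ≤ W := by positivity
  have hVc : V = W * c := by rw [hW]; field_simp
  have hT0 : 0 < T := by linarith
  set s := Real.log T / n with hs
  set σ := Real.log T / (n + 1) with hσ
  set ε := D * Real.exp (-σ) with hε
  have hε0 : 0 < ε := by positivity
  set P := T ^ ((n : ℝ) / (n + 1)) with hP
  have hT1 : Real.exp (n * s) = T := by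
    rw [hs, mul_div_cancel₀ _ hn.ne', Real.exp_log hT0]
  have hP1 : Real.exp (n * σ) = P := by
    rw [hP, Real.rpow_def_of_pos hT0, hσ]; congr 1; field_simp
  have hPT : P = T * Real.exp (-σ) := by
    rw [← hP1, ← hT1, ← Real.exp_add]; congr 1
    rw [hs, hσ]; field_simp; ring
  have hTε : T * ε = D * P := by rw [hPT, hε]; ring
  have hP0 : 1 ≤ P := Real.one_le_rpow hT (by positivity)
  have hcnt : (cntJ K J T : ℝ) ≤ C * T := htriv T hT
  have hcnt0 : (0 : ℝ) ≤ cntJ K J T := Nat.cast_nonneg _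
  rcases le_or_gt ε (1 / 2) with h | h
  · obtain ⟨h1, h2⟩ := H s σ ε rfl h
    rw [hT1, hP1] at h1
    rw [hT1, hP1] at h2
    have hu := upper_calc n r ε hε0.le (by linarith)
    have hl := lower_calc n r ε hε0.le h
    have e1 : Real.exp (n * (s + ε)) = T * Real.exp (n * ε) := by
      rw [mul_add, Real.exp_add, hT1]
    have e2 : Real.exp (n * (s - ε)) = T * Real.exp (-(n * ε)) := by
      rw [mul_sub, sub_eq_add_neg, Real.exp_add, hT1]
    rw [e1] at h1
    rw [e2] at h2
    have hcP := htriv P hP0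
    have hpow : (1 - 2 * ε) ^ r ≤ 1 := pow_le_one₀ (by linarith) (by linarith)
    have k1 : (cntJ K J T : ℝ) * c ≤ C * P * c + (W * T + W * Q * D * P) * c := by
      calc (cntJ K J T : ℝ) * c ≤ _ := h1
        _ = cntJ K J P * c + V * T * (Real.exp (n * ε) * (1 + 2 * ε) ^ r) := by ring
        _ ≤ C * P * c + V * T * (1 + Q * ε) := by gcongr
        _ = C * P * c + (V * T + V * Q * (T * ε)) := by ring
        _ = _ := by rw [hTε, hVc]; ring
    have k2 : (W * T - W * (n + 2 * r) * D * P) * c ≤ (cntJ K J T + W * P) * c := by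
      calc (W * T - W * (n + 2 * r) * D * P) * c = V * T - V * (n + 2 * r) * (T * ε) := by
            rw [hTε, hVc]; ring
        _ = V * T * (1 - (n + 2 * r) * ε) := by ring
        _ ≤ V * T * (Real.exp (-(n * ε)) * (1 - 2 * ε) ^ r) := by gcongr
        _ = V * (T * Real.exp (-(n * ε))) * (1 - 2 * ε) ^ r := by ring
        _ ≤ _ := h2
        _ ≤ cntJ K J T * c + V * P * 1 := by gcongr
        _ = _ := by rw [hVc]; ring
    have k1' := le_of_mul_le_mul_right (k1.trans_eq (by ring : _ = (C * P + W * T + W * Q * D * P) * c)) hc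
    have k2' := le_of_mul_le_mul_right k2 hc
    have z1 : 0 ≤ (C + W) * (2 * D) * P := by positivity
    have z2 : 0 ≤ C * P := by positivity
    have z3 : 0 ≤ W * Q * D * P := by positivity
    have z4 : 0 ≤ W * (n + 2 * r) * D * P := by positivity
    have z5 : 0 ≤ W * P := by positivity
    have z6 : ((C + W) * (2 * D) + (C + W * Q * D + W * (n + 2 * r) * D + W)) * P =
        (C + W) * (2 * D) * P + C * P + W * Q * D * P + W * (n + 2 * r) * D * P + W * P := by ring
    rw [z6]
    clear_value Q W P σ s ε
    rw [abs_le]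
    constructor
    · linarith
    · linarith
  · have h3 : T ≤ 2 * D * P := by nlinarith
    have z : 0 ≤ (C + W * Q * D + W * (n + 2 * r) * D + W) * P := by positivity
    have h4 : |(cntJ K J T : ℝ) - W * T| ≤ (C + W) * T := by
      have : 0 ≤ W * T := by positivity
      have : 0 ≤ C * T := by positivity
      rw [add_mul, abs_le]
      constructor <;> linarith
    have h5 : (C + W) * T ≤ (C + W) * (2 * D * P) := by gcongr
    linarith


theorem card_class_eq {C : ClassGroup (𝓞 K)} {J : (Ideal (𝓞 K))⁰} {s : ℝ} (hJ : ClassGroup.mk0 J = C⁻¹) :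
    Nat.card {I : (Ideal (𝓞 K))⁰ // Ideal.absNorm (I : Ideal (𝓞 K)) ≤ s ∧ ClassGroup.mk0 I = C}
      = Nat.card {I : (Ideal (𝓞 K))⁰ // (J : Ideal (𝓞 K)) ∣ I ∧ Submodule.IsPrincipal (I : Ideal (𝓞 K)) ∧
        Ideal.absNorm (I : Ideal (𝓞 K)) ≤ s * Ideal.absNorm (J : Ideal (𝓞 K))} := by
  simp_rw [← nonZeroDivisors_dvd_iff_dvd_coe]
  refine Nat.card_congr ?_
  refine ((Equiv.dvd J).subtypeEquiv fun I ↦ ?_).trans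
    (Equiv.subtypeSubtypeEquivSubtypeInter (fun I : (Ideal (𝓞 K))⁰ ↦ J ∣ I) _)
  rw [← ClassGroup.mk0_eq_one_iff (SetLike.coe_mem _)]
  simp_rw [Equiv.dvd_apply, Submonoid.coe_mul, ← Submonoid.mul_def, _root_.map_mul, hJ,
    inv_mul_eq_one, Nat.cast_mul, mul_comm s, eq_comm, and_comm, and_congr_left_iff]
  exact fun _ ↦
    (mul_le_mul_iff_of_pos_left (Nat.cast_pos.mpr (Ideal.absNorm_pos_of_nonZeroDivisors J))).symm

theorem class_asymp (C : ClassGroup (𝓞 K)) : ∃ A M : ℝ, 0 ≤ M ∧ ∀ s : ℝ, 1 ≤ s →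
    |(Nat.card {I : (Ideal (𝓞 K))⁰ // Ideal.absNorm (I : Ideal (𝓞 K)) ≤ s ∧ ClassGroup.mk0 I = C} : ℝ)
      - A * s| ≤ M * s ^ ((Module.finrank ℚ K : ℝ) / (Module.finrank ℚ K + 1)) := by
  obtain ⟨J, hJ⟩ := ClassGroup.mk0_surjective C⁻¹
  obtain ⟨A, M, hM, h⟩ := cntJ_asymp K J
  set θ : ℝ := (Module.finrank ℚ K : ℝ) / (Module.finrank ℚ K + 1) with hθ
  set N : ℝ := ((Ideal.absNorm (J : Ideal (𝓞 K)) : ℕ) : ℝ) with hN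
  set t : ℝ := ((torsionOrder K : ℕ) : ℝ) with ht
  have ht0 : 0 < t := Nat.cast_pos.mpr (Nat.pos_of_ne_zero (torsionOrder_ne_zero K))
  have hN1 : 1 ≤ N := by
    have h1 : 1 ≤ Ideal.absNorm (J : Ideal (𝓞 K)) := Ideal.absNorm_pos_of_nonZeroDivisors J
    rw [hN]
    exact_mod_cast h1
  refine ⟨A * N / t, M * N ^ θ / t, by positivity, fun s hs => ?_⟩
  have h1 := h (s * N) (by nlinarith)
  rw [cntJ, ← card_isPrincipal_dvd_norm_le, Nat.cast_mul, ← card_class_eq K hJ,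
    Real.mul_rpow (by linarith) (by linarith)] at h1
  set X : ℝ := (Nat.card {I : (Ideal (𝓞 K))⁰ // Ideal.absNorm (I : Ideal (𝓞 K)) ≤ s ∧ ClassGroup.mk0 I = C} : ℝ)
  have e1 : X - A * N / t * s = (X * t - A * (s * N)) / t := by field_simp
  have e2 : M * N ^ θ / t * s ^ θ = (M * (s ^ θ * N ^ θ)) / t := by ring
  rw [e1, e2, abs_div, abs_of_pos ht0]
  gcongr

/-- Number of nonzero ideals of norm at most `x`. -/
def cntI (x : ℝ) : ℕ := Nat.card {I : (Ideal (𝓞 K))⁰ // (Ideal.absNorm (I : Ideal (𝓞 K)) : ℝ) ≤ x}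

theorem cntI_asymp' : ∃ A M : ℝ, 0 ≤ M ∧ ∀ s : ℝ, 1 ≤ s →
    |(cntI K s : ℝ) - A * s| ≤ M * s ^ ((Module.finrank ℚ K : ℝ) / (Module.finrank ℚ K + 1)) := by
  classical
  choose A M hM h using class_asymp K
  refine ⟨∑ C, A C, ∑ C, M C, Finset.sum_nonneg fun C _ => hM C, fun s hs => ?_⟩
  have e : (cntI K s : ℝ) = ∑ C : ClassGroup (𝓞 K), (Nat.card {I : (Ideal (𝓞 K))⁰ //
      Ideal.absNorm (I : Ideal (𝓞 K)) ≤ s ∧ ClassGroup.mk0 I = C} : ℝ) := by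
    have := finite_ideals_le K s
    have : Fintype {I : (Ideal (𝓞 K))⁰ // Ideal.absNorm (I : Ideal (𝓞 K)) ≤ s} := Fintype.ofFinite _
    let e := fun C : ClassGroup (𝓞 K) ↦ Equiv.subtypeSubtypeEquivSubtypeInter
      (fun I : (Ideal (𝓞 K))⁰ ↦ Ideal.absNorm I.1 ≤ s) (fun I ↦ ClassGroup.mk0 I = C)
    simp_rw [cntI, ← Nat.card_congr (e _), Nat.card_eq_fintype_card, Fintype.subtype_card]
    rw [Fintype.card, Finset.card_eq_sum_card_fiberwise (f := fun I ↦ ClassGroup.mk0 I.1)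
      (t := Finset.univ) (fun _ _ ↦ Finset.mem_univ _), Nat.cast_sum]
  rw [e, Finset.sum_mul, Finset.sum_mul, ← Finset.sum_sub_distrib]
  exact (Finset.abs_sum_le_sum_abs _ _).trans (Finset.sum_le_sum fun C _ => h C s hs)

/-- The residue of the zeta function. -/
def kap : ℝ :=
  (2 ^ NumberField.InfinitePlace.nrRealPlaces K *
      (2 * Real.pi) ^ NumberField.InfinitePlace.nrComplexPlaces K *
      (NumberField.classNumber K) * NumberField.Units.regulator K) /
    ((NumberField.Units.torsionOrder K) * Real.sqrt |(NumberField.discr K : ℝ)|)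

theorem kap_nonneg : 0 ≤ kap K := by
  have := (regulator_pos K).le
  unfold kap
  positivity

theorem cntI_of_lt_one {x : ℝ} (hx : x < 1) : cntI K x = 0 := by
  have : IsEmpty {I : (Ideal (𝓞 K))⁰ // (Ideal.absNorm (I : Ideal (𝓞 K)) : ℝ) ≤ x} := by
    refine ⟨fun I => ?_⟩
    have h1 := Ideal.absNorm_pos_of_nonZeroDivisors I.1
    have h2 : (1 : ℝ) ≤ Ideal.absNorm (I.1 : Ideal (𝓞 K)) := by exact_mod_cast h1
    linarith [I.2]
  rw [cntI, Nat.card_of_isEmpty]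

theorem cntI_asymp : ∃ θ : ℝ, 1 / 2 < θ ∧ θ < 1 ∧ ∃ M : ℝ, 0 ≤ M ∧ ∀ s : ℝ, 0 < s →
    |(cntI K s : ℝ) - kap K * s| ≤ M * s ^ θ := by
  obtain ⟨A, M, hM, h⟩ := cntI_asymp' K
  have hn : (1 : ℝ) ≤ Module.finrank ℚ K := by
    exact_mod_cast (Module.finrank_pos : 0 < Module.finrank ℚ K)
  set n : ℝ := ((Module.finrank ℚ K : ℕ) : ℝ)
  set θ0 : ℝ := n / (n + 1) with hθ0
  have h1 : θ0 < 1 := by rw [hθ0, div_lt_one (by linarith)]; linarith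
  have h2 : 1 / 2 ≤ θ0 := by rw [hθ0, div_le_div_iff₀ (by norm_num) (by linarith)]; linarith
  have hA : A = kap K := by
    have t1 := NumberField.Ideal.tendsto_norm_le_div_atTop₀ K
    have t2 : Tendsto (fun s : ℝ => (cntI K s : ℝ) / s) atTop (𝓝 A) := by
      rw [tendsto_iff_norm_sub_tendsto_zero]
      have t3 : Tendsto (fun s : ℝ => M * s ^ (-(1 - θ0))) atTop (𝓝 (M * 0)) :=
        (tendsto_rpow_neg_atTop (by linarith)).const_mul M
      rw [mul_zero] at t3
      refine squeeze_zero' (Eventually.of_forall fun _ => norm_nonneg _) ?_ t3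
      filter_upwards [eventually_ge_atTop 1] with s hs
      have hs0 : 0 < s := by linarith
      have e1 : (cntI K s : ℝ) / s - A = ((cntI K s : ℝ) - A * s) / s := by field_simp
      rw [e1, norm_div, Real.norm_eq_abs, Real.norm_of_nonneg hs0.le, div_le_iff₀ hs0, mul_assoc,
        show s ^ (-(1 - θ0)) * s = s ^ θ0 by
          nth_rw 2 [← Real.rpow_one s]
          rw [← Real.rpow_add hs0]; congr 1; ring]
      exact h s hs
    rw [tendsto_nhds_unique t2 t1, kap]
    congr 1
    ring
  refine ⟨(θ0 + 1) / 2, by linarith, by linarith, M + kap K, add_nonneg hM (kap_nonneg K), fun s hs => ?_⟩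
  rcases lt_or_ge s 1 with h3 | h3
  · rw [cntI_of_lt_one K h3, Nat.cast_zero, zero_sub, abs_neg,
      abs_of_nonneg (mul_nonneg (kap_nonneg K) hs.le)]
    have h4 : s ≤ s ^ ((θ0 + 1) / 2) := by
      nth_rw 1 [← Real.rpow_one s]
      exact Real.rpow_le_rpow_of_exponent_ge hs h3.le (by linarith)
    have := kap_nonneg K
    gcongr
    linarith
  · have h5 := h s h3
    rw [hA] at h5
    have h4 : s ^ θ0 ≤ s ^ ((θ0 + 1) / 2) := Real.rpow_le_rpow_of_exponent_le h3 (by linarith)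
    have := kap_nonneg K
    calc _ ≤ _ := h5
      _ ≤ _ := by gcongr; linarith

end

end

section
open NumberField 

section

open scoped nonZeroDivisors

/-- Nonzero ideals. -/
abbrev NI : Type := {m : Ideal (𝓞 K) // m ≠ 0}

variable {K} in
/-- Norm of a nonzero ideal, as a real number. -/
def nrm (m : NI K) : ℝ := (Ideal.absNorm m.1 : ℝ)

variable {K} in
theorem nrm_ge_one (m : NI K) : 1 ≤ nrm m := by
  have : Ideal.absNorm m.1 ≠ 0 := by
    rw [Ne, Ideal.absNorm_eq_zero_iff]; exact m.2
  rw [nrm]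
  exact_mod_cast Nat.one_le_iff_ne_zero.mpr this

variable {K} in
theorem nrm_pos (m : NI K) : 0 < nrm m := lt_of_lt_of_le one_pos (nrm_ge_one m)

/-- Equivalence of the two types of nonzero ideals. -/
def niEquiv : (Ideal (𝓞 K))⁰ ≃ NI K :=
  Equiv.subtypeEquivRight fun _ => mem_nonZeroDivisors_iff_ne_zero

theorem cntI_eq (x : ℝ) : cntI K x = Nat.card {m : NI K // nrm m ≤ x} :=
  Nat.card_congr ((niEquiv K).subtypeEquiv fun _ => Iff.rfl)

theorem finite_NI (x : ℝ) : Finite {m : NI K // nrm m ≤ x} := by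
  have := finite_ideals_le K x
  exact Finite.of_equiv _ ((niEquiv K).subtypeEquiv fun _ => Iff.rfl :
    {I : (Ideal (𝓞 K))⁰ // (Ideal.absNorm (I : Ideal (𝓞 K)) : ℝ) ≤ x} ≃ {m : NI K // nrm m ≤ x})

theorem summable_nrm {s : ℝ} (hs : 1 < s) : Summable fun m : NI K => nrm m ^ (-s) := by
  classical
  obtain ⟨C, hC, hb⟩ := exists_trivial_bound K
  have hb : ∀ x : ℝ, 1 ≤ x → (Nat.card {m : NI K // nrm m ≤ x} : ℝ) ≤ C * x := by
    intro x hx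
    rw [← cntI_eq]
    exact hb x hx
  let f : NI K → ℕ := fun m => Nat.log 2 (Ideal.absNorm m.1)
  have hf1 : ∀ m, (2 : ℝ) ^ f m ≤ nrm m := by
    intro m
    have h1 : Ideal.absNorm m.1 ≠ 0 := by
      rw [Ne, Ideal.absNorm_eq_zero_iff]; exact m.2
    have := Nat.pow_log_le_self 2 h1
    rw [nrm]
    exact_mod_cast this
  have hf2 : ∀ m, nrm m ≤ (2 : ℝ) ^ (f m + 1) := by
    intro m
    have := (Nat.lt_pow_succ_log_self (b := 2) (by norm_num) (Ideal.absNorm m.1)).le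
    rw [nrm]
    exact_mod_cast this
  rw [← (Equiv.sigmaFiberEquiv f).summable_iff, summable_sigma_of_nonneg (f := (fun m : NI K => nrm m ^ (-s)) ∘ (Equiv.sigmaFiberEquiv f)) (fun x =>
    Real.rpow_nonneg (nrm_pos _).le _)]
  have hinj : ∀ k, Function.Injective (fun m : {m // f m = k} =>
      (⟨m.1, by have := hf2 m.1; rwa [m.2] at this⟩ : {m : NI K // nrm m ≤ (2 : ℝ) ^ (k + 1)})) :=
    fun k a b hab => Subtype.ext (by simpa using hab)
  have hfin : ∀ k, Finite {m // f m = k} := by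
    intro k
    have := finite_NI K (2 ^ (k + 1))
    exact Finite.of_injective _ (hinj k)
  refine ⟨fun k => ?_, ?_⟩
  · have := hfin k
    exact Summable.of_finite
  · have hg : Summable fun k : ℕ => (2 * C) * ((2 : ℝ) ^ (1 - s)) ^ k := by
      refine (summable_geometric_of_lt_one (by positivity) ?_).mul_left _
      exact Real.rpow_lt_one_of_one_lt_of_neg (by norm_num) (by linarith)
    refine Summable.of_nonneg_of_le (fun k => tsum_nonneg fun m => Real.rpow_nonneg (nrm_pos _).le _)
      (fun k => ?_) hg
    have := hfin k
    have := Fintype.ofFinite {m // f m = k}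
    rw [tsum_fintype]
    have h1 : ∀ m ∈ (Finset.univ : Finset {m // f m = k}),
        ((fun m => nrm m ^ (-s)) ∘ ⇑(Equiv.sigmaFiberEquiv f)) ⟨k, m⟩ ≤ ((2 : ℝ) ^ k) ^ (-s) := by
      intro m _
      have h2 := hf1 m.1
      rw [m.2] at h2
      exact Real.rpow_le_rpow_of_nonpos (by positivity) h2 (by linarith)
    refine (Finset.sum_le_card_nsmul _ _ _ h1).trans ?_
    rw [nsmul_eq_mul, Finset.card_univ, ← Nat.card_eq_fintype_card]
    have h3 : (Nat.card {m // f m = k} : ℝ) ≤ C * 2 ^ (k + 1) := by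
      refine le_trans ?_ (hb (2 ^ (k + 1)) (one_le_pow₀ (by norm_num)))
      have := finite_NI K (2 ^ (k + 1))
      exact Nat.cast_le.mpr (Nat.card_le_card_of_injective _ (hinj k))
    calc (Nat.card {m // f m = k} : ℝ) * ((2 : ℝ) ^ k) ^ (-s) ≤ C * 2 ^ (k + 1) * ((2 : ℝ) ^ k) ^ (-s) := by
          gcongr
      _ = (2 * C) * ((2 : ℝ) ^ k * ((2 : ℝ) ^ k) ^ (-s)) := by ring
      _ = _ := by
        congr 1
        rw [← Real.rpow_natCast, ← Real.rpow_natCast, ← Real.rpow_mul (by norm_num),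
          ← Real.rpow_mul (by norm_num), ← Real.rpow_add (by norm_num)]
        congr 1; ring

open IsDedekindDomain

variable {K} in
/-- Product of a finite set of primes. -/
def aS (S : Finset (HeightOneSpectrum (𝓞 K))) : NI K :=
  ⟨∏ p ∈ S, p.asIdeal, Finset.prod_ne_zero_iff.mpr fun p _ => p.ne_bot⟩

variable {K} in
theorem coprime_primes {p q : HeightOneSpectrum (𝓞 K)} (h : p ≠ q) : IsCoprime p.asIdeal q.asIdeal := by
  rw [Ideal.isCoprime_iff_sup_eq]
  have hp := p.isMaximal
  have hq := q.isMaximal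
  exact hp.coprime_of_ne hq (fun e => h (HeightOneSpectrum.ext e))

variable {K} in
theorem aS_pow_dvd (S : Finset (HeightOneSpectrum (𝓞 K))) (k : ℕ) (m : Ideal (𝓞 K)) :
    (aS S).1 ^ k ∣ m ↔ ∀ p ∈ S, p.asIdeal ^ k ∣ m := by
  change (∏ p ∈ S, p.asIdeal) ^ k ∣ m ↔ _
  rw [← Finset.prod_pow]
  constructor
  · intro h p hp
    have h1 := Finset.dvd_prod_of_mem (fun p : HeightOneSpectrum (𝓞 K) => p.asIdeal ^ k) hp
    exact dvd_trans h1 h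
  intro h
  refine Finset.prod_dvd_of_coprime (fun p _ q _ hpq => ?_) h
  exact (coprime_primes hpq).pow

variable {K} in
theorem dvd_aS (S : Finset (HeightOneSpectrum (𝓞 K))) (p : HeightOneSpectrum (𝓞 K)) :
    p.asIdeal ∣ (aS S).1 ↔ p ∈ S := by
  refine ⟨fun h => ?_, fun h => Finset.dvd_prod_of_mem _ h⟩
  obtain ⟨q, hq, hpq⟩ := (Prime.dvd_finsetProd_iff p.prime _).mp h
  by_contra hp
  have hne : p ≠ q := fun e => hp (e ▸ hq)
  have := (coprime_primes hne).isUnit_of_dvd' dvd_rfl hpq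
  exact p.prime.not_isUnit this

theorem aS_injective : Function.Injective (aS (K := K)) := by
  intro S T h
  ext p
  rw [← dvd_aS, ← dvd_aS, h]

variable {K} in
theorem finite_Pm (k : ℕ) (hk : k ≠ 0) (m : NI K) :
    {p : HeightOneSpectrum (𝓞 K) | p.asIdeal ^ k ∣ m.1}.Finite :=
  (Ideal.finite_factors m.2).subset fun _ hp => (dvd_pow_self _ hk).trans hp

open scoped Classical in
variable {K} in
theorem hasSum_mob (k : ℕ) (hk : k ≠ 0) (m : NI K) :
    HasSum (fun S : Finset (HeightOneSpectrum (𝓞 K)) =>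
      if (aS S).1 ^ k ∣ m.1 then (-1 : ℝ) ^ S.card else 0)
      (if ∀ p : HeightOneSpectrum (𝓞 K), ¬ p.asIdeal ^ k ∣ m.1 then 1 else 0) := by
  set P := (finite_Pm k hk m).toFinset with hP
  have hmem : ∀ p, p ∈ P ↔ p.asIdeal ^ k ∣ m.1 := by simp [hP]
  have h1 : ∀ S, (aS S).1 ^ k ∣ m.1 ↔ S ∈ P.powerset := by
    intro S
    rw [aS_pow_dvd, Finset.mem_powerset]
    exact ⟨fun h p hp => (hmem p).mpr (h p hp), fun h p hp => (hmem p).mp (h hp)⟩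
  have h2 := hasSum_sum_of_ne_finset_zero (f := fun S : Finset (HeightOneSpectrum (𝓞 K)) =>
      if (aS S).1 ^ k ∣ m.1 then (-1 : ℝ) ^ S.card else 0) (s := P.powerset)
      (L := SummationFilter.unconditional _)
      (fun S hS => if_neg (fun h => hS ((h1 S).mp h)))
  have h3 : ∑ S ∈ P.powerset, (if (aS S).1 ^ k ∣ m.1 then (-1 : ℝ) ^ S.card else 0) =
      if ∀ p : HeightOneSpectrum (𝓞 K), ¬ p.asIdeal ^ k ∣ m.1 then 1 else 0 := by
    rw [Finset.sum_congr rfl (fun S hS => if_pos ((h1 S).mpr hS))]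
    have h4 : ((∑ S ∈ P.powerset, (-1 : ℤ) ^ S.card : ℤ) : ℝ) = ((if P = ∅ then 1 else 0 : ℤ) : ℝ) := by
      rw [Finset.sum_powerset_neg_one_pow_card]
    push_cast at h4
    rw [h4]
    refine if_congr ?_ rfl rfl
    rw [Finset.eq_empty_iff_forall_notMem]
    simp_rw [hmem]
  rwa [h3] at h2

end

end

section
open NumberField 

section

open scoped nonZeroDivisors
open IsDedekindDomain

variable {K} in
/-- Multiplication of nonzero ideals. -/
def mulN (a b : NI K) : NI K := ⟨a.1 * b.1, mul_ne_zero a.2 b.2⟩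

variable {K} in
theorem nrm_mulN (a b : NI K) : nrm (mulN a b) = nrm a * nrm b := by
  simp [nrm, mulN]

variable {K} in
theorem mulN_injective (a : NI K) : Function.Injective (mulN a) := by
  intro b c h
  have h1 : a.1 * b.1 = a.1 * c.1 := congrArg Subtype.val h
  exact Subtype.ext (mul_left_cancel₀ a.2 h1)

theorem summable_aS {s : ℝ} (hs : 1 < s) :
    Summable fun S : Finset (HeightOneSpectrum (𝓞 K)) => nrm (aS S) ^ (-s) :=
  (summable_nrm K hs).comp_injective (aS_injective K)

variable {K} in
theorem no_prime_dvd (m : NI K) : (∀ p : HeightOneSpectrum (𝓞 K), ¬ p.asIdeal ^ 1 ∣ m.1) ↔ m.1 = 1 := by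
  constructor
  · intro h
    by_contra hm
    obtain ⟨M, hM, hle⟩ := Ideal.exists_le_maximal m.1 (by rwa [← Ideal.one_eq_top])
    have hne : M ≠ ⊥ := fun e => m.2 (by rw [e] at hle; exact le_bot_iff.mp hle)
    refine h ⟨M, hM.isPrime, hne⟩ ?_
    rw [pow_one]
    exact Ideal.dvd_iff_le.mpr hle
  · intro h p hp
    rw [h, pow_one] at hp
    exact p.prime.not_isUnit (isUnit_of_dvd_one hp)

open scoped Classical in
theorem zeta_mul_mob {s : ℝ} (hs : 1 < s) :
    (∑' S : Finset (HeightOneSpectrum (𝓞 K)), (-1 : ℝ) ^ S.card * nrm (aS S) ^ (-s)) *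
    (∑' m : NI K, nrm m ^ (-s)) = 1 := by
  set ζ := ∑' m : NI K, nrm m ^ (-s) with hζ
  have hζs : HasSum (fun m : NI K => nrm m ^ (-s)) ζ := (summable_nrm K hs).hasSum
  have fib : ∀ (S : Finset (HeightOneSpectrum (𝓞 K))) (c : ℝ),
      HasSum (fun m : NI K => if (aS S).1 ^ 1 ∣ m.1 then c * nrm m ^ (-s) else 0)
        (c * nrm (aS S) ^ (-s) * ζ) := by
    intro S c
    rw [← (mulN_injective (aS S)).hasSum_iff]
    · convert! hζs.mul_left (c * nrm (aS S) ^ (-s)) using 2 with m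
      rw [Function.comp_apply, if_pos (by rw [pow_one]; exact Dvd.intro _ rfl), nrm_mulN,
        Real.mul_rpow (nrm_pos _).le (nrm_pos _).le, mul_assoc]
    · intro m hm
      refine if_neg fun h => hm ?_
      rw [pow_one] at h
      obtain ⟨b, hb⟩ := h
      exact ⟨⟨b, fun e => m.2 (by rw [hb, e, mul_zero])⟩, Subtype.ext hb.symm⟩
  set F : Finset (HeightOneSpectrum (𝓞 K)) × NI K → ℝ := fun x =>
    if (aS x.1).1 ^ 1 ∣ x.2.1 then (-1 : ℝ) ^ x.1.card * nrm x.2 ^ (-s) else 0 with hF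
  have hFn : ∀ x, ‖F x‖ = if (aS x.1).1 ^ 1 ∣ x.2.1 then 1 * nrm x.2 ^ (-s) else 0 := by
    intro x
    simp only [hF]
    split_ifs
    · rw [norm_mul, norm_pow, norm_neg, norm_one, one_pow,
        Real.norm_of_nonneg (Real.rpow_nonneg (nrm_pos _).le _)]
    · exact norm_zero
  have hsum : Summable F := by
    refine Summable.of_norm ?_
    simp_rw [hFn]
    rw [summable_prod_of_nonneg (fun x => by
      simp only [Pi.zero_apply]
      split_ifs
      · have := Real.rpow_nonneg (nrm_pos x.2).le (-s); linarith
      · exact le_rfl)]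
    refine ⟨fun S => (fib S 1).summable, ?_⟩
    simp_rw [(fib _ 1).tsum_eq, one_mul]
    exact (summable_aS K hs).mul_right _
  have h1 : HasSum (fun S : Finset (HeightOneSpectrum (𝓞 K)) => (-1 : ℝ) ^ S.card * nrm (aS S) ^ (-s) * ζ)
      (∑' x, F x) := hsum.hasSum.prod_fiberwise (fun S => fib S _)
  have hsw : HasSum (F ∘ (Equiv.prodComm _ _)) (∑' x, F x) := (Equiv.prodComm _ _).hasSum_iff.mpr hsum.hasSum
  have h2 : HasSum (fun m : NI K => if m.1 = 1 then (1 : ℝ) else 0) (∑' x, F x) := by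
    refine hsw.prod_fiberwise (fun m => ?_)
    have := (hasSum_mob 1 one_ne_zero m).mul_right (nrm m ^ (-s))
    convert! this using 1
    · funext S
      change (if (aS S).1 ^ 1 ∣ m.1 then (-1 : ℝ) ^ S.card * nrm m ^ (-s) else 0) =
        (if (aS S).1 ^ 1 ∣ m.1 then (-1 : ℝ) ^ S.card else 0) * nrm m ^ (-s)
      rw [ite_mul, zero_mul]
    · simp_rw [no_prime_dvd]
      split_ifs with h
      · have : nrm m = 1 := by rw [nrm, h]; simp
        rw [this]; simp
      · simp
  have h3 : HasSum (fun m : NI K => if m.1 = 1 then (1 : ℝ) else 0) 1 := by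
    have := hasSum_ite_eq (L := SummationFilter.unconditional _) (⟨1, one_ne_zero⟩ : NI K) (1 : ℝ)
    convert! this using 2 with m
    simp [Subtype.ext_iff]
  rw [← tsum_mul_right, h1.tsum_eq, h2.unique h3]

/-- Number of `h`-free ideals of norm at most `x`. -/
def cntH (h : ℕ) (x : ℝ) : ℕ :=
  Nat.card {m : NI K // nrm m ≤ x ∧ ∀ p : HeightOneSpectrum (𝓞 K), ¬ p.asIdeal ^ h ∣ m.1}

variable {K} in
/-- Powers of a nonzero ideal. -/
def powN (a : NI K) (h : ℕ) : NI K := ⟨a.1 ^ h, pow_ne_zero _ a.2⟩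

variable {K} in
theorem nrm_powN (a : NI K) (h : ℕ) : nrm (powN a h) = nrm a ^ h := by
  simp [nrm, powN]

theorem card_dvd (a : NI K) (x : ℝ) :
    Nat.card {m : NI K // nrm m ≤ x ∧ a.1 ∣ m.1} = cntI K (x / nrm a) := by
  rw [cntI_eq]
  symm
  refine Nat.card_congr (Equiv.ofBijective (fun m => ⟨mulN a m.1, ?_, Dvd.intro _ rfl⟩) ⟨?_, ?_⟩)
  · rw [nrm_mulN, mul_comm]; exact (le_div_iff₀ (nrm_pos a)).mp m.2
  · intro b c hbc
    exact Subtype.ext (mulN_injective a (congrArg Subtype.val hbc))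
  · rintro ⟨m, hm, b, hb⟩
    have hb0 : b ≠ 0 := fun e => m.2 (by rw [hb, e, mul_zero])
    have e : mulN a ⟨b, hb0⟩ = m := Subtype.ext hb.symm
    refine ⟨⟨⟨b, hb0⟩, ?_⟩, Subtype.ext e⟩
    rw [le_div_iff₀ (nrm_pos a), mul_comm, ← nrm_mulN, e]
    exact hm

open scoped Classical in
theorem hasSum_cntH (h : ℕ) (hh : h ≠ 0) (x : ℝ) :
    HasSum (fun S : Finset (HeightOneSpectrum (𝓞 K)) => (-1 : ℝ) ^ S.card * cntI K (x / nrm (aS S) ^ h))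
      (cntH K h x) := by
  have hfin := finite_NI K x
  have hfs : {m : NI K | nrm m ≤ x}.Finite := hfin
  have key := hasSum_sum (s := hfs.toFinset) (fun m _ => hasSum_mob h hh m)
  have cnt : ∀ (Q : NI K → Prop), (Nat.card {m : NI K // nrm m ≤ x ∧ Q m} : ℝ) =
      ∑ m ∈ hfs.toFinset, if Q m then 1 else 0 := by
    intro Q
    rw [Finset.sum_boole, Nat.cast_inj, ← Nat.card_eq_finsetCard]
    refine Nat.card_congr (Equiv.subtypeEquivRight fun m => ?_)
    simp
  convert! key using 1
  · funext S
    rw [← nrm_powN, ← card_dvd, cnt, Finset.mul_sum]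
    refine Finset.sum_congr rfl fun m _ => ?_
    change (-1 : ℝ) ^ S.card * (if (aS S).1 ^ h ∣ m.1 then 1 else 0) = _
    by_cases hd : (aS S).1 ^ h ∣ m.1
    · rw [if_pos hd, if_pos hd, mul_one]
    · rw [if_neg hd, if_neg hd, mul_zero]
  · rw [cntH, cnt]

theorem cntH_asymp {θ M : ℝ} (hθ1 : 1 / 2 < θ) (hM : 0 ≤ M)
    (hI : ∀ s : ℝ, 0 < s → |(cntI K s : ℝ) - kap K * s| ≤ M * s ^ θ) (h : ℕ) (hh : 2 ≤ h) :
    ∃ M' : ℝ, 0 ≤ M' ∧ ∀ x : ℝ, 0 < x →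
      |(cntH K h x : ℝ) - kap K / (∑' m : NI K, nrm m ^ (-(h : ℝ))) * x| ≤ M' * x ^ θ := by
  have hh2 : (2 : ℝ) ≤ h := by exact_mod_cast hh
  have hmob := zeta_mul_mob K (s := h) (by linarith)
  set ζ := ∑' m : NI K, nrm m ^ (-(h : ℝ)) with hζ
  set Z := ∑' S : Finset (HeightOneSpectrum (𝓞 K)), (-1 : ℝ) ^ S.card * nrm (aS S) ^ (-(h : ℝ)) with hZ
  have hZζ : 1 / ζ = Z := by
    have : ζ ≠ 0 := fun e => by rw [e, mul_zero] at hmob; exact zero_ne_one hmob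
    rw [div_eq_iff this, hmob]
  have hZs : HasSum (fun S : Finset (HeightOneSpectrum (𝓞 K)) => (-1 : ℝ) ^ S.card * nrm (aS S) ^ (-(h : ℝ))) Z := by
    refine Summable.hasSum (Summable.of_norm ?_)
    refine (summable_aS K (s := h) (by linarith)).congr fun S => ?_
    rw [norm_mul, norm_pow, norm_neg, norm_one, one_pow, one_mul,
        Real.norm_of_nonneg (Real.rpow_nonneg (nrm_pos _).le _)]
  have hθs : 1 < h * θ := by nlinarith
  have hE := (summable_aS K hθs).hasSum
  refine ⟨M * ∑' S : Finset (HeightOneSpectrum (𝓞 K)), nrm (aS S) ^ (-(h * θ)),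
    mul_nonneg hM (tsum_nonneg fun S => Real.rpow_nonneg (nrm_pos _).le _), fun x hx => ?_⟩
  set E := ∑' S : Finset (HeightOneSpectrum (𝓞 K)), nrm (aS S) ^ (-(h * θ)) with hEd
  have d := (hasSum_cntH K h (by omega) x).sub (hZs.mul_left (kap K * x))
  have e1 : kap K / ζ * x = kap K * x * Z := by rw [← hZζ]; ring
  rw [e1, ← Real.norm_eq_abs, show M * E * x ^ θ = M * x ^ θ * E by ring]
  refine d.norm_le_of_bounded (hE.mul_left _) fun S => ?_
  have hp := nrm_pos (aS S)
  have e2 : (-1 : ℝ) ^ S.card * cntI K (x / nrm (aS S) ^ h) -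
      kap K * x * ((-1 : ℝ) ^ S.card * nrm (aS S) ^ (-(h : ℝ))) =
      (-1 : ℝ) ^ S.card * (cntI K (x / nrm (aS S) ^ h) - kap K * (x / nrm (aS S) ^ h)) := by
    rw [Real.rpow_neg hp.le, Real.rpow_natCast]; ring
  rw [e2, norm_mul, norm_pow, norm_neg, norm_one, one_pow, one_mul, Real.norm_eq_abs]
  refine (hI _ (by positivity)).trans_eq ?_
  rw [Real.div_rpow hx.le (by positivity), Real.rpow_neg hp.le, Real.rpow_mul hp.le, Real.rpow_natCast]
  ring

end

end

section
open NumberField 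

section

open IsDedekindDomain

variable {K} in
/-- `m` is `h`-free. -/
def HF (h : ℕ) (m : NI K) : Prop := ∀ r : HeightOneSpectrum (𝓞 K), ¬ r.asIdeal ^ h ∣ m.1

variable {K} in
/-- The `h`-free ideals of norm at most `x` divisible by the primes in `S`, subject to `Q`. -/
def setA (h : ℕ) (S : Finset (HeightOneSpectrum (𝓞 K))) (x : ℝ) (Q : NI K → Prop) : Set (NI K) :=
  {m | nrm m ≤ x ∧ HF h m ∧ (∀ r ∈ S, r.asIdeal ∣ m.1) ∧ Q m}

variable {K} in
/-- The number of such ideals. -/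
def cntA (h : ℕ) (S : Finset (HeightOneSpectrum (𝓞 K))) (x : ℝ) (Q : NI K → Prop) : ℕ :=
  (setA h S x Q).ncard

variable {K} in
theorem setA_finite (h : ℕ) (S : Finset (HeightOneSpectrum (𝓞 K))) (x : ℝ) (Q : NI K → Prop) :
    (setA h S x Q).Finite := by
  have hfin : {m : NI K | nrm m ≤ x}.Finite := finite_NI K x
  exact hfin.subset fun m hm => hm.1

variable {K} in
theorem cntA_split (h : ℕ) (S : Finset (HeightOneSpectrum (𝓞 K))) (x : ℝ) (Q : NI K → Prop) :
    cntA h S x (fun _ => True) = cntA h S x Q + cntA h S x (fun m => ¬ Q m) := by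
  rw [cntA, cntA, cntA, ← Set.ncard_union_eq _ (setA_finite _ _ _ _) (setA_finite _ _ _ _)]
  · congr 1
    ext m
    simp only [setA, Set.mem_union, Set.mem_setOf_eq]
    tauto
  · rw [Set.disjoint_left]
    rintro m ⟨_, _, _, h1⟩ ⟨_, _, _, h2⟩
    exact h2 h1

variable {K} in
/-- A prime as a nonzero ideal. -/
def pN (p : HeightOneSpectrum (𝓞 K)) : NI K := ⟨p.asIdeal, p.ne_bot⟩

variable {K} in
theorem dvd_pow_mul_iff {p r : HeightOneSpectrum (𝓞 K)} (hr : r ≠ p) (j k : ℕ) (m : Ideal (𝓞 K)) :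
    r.asIdeal ^ k ∣ p.asIdeal ^ j * m ↔ r.asIdeal ^ k ∣ m :=
  ⟨fun h => ((coprime_primes hr).pow).dvd_of_dvd_mul_left h, fun h => Dvd.dvd.mul_left h _⟩

variable {K} in
theorem pow_dvd_pow_mul_iff (p : HeightOneSpectrum (𝓞 K)) (j k : ℕ) (m : Ideal (𝓞 K)) :
    p.asIdeal ^ (j + k) ∣ p.asIdeal ^ j * m ↔ p.asIdeal ^ k ∣ m := by
  rw [pow_add]
  exact mul_dvd_mul_iff_left (pow_ne_zero _ p.ne_bot)

variable {K} in
theorem cntA_image (a : NI K) (T U : Set (NI K))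
    (h1 : ∀ m, m ∈ T ↔ mulN a m ∈ U) (h2 : ∀ m ∈ U, a.1 ∣ m.1) : T.ncard = U.ncard := by
  have : U = mulN a '' T := by
    ext m
    constructor
    · intro hm
      obtain ⟨b, hb⟩ := h2 m hm
      have hb0 : b ≠ 0 := fun e => m.2 (by rw [hb, e, mul_zero])
      have e : mulN a ⟨b, hb0⟩ = m := Subtype.ext hb.symm
      exact ⟨⟨b, hb0⟩, (h1 _).mpr (by rwa [e]), e⟩
    · rintro ⟨b, hb, rfl⟩
      exact (h1 b).mp hb
  rw [this, Set.ncard_image_of_injective _ (mulN_injective a)]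

open scoped Classical in
variable {K} in
theorem cntA_rec (h : ℕ) (hh : 2 ≤ h) (S : Finset (HeightOneSpectrum (𝓞 K)))
    (p : HeightOneSpectrum (𝓞 K)) (hp : p ∉ S) (x : ℝ) :
    cntA h (insert p S) x (fun _ => True) + cntA h S (x / nrm (pN p) ^ h) (fun _ => True) =
    cntA h S (x / nrm (pN p)) (fun _ => True) + cntA h (insert p S) (x / nrm (pN p) ^ h) (fun _ => True) := by
  have hne : ∀ r ∈ S, r ≠ p := fun r hr e => hp (e ▸ hr)
  have hq := nrm_pos (pN p)
  have hins : ∀ y, cntA h (insert p S) y (fun _ => True) = cntA h S y (fun m => p.asIdeal ∣ m.1) := by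
    intro y
    rw [cntA, cntA]
    congr 1
    ext m
    simp only [setA, Set.mem_setOf_eq, Finset.forall_mem_insert]
    tauto
  have hB : cntA h S (x / nrm (pN p)) (fun m => p.asIdeal ^ (h - 1) ∣ m.1) =
      cntA h S (x / nrm (pN p) ^ h) (fun m => ¬ p.asIdeal ∣ m.1) := by
    symm
    refine cntA_image (powN (pN p) (h - 1)) _ _ (fun m => ?_) (fun m hm => hm.2.2.2)
    have e1 : (mulN (powN (pN p) (h - 1)) m).1 = p.asIdeal ^ (h - 1) * m.1 := rfl
    simp only [setA, Set.mem_setOf_eq, HF, e1]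
    have a1 : nrm (mulN (powN (pN p) (h - 1)) m) ≤ x / nrm (pN p) ↔ nrm m ≤ x / nrm (pN p) ^ h := by
      rw [nrm_mulN, nrm_powN, le_div_iff₀ hq, le_div_iff₀ (by positivity)]
      have : nrm (pN p) ^ h = nrm (pN p) ^ (h - 1) * nrm (pN p) := by
        rw [← pow_succ]; congr 1; omega
      rw [this]
      constructor <;> intro h' <;> linarith
    have a2 : (∀ r ∈ S, r.asIdeal ∣ p.asIdeal ^ (h - 1) * m.1) ↔ ∀ r ∈ S, r.asIdeal ∣ m.1 := by
      refine forall₂_congr fun r hr => ?_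
      simpa using dvd_pow_mul_iff (hne r hr) (h - 1) 1 m.1
    have a3 : p.asIdeal ^ h ∣ p.asIdeal ^ (h - 1) * m.1 ↔ p.asIdeal ∣ m.1 := by
      have := pow_dvd_pow_mul_iff p (h - 1) 1 m.1
      rwa [Nat.sub_add_cancel (by omega), pow_one] at this
    have a4 : (∀ r : HeightOneSpectrum (𝓞 K), ¬ r.asIdeal ^ h ∣ p.asIdeal ^ (h - 1) * m.1) ↔
        (∀ r : HeightOneSpectrum (𝓞 K), ¬ r.asIdeal ^ h ∣ m.1) ∧ ¬ p.asIdeal ∣ m.1 := by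
      constructor
      · intro H
        have hpm : ¬ p.asIdeal ∣ m.1 := fun h' => H p (a3.mpr h')
        refine ⟨fun r hr => ?_, hpm⟩
        exact H r (Dvd.dvd.mul_left hr _)
      · rintro ⟨H1, H2⟩ r hr
        by_cases hrp : r = p
        · subst hrp; exact H2 (a3.mp hr)
        · exact H1 r ((dvd_pow_mul_iff hrp _ _ _).mp hr)
    rw [a1, a2, a4]
    have a5 : p.asIdeal ^ (h - 1) ∣ p.asIdeal ^ (h - 1) * m.1 := Dvd.intro _ rfl
    tauto
  have hC : cntA h S (x / nrm (pN p)) (fun m => ¬ p.asIdeal ^ (h - 1) ∣ m.1) =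
      cntA h S x (fun m => p.asIdeal ∣ m.1) := by
    refine cntA_image (pN p) _ _ (fun m => ?_) (fun m hm => hm.2.2.2)
    have e1 : (mulN (pN p) m).1 = p.asIdeal ^ 1 * m.1 := by rw [pow_one]; rfl
    simp only [setA, Set.mem_setOf_eq, HF, e1]
    have a1 : nrm (mulN (pN p) m) ≤ x ↔ nrm m ≤ x / nrm (pN p) := by
      rw [nrm_mulN, le_div_iff₀ hq, mul_comm]
    have a2 : (∀ r ∈ S, r.asIdeal ∣ p.asIdeal ^ 1 * m.1) ↔ ∀ r ∈ S, r.asIdeal ∣ m.1 := by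
      refine forall₂_congr fun r hr => ?_
      simpa using dvd_pow_mul_iff (hne r hr) 1 1 m.1
    have a3 : p.asIdeal ^ h ∣ p.asIdeal ^ 1 * m.1 ↔ p.asIdeal ^ (h - 1) ∣ m.1 := by
      have := pow_dvd_pow_mul_iff p 1 (h - 1) m.1
      rwa [Nat.add_sub_cancel' (by omega)] at this
    have a4 : (∀ r : HeightOneSpectrum (𝓞 K), ¬ r.asIdeal ^ h ∣ p.asIdeal ^ 1 * m.1) ↔
        (∀ r : HeightOneSpectrum (𝓞 K), ¬ r.asIdeal ^ h ∣ m.1) ∧ ¬ p.asIdeal ^ (h - 1) ∣ m.1 := by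
      constructor
      · intro H
        exact ⟨fun r hr => H r (Dvd.dvd.mul_left hr _), fun h' => H p (a3.mpr h')⟩
      · rintro ⟨H1, H2⟩ r hr
        by_cases hrp : r = p
        · subst hrp; exact H2 (a3.mp hr)
        · exact H1 r ((dvd_pow_mul_iff hrp _ _ _).mp hr)
    rw [a1, a2, a4]
    have a5 : p.asIdeal ∣ p.asIdeal ^ 1 * m.1 := by rw [pow_one]; exact Dvd.intro _ rfl
    tauto
  have s1 := cntA_split h S (x / nrm (pN p)) (fun m => p.asIdeal ^ (h - 1) ∣ m.1)
  have s2 := cntA_split h S (x / nrm (pN p) ^ h) (fun m => p.asIdeal ∣ m.1)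
  rw [hins, hins]
  omega

variable {K} in
theorem cntA_lt_one (h : ℕ) (S : Finset (HeightOneSpectrum (𝓞 K))) {x : ℝ} (hx : x < 1) (Q : NI K → Prop) :
    cntA h S x Q = 0 := by
  rw [cntA, Set.ncard_eq_zero (setA_finite _ _ _ _), Set.eq_empty_iff_forall_notMem]
  intro m hm
  have := nrm_ge_one m
  linarith [hm.1]

variable {K} in
theorem nrm_pN_ge_two (p : HeightOneSpectrum (𝓞 K)) : 2 ≤ nrm (pN p) := by
  have h1 : Ideal.absNorm p.asIdeal ≠ 0 := by
    rw [Ne, Ideal.absNorm_eq_zero_iff]; exact p.ne_bot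
  have h2 : Ideal.absNorm p.asIdeal ≠ 1 := by
    rw [Ne, Ideal.absNorm_eq_one_iff]; exact p.isPrime.ne_top
  have h3 : 2 ≤ Ideal.absNorm p.asIdeal := by omega
  rw [nrm, pN]
  exact_mod_cast h3

/-- The analytic induction step. -/
theorem analytic_step {h : ℕ} (hh : 2 ≤ h) {τ q c M : ℝ} (hτ : 1 / 2 < τ) (hτ1 : τ < 1) (hq : 2 ≤ q)
    (hc : 0 ≤ c) (hcM : c ≤ M) (A A' : ℝ → ℝ)
    (hA : ∀ x, 0 < x → |A x - c * x| ≤ M * x ^ τ)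
    (hA' : ∀ x, x < 1 → A' x = 0)
    (hrec : ∀ x, A' x + A (x / q ^ h) = A (x / q) + A' (x / q ^ h)) :
    (0 ≤ c * ((q ^ (h - 1) - 1) / (q ^ h - 1))) ∧
    (c * ((q ^ (h - 1) - 1) / (q ^ h - 1)) ≤ 4 * M / q ^ τ) ∧
    ∀ x, 0 < x → |A' x - c * ((q ^ (h - 1) - 1) / (q ^ h - 1)) * x| ≤ 4 * M / q ^ τ * x ^ τ := by
  have hq0 : 0 < q := by linarith
  have hM : 0 ≤ M := hc.trans hcM
  have hqh : q ^ h = q ^ (h - 1) * q := by rw [← pow_succ]; congr 1; omega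
  have hq1 : 1 ≤ q ^ (h - 1) := one_le_pow₀ (by linarith)
  have hq2 : 1 < q ^ h := by rw [hqh]; nlinarith
  have hqle : q ≤ q ^ h := by rw [hqh]; nlinarith
  set g := (q ^ (h - 1) - 1) / (q ^ h - 1) with hg
  have hg0 : 0 ≤ g := div_nonneg (by linarith) (by linarith)
  have hgq : g ≤ 1 / q := by
    rw [hg, div_le_div_iff₀ (by linarith) hq0, hqh]; nlinarith
  have hqτ : q ^ τ ≤ q := by
    nth_rw 2 [← Real.rpow_one q]
    exact Real.rpow_le_rpow_of_exponent_le (by linarith) hτ1.le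
  have hqτ0 : 0 < q ^ τ := by positivity
  have hgτ : g ≤ 1 / q ^ τ := hgq.trans (one_div_le_one_div_of_le hqτ0 hqτ)
  have hqhτ : 2 ≤ (q ^ h) ^ τ := by
    have h1 : (4 : ℝ) ≤ q ^ h := by
      calc (4 : ℝ) = 2 ^ 2 := by norm_num
        _ ≤ q ^ 2 := by gcongr
        _ ≤ q ^ h := pow_le_pow_right₀ (by linarith) hh
    calc (2 : ℝ) = (4 : ℝ) ^ (1 / 2 : ℝ) := by
          rw [show (4 : ℝ) = 2 ^ (2 : ℝ) by norm_num, ← Real.rpow_mul (by norm_num)]; norm_num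
      _ ≤ (q ^ h) ^ (1 / 2 : ℝ) := by gcongr
      _ ≤ (q ^ h) ^ τ := Real.rpow_le_rpow_of_exponent_le hq2.le hτ.le
  refine ⟨mul_nonneg hc hg0, ?_, ?_⟩
  · calc c * g ≤ M * (1 / q ^ τ) := by gcongr
      _ = M / q ^ τ := by ring
      _ ≤ 4 * M / q ^ τ := by gcongr; linarith
  have key : ∀ n : ℕ, ∀ x, 0 < x → x < 2 ^ n → |A' x - c * g * x| ≤ 4 * M / q ^ τ * x ^ τ := by
    have small : ∀ x, 0 < x → x < 1 → |A' x - c * g * x| ≤ 4 * M / q ^ τ * x ^ τ := by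
      intro x hx hx1
      rw [hA' x hx1, zero_sub, abs_neg, abs_of_nonneg (by positivity)]
      have hxτ : x ≤ x ^ τ := by
        nth_rw 1 [← Real.rpow_one x]
        exact Real.rpow_le_rpow_of_exponent_ge hx hx1.le hτ1.le
      calc c * g * x ≤ M * (1 / q ^ τ) * x ^ τ := by gcongr
        _ = M / q ^ τ * x ^ τ := by ring
        _ ≤ 4 * M / q ^ τ * x ^ τ := by gcongr; linarith
    intro n
    induction n with
    | zero => intro x hx hx1; exact small x hx (by simpa using hx1)
    | succ n ih =>
      intro x hx hxn
      have hy : 0 < x / q ^ h := by positivity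
      have e := hrec x
      have i1 := ih (x / q ^ h) hy (by
        rw [div_lt_iff₀ (by positivity)]
        calc x < 2 ^ n * 2 := by rwa [pow_succ] at hxn
          _ ≤ 2 ^ n * q ^ h := by gcongr; linarith)
      have i2 := hA (x / q) (by positivity)
      have i3 := hA (x / q ^ h) hy
      have hg2 : g * (q ^ h - 1) = q ^ (h - 1) - 1 := by
        rw [hg, div_mul_cancel₀ _ (by linarith)]
      have hlin : c * g * x - c * g * (x / q ^ h) = c * (x / q) - c * (x / q ^ h) := by
        have : c * g * x - c * g * (x / q ^ h) = c * x * (g * (q ^ h - 1)) / q ^ h := by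
          field_simp
        rw [this, hg2, hqh]; field_simp
      have hE : A' x - c * g * x = (A' (x / q ^ h) - c * g * (x / q ^ h)) + (A (x / q) - c * (x / q))
          - (A (x / q ^ h) - c * (x / q ^ h)) := by linarith
      have t1 : |A' x - c * g * x| ≤ |A' (x / q ^ h) - c * g * (x / q ^ h)| + |A (x / q) - c * (x / q)|
          + |A (x / q ^ h) - c * (x / q ^ h)| := by
        rw [hE]
        exact (abs_sub _ _).trans (add_le_add_left (abs_add_le _ _) _)
      have r1 : (x / q) ^ τ = x ^ τ / q ^ τ := Real.div_rpow hx.le hq0.le _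
      have r2 : (x / q ^ h) ^ τ ≤ x ^ τ / q ^ τ := by
        rw [← r1]; gcongr
      have r3 : (x / q ^ h) ^ τ ≤ x ^ τ / 2 := by
        rw [Real.div_rpow hx.le (by positivity)]; gcongr
      have r4 : 4 * M / q ^ τ * (x / q ^ h) ^ τ ≤ 4 * M / q ^ τ * (x ^ τ / 2) := by gcongr
      have r5 : M * (x / q ^ h) ^ τ ≤ M * (x ^ τ / q ^ τ) := by gcongr
      rw [r1] at i2
      have r6 : 4 * M / q ^ τ * (x ^ τ / 2) = 2 * (M * (x ^ τ / q ^ τ)) := by ring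
      have r7 : 4 * M / q ^ τ * x ^ τ = 4 * (M * (x ^ τ / q ^ τ)) := by ring
      rw [r7]
      linarith
  intro x hx
  obtain ⟨n, hn⟩ := pow_unbounded_of_one_lt x (by norm_num : (1 : ℝ) < 2)
  exact key n x hx hn

theorem cntA_asymp {h : ℕ} (hh : 2 ≤ h) {τ c M : ℝ} (hτ : 1 / 2 < τ) (hτ1 : τ < 1)
    (hc : 0 ≤ c) (hcM : c ≤ M)
    (hH : ∀ x : ℝ, 0 < x → |(cntH K h x : ℝ) - c * x| ≤ M * x ^ τ)
    (S : Finset (HeightOneSpectrum (𝓞 K))) :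
    (0 ≤ c * ∏ p ∈ S, ((nrm (pN p) ^ (h - 1) - 1) / (nrm (pN p) ^ h - 1))) ∧
    (c * (∏ p ∈ S, ((nrm (pN p) ^ (h - 1) - 1) / (nrm (pN p) ^ h - 1))) ≤
      4 ^ S.card * M / ∏ p ∈ S, nrm (pN p) ^ τ) ∧
    ∀ x, 0 < x → |(cntA h S x (fun _ => True) : ℝ) -
      c * (∏ p ∈ S, ((nrm (pN p) ^ (h - 1) - 1) / (nrm (pN p) ^ h - 1))) * x| ≤
      4 ^ S.card * M / (∏ p ∈ S, nrm (pN p) ^ τ) * x ^ τ := by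
  classical
  induction S using Finset.induction_on with
  | empty =>
    refine ⟨by simpa using hc, by simpa using hcM, fun x hx => ?_⟩
    have e : cntA h (∅ : Finset (HeightOneSpectrum (𝓞 K))) x (fun _ => True) = cntH K h x := by
      rw [cntA, cntH, ← Nat.card_coe_set_eq]
      refine Nat.card_congr (Equiv.subtypeEquivRight fun m => ?_)
      simp [setA, HF]
    rw [e]
    simpa using hH x hx
  | insert p S hp ih =>
    obtain ⟨h1, h2, h3⟩ := ih
    have := analytic_step hh hτ hτ1 (nrm_pN_ge_two p) h1 h2
      (fun x => (cntA h S x (fun _ => True) : ℝ)) (fun x => (cntA h (insert p S) x (fun _ => True) : ℝ)) h3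
      (fun x hx => by rw [cntA_lt_one h _ hx]; simp)
      (fun x => by exact_mod_cast cntA_rec h hh S p hp x)
    have e1 : c * ∏ r ∈ insert p S, ((nrm (pN r) ^ (h - 1) - 1) / (nrm (pN r) ^ h - 1)) =
        c * (∏ r ∈ S, ((nrm (pN r) ^ (h - 1) - 1) / (nrm (pN r) ^ h - 1))) *
        ((nrm (pN p) ^ (h - 1) - 1) / (nrm (pN p) ^ h - 1)) := by
      rw [Finset.prod_insert hp]; ring
    have e2 : 4 ^ (insert p S).card * M / ∏ r ∈ insert p S, nrm (pN r) ^ τ =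
        4 * (4 ^ S.card * M / ∏ r ∈ S, nrm (pN r) ^ τ) / nrm (pN p) ^ τ := by
      rw [Finset.prod_insert hp, Finset.card_insert_of_notMem hp, pow_succ]
      field_simp
    rw [e1, e2]
    exact this

end

end

section
open NumberField IsDedekindDomain

theorem card_eq_cntA {h : ℕ} (hh : 2 ≤ h) {u : ℕ} (P : Fin u ↪ HeightOneSpectrum (𝓞 K)) (x : ℝ) :
    Nat.card {m : Ideal (𝓞 K) //
      IsHFree K h m ∧ (Ideal.absNorm m : ℝ) ≤ x ∧ ∀ i, (P i).asIdeal ∣ m} =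
    cntA h (Finset.univ.map P) x (fun _ => True) := by
  rw [cntA, ← Nat.card_coe_set_eq]
  refine Nat.card_congr
    { toFun := fun m => ⟨⟨m.1, m.2.1.1⟩, m.2.2.1, ?_, ?_, trivial⟩
      invFun := fun m => ⟨m.1.1, ⟨m.1.2, ?_⟩, m.2.1, ?_⟩
      left_inv := fun m => rfl
      right_inv := fun m => rfl }
  · intro r
    exact m.2.1.2 r.asIdeal r.isPrime
  · intro r hr
    obtain ⟨i, -, rfl⟩ := Finset.mem_map.1 hr
    exact m.2.2.2 i
  · intro p hp hd
    by_cases h0 : p = ⊥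
    · subst h0
      apply m.1.2
      have h1 : (⊥ : Ideal (𝓞 K)) ^ h = 0 := zero_pow (by omega)
      rw [h1] at hd
      exact zero_dvd_iff.1 hd
    · exact m.2.2.1 ⟨p, hp, h0⟩ hd
  · intro i
    exact m.2.2.2.1 (P i) (Finset.mem_map_of_mem _ (Finset.mem_univ i))

end

/-- **Counting `h`-free ideals divisible by given distinct primes `p_1, …, p_u`**:
there is `τ = τ(h,K) < 1` such that the count equals
`(∏_i (N(p_i)^{h-1} - 1)/(N(p_i)^h - 1)) (κ/ζ_K(h)) x + O_{h,u}(x^τ/∏_i N(p_i)^τ)`. -/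
theorem count_hFree_ideals_divisible (h : ℕ) (hh : 2 ≤ h) :
    ∃ τ : ℝ, τ < 1 ∧ ∀ u : ℕ, ∃ C : ℝ,
      ∀ p : Fin u → Ideal (NumberField.RingOfIntegers K),
        Function.Injective p → (∀ i, (p i).IsPrime) → (∀ i, p i ≠ ⊥) →
        ∀ x : ℝ, 2 ≤ x →
        |(Nat.card {m : Ideal (NumberField.RingOfIntegers K) //
            IsHFree K h m ∧ (Ideal.absNorm m : ℝ) ≤ x ∧ ∀ i, p i ∣ m} : ℝ) -
          (∏ i : Fin u, ((Ideal.absNorm (p i) : ℝ) ^ (h - 1) - 1) /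
              ((Ideal.absNorm (p i) : ℝ) ^ h - 1)) * (kappa K / zetaKR K h) * x| ≤
        C * x ^ τ / ∏ i : Fin u, (Ideal.absNorm (p i) : ℝ) ^ τ := by
  obtain ⟨θ, hθ1, hθ2, M, hM, hI⟩ := cntI_asymp K
  obtain ⟨M', hM', hH⟩ := cntH_asymp K hθ1 hM hI h hh
  have hz : kap K / (∑' m : NI K, nrm m ^ (-(h:ℝ))) = kappa K / zetaKR K h := rfl
  rw [hz] at hH
  set c : ℝ := kappa K / zetaKR K h with hcdef
  have hc : 0 ≤ c := by
    rw [← hz]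
    exact div_nonneg (kap_nonneg K)
      (tsum_nonneg fun m => Real.rpow_nonneg (nrm_pos m).le _)
  refine ⟨θ, hθ2, fun u => ⟨4 ^ u * (M' + c), ?_⟩⟩
  intro p hp hprime hne x hx
  have hH' : ∀ x : ℝ, 0 < x → |(cntH K h x : ℝ) - c * x| ≤ (M' + c) * x ^ θ := by
    intro x hx
    refine (hH x hx).trans ?_
    have := Real.rpow_nonneg hx.le θ
    gcongr
    linarith
  let P : Fin u ↪ IsDedekindDomain.HeightOneSpectrum (NumberField.RingOfIntegers K) :=
    ⟨fun i => ⟨p i, hprime i, hne i⟩, fun i j hij =>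
      hp (congrArg IsDedekindDomain.HeightOneSpectrum.asIdeal hij)⟩
  have key := (cntA_asymp K hh hθ1 hθ2 hc (by linarith) hH' (Finset.univ.map P)).2.2 x
    (by linarith)
  rw [Finset.card_map, Finset.card_univ, Fintype.card_fin, Finset.prod_map, Finset.prod_map,
    ← card_eq_cntA K hh P x] at key
  have e1 : ∀ A B : ℝ, A * c * B = c * A * B := fun A B => by ring
  have e2 : ∀ A B D : ℝ, A * B / D = A / D * B := fun A B D => by ring
  rw [e1, e2]
  exact key

end
end

section
/- Let h ≥ 2 be an integer. There exists a constant ξ = ξ(h, K) with ξ < 1 such that for every u ∈ ℕ and all distinct prime ideals p_1, …, p_u of O_K, the number of h-full ideals m of O_K with N(m) ≤ x and p_i | m for all i = 1, …, u equals (∏_{i=1}^u 1/(N(p_i)(1 − N(p_i)^{−1/h} + N(p_i)^{−1}))) · κ γ_h x^{1/h} + O_{h,u}(x^{ξ/h} / ∏_{i=1}^u N(p_i)^{ξ}), where the implied constant depends only on h, u, and K, and γ_h = ∏_p (1 + (N(p) − N(p)^{1/h})/(N(p)²(N(p)^{1/h} − 1))) (product over all prime ideals p). -/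
open Filter Topology
open scoped BigOperators

noncomputable section

variable (K : Type) [Field K] [NumberField K]

/-- `m` is an `h`-full ideal: every prime ideal dividing `m` divides it to order at least `h`. -/
def IsHFull (h : ℕ) (m : Ideal (NumberField.RingOfIntegers K)) : Prop :=
  m ≠ 0 ∧ ∀ p : Ideal (NumberField.RingOfIntegers K), p.IsPrime → p ∣ m → p ^ h ∣ m

/-- The constant `γ_h`, an infinite product over the (nonzero) prime ideals of `O_K`. -/
def gammaH (h : ℕ) : ℝ :=
  ∏' p : {p : Ideal (NumberField.RingOfIntegers K) // p.IsPrime ∧ p ≠ ⊥},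
    (1 + ((Ideal.absNorm p.1 : ℝ) - (Ideal.absNorm p.1 : ℝ) ^ ((1 : ℝ)/h)) /
      ((Ideal.absNorm p.1 : ℝ) ^ 2 * ((Ideal.absNorm p.1 : ℝ) ^ ((1 : ℝ)/h) - 1)))

section HFC_A1
open MeasureTheory Module Pointwise in
theorem HFC.lattice_count {V ι : Type*} [NormedAddCommGroup V] [NormedSpace ℝ V]
    [FiniteDimensional ℝ V] [MeasurableSpace V] [BorelSpace V] (μ : Measure V)
    [μ.IsAddHaarMeasure] [Fintype ι] (b : Basis ι ℝ V) (S : Set V)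
    (hSb : Bornology.IsBounded S) (t : ℝ) (ht : 0 < t) (E : Set V) (hE : μ E ≠ ⊤)
    (hSE : ∀ x ∈ S, ∀ y ∉ S, dist x y ≤ (∑ i, ‖b i‖) / t → x ∈ E ∧ y ∈ E) :
    |(Set.ncard {l : V | l ∈ Submodule.span ℤ (Set.range b) ∧ t⁻¹ • l ∈ S} : ℝ) *
        μ.real (ZSpan.fundamentalDomain b) - t ^ finrank ℝ V * μ.real S| ≤
      t ^ finrank ℝ V * μ.real E := by
  set Λ : Set V := {l : V | l ∈ Submodule.span ℤ (Set.range b) ∧ t⁻¹ • l ∈ S} with hΛ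
  have htS : ∀ s : Set V, μ.real (t • s) = t ^ finrank ℝ V * μ.real s := by
    intro s
    rw [measureReal_def, Measure.addHaar_smul, ENNReal.toReal_mul, ENNReal.toReal_ofReal (abs_nonneg _),
      abs_of_nonneg (by positivity), measureReal_def]
  have hfin : Λ.Finite := by
    have := ZSpan.setFinite_inter b (hSb.smul₀ t)
    refine this.subset ?_
    rintro l ⟨h1, h2⟩
    refine ⟨?_, h1⟩
    exact (Set.mem_smul_set_iff_inv_smul_mem₀ ht.ne' _ _).2 h2
  set F := ZSpan.fundamentalDomain b
  have hF : MeasurableSet F := ZSpan.fundamentalDomain_measurableSet b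
  have hFfin : μ F ≠ ⊤ := (ZSpan.fundamentalDomain_isBounded b).measure_lt_top.ne
  have hmem : ∀ l : V, l ∈ Submodule.span ℤ (Set.range b) → ∀ y, (y ∈ (fun z => -l + z) ⁻¹' F ↔ (ZSpan.floor b y : V) = l) := by
    intro l hl y
    rw [Set.mem_preimage, ← ZSpan.fract_eq_self, ZSpan.fract_zSpan_add b y (neg_mem hl), ZSpan.fract_apply]
    constructor
    · intro h
      have : (ZSpan.floor b y : V) = y - (-l + y) := by rw [← h]; abel
      rw [this]; abel
    · intro h
      rw [h]; abel
  set U : Set V := ⋃ l ∈ hfin.toFinset, (fun z => -l + z) ⁻¹' F with hU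
  have hUmem : ∀ y, y ∈ U ↔ t⁻¹ • (ZSpan.floor b y : V) ∈ S := by
    intro y
    simp only [hU, Set.mem_iUnion, Set.Finite.mem_toFinset, exists_prop]
    constructor
    · rintro ⟨l, hl, hy⟩
      rw [(hmem l hl.1 y).1 hy]; exact hl.2
    · intro h
      exact ⟨_, ⟨(ZSpan.floor b y).2, h⟩, (hmem _ (ZSpan.floor b y).2 y).2 rfl⟩
  have hUvol : μ.real U = Λ.ncard * μ.real F := by
    rw [hU, measureReal_biUnion_finset (h := fun l _ => by
      simp only [measure_preimage_add]; exact hFfin)]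
    · simp only [measureReal_def, measure_preimage_add]
      rw [Finset.sum_const, nsmul_eq_mul, Set.ncard_eq_toFinset_card _ hfin]
    · intro l hl l' hl' hne
      rw [Function.onFun, Set.disjoint_left]
      intro y hy hy'
      apply hne
      rw [← (hmem l (by simpa using ((hfin.mem_toFinset).1 hl).1) y).1 hy,
        ← (hmem l' (by simpa using ((hfin.mem_toFinset).1 hl').1) y).1 hy']
    · intro l _
      exact (measurable_const_add _) hF
  have hdist : ∀ y, dist (t⁻¹ • (ZSpan.floor b y : V)) (t⁻¹ • y) ≤ (∑ i, ‖b i‖) / t := by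
    intro y
    rw [dist_smul₀, Real.norm_of_nonneg (by positivity), dist_comm, dist_eq_norm, ← ZSpan.fract_apply, inv_mul_eq_div]
    gcongr
    exact ZSpan.norm_fract_le b y
  have hSfin : μ S ≠ ⊤ := hSb.measure_lt_top.ne
  have htfin : ∀ s : Set V, μ s ≠ ⊤ → μ (t • s) ≠ ⊤ := by
    intro s hs
    rw [Measure.addHaar_smul]
    exact ENNReal.mul_ne_top ENNReal.ofReal_ne_top hs
  have hUfin : μ U ≠ ⊤ := by
    rw [hU]
    refine (measure_biUnion_lt_top (Finset.finite_toSet _) ?_).ne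
    intro l _
    rw [measure_preimage_add]; exact hFfin.lt_top
  have hsub1 : U ⊆ t • S ∪ t • E := by
    intro y hy
    rw [hUmem] at hy
    by_cases hyS : t⁻¹ • y ∈ S
    · left; exact (Set.mem_smul_set_iff_inv_smul_mem₀ ht.ne' _ _).2 hyS
    · right; exact (Set.mem_smul_set_iff_inv_smul_mem₀ ht.ne' _ _).2 (hSE _ hy _ hyS (hdist y)).2
  have hsub2 : t • S ⊆ U ∪ t • E := by
    intro y hy
    have hyS := (Set.mem_smul_set_iff_inv_smul_mem₀ ht.ne' _ _).1 hy
    by_cases hyU : y ∈ U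
    · left; exact hyU
    · right
      rw [hUmem] at hyU
      exact (Set.mem_smul_set_iff_inv_smul_mem₀ ht.ne' _ _).2
        (hSE _ hyS _ hyU (by rw [dist_comm]; exact hdist y)).1
  have h1 : μ.real U ≤ μ.real (t • S) + μ.real (t • E) :=
    (measureReal_mono hsub1 (measure_union_ne_top (htfin _ hSfin) (htfin _ hE))).trans (measureReal_union_le _ _)
  have h2 : μ.real (t • S) ≤ μ.real U + μ.real (t • E) :=
    (measureReal_mono hsub2 (measure_union_ne_top hUfin (htfin _ hE))).trans (measureReal_union_le _ _)
  rw [htS, htS] at h1 h2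
  rw [← hUvol, abs_le]
  constructor <;> linarith
end HFC_A1

section HFC_A2
open MeasureTheory Module NumberField NumberField.InfinitePlace NumberField.mixedEmbedding
  NumberField.mixedEmbedding.fundamentalCone NumberField.Units NumberField.Units.dirichletUnitTheorem ENNReal

namespace HFC

open Classical in
theorem lintegral_pi_exp (K : Type*) [Field K] [NumberField K] (n : ℕ)
    (s : InfinitePlace K → Set ℝ) :
    ∫⁻ (x : realSpace K) in Set.univ.pi s, .ofReal (Real.exp (x w₀ * n)) =
      (∫⁻ t in s w₀, .ofReal (Real.exp (t * n))) * ∏ w : {w : InfinitePlace K // w ≠ w₀}, volume (s w.1) := by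
  classical
  rw [volume_pi, Measure.restrict_pi_pi, lintegral_eq_lmarginal_univ 0,
    lmarginal_erase' _ (by fun_prop) (Finset.mem_univ w₀)]
  simp_rw [Function.update_self, lmarginal, lintegral_const, Measure.pi_univ, Measure.restrict_apply_univ]
  congr 1
  refine Fintype.prod_equiv (Equiv.subtypeEquivRight (by simp)) _ _ ?_
  intro x
  rfl

open Classical in
/-- A thin slab around the hyperplane `x i = c`. -/
noncomputable def slab (K : Type*) [Field K] [NumberField K] (i : InfinitePlace K) (c δ : ℝ) :
    InfinitePlace K → Set ℝ := fun w =>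
  if w = i then Set.Icc (c - δ) (c + δ) else if w = w₀ then Set.Iic 1 else Set.Icc (-1) 2

open Classical in
theorem lintegral_slab_le (K : Type*) [Field K] [NumberField K] (n : ℕ) (hn : 0 < n) :
    ∃ C : ℝ≥0∞, C ≠ ⊤ ∧ ∀ (i : InfinitePlace K) (c δ : ℝ), 0 < δ → δ ≤ 1 → (i = w₀ → c = 0) →
      ∫⁻ (x : realSpace K) in Set.univ.pi (slab K i c δ), .ofReal (Real.exp (x w₀ * n)) ≤
        C * ENNReal.ofReal δ := by
  have hn : 0 < (n : ℝ) := Nat.cast_pos.mpr hn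
  set I : ℝ≥0∞ := ∫⁻ t in Set.Iic (1 : ℝ), .ofReal (Real.exp (t * n)) with hI
  have hIfin : I ≠ ⊤ := by
    rw [hI]
    simp_rw [mul_comm _ (n : ℝ)]
    rw [← ofReal_integral_eq_lintegral_ofReal (integrableOn_exp_mul_Iic hn _)]
    · exact ofReal_ne_top
    · filter_upwards with _ using Real.exp_nonneg _
  set B : ℝ≥0∞ := ENNReal.ofReal (2 * Real.exp n) + I + 3 with hB
  have hBfin : B ≠ ⊤ := by rw [hB]; finiteness
  refine ⟨B ^ Fintype.card (InfinitePlace K), ENNReal.pow_ne_top hBfin, ?_⟩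
  intro i c δ hδ hδ1 hic
  have h2 : (2 : ℝ≥0∞) ≤ B := by
    rw [hB]; exact le_add_left (by norm_num)
  have h3 : (3 : ℝ≥0∞) ≤ B := by
    rw [hB]; exact le_add_left (by norm_num)
  rw [lintegral_pi_exp]
  have hvolI : volume (Set.Icc (c - δ) (c + δ)) = 2 * ENNReal.ofReal δ := by
    rw [Real.volume_Icc, show c + δ - (c - δ) = 2 * δ by ring, ENNReal.ofReal_mul (by norm_num)]
    simp
  have key : (∫⁻ t in slab K i c δ w₀, .ofReal (Real.exp (t * n))) *
      ∏ w : {w : InfinitePlace K // w ≠ w₀}, volume (slab K i c δ w.1) ≤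
      ∏ w : InfinitePlace K, (B * if w = i then ENNReal.ofReal δ else 1) := by
    rw [Fintype.prod_eq_mul_prod_subtype_ne _ w₀]
    gcongr with w
    · unfold slab
      split_ifs with h h'
      · have := hic h.symm
        subst this
        calc ∫⁻ t in Set.Icc (0 - δ) (0 + δ), .ofReal (Real.exp (t * n))
            ≤ ∫⁻ t in Set.Icc (0 - δ) (0 + δ), .ofReal (Real.exp n) := by
              refine setLIntegral_mono (by fun_prop) ?_
              intro t ht
              apply ENNReal.ofReal_le_ofReal
              apply Real.exp_le_exp.2
              have : t ≤ 1 := by linarith [ht.2]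
              nlinarith
          _ = ENNReal.ofReal (2 * Real.exp n) * ENNReal.ofReal δ := by
              rw [setLIntegral_const, hvolI, ENNReal.ofReal_mul (by norm_num)]
              simp; ring
          _ ≤ _ := by
              gcongr
              rw [hB, add_assoc]; exact le_self_add
      · rw [mul_one]
        rw [hB]; exact le_trans le_add_self (le_self_add)
      · exact absurd rfl h'
    · unfold slab
      rw [if_neg w.2]
      split_ifs with h
      · rw [hvolI]; gcongr
      · rw [Real.volume_Icc, mul_one]
        refine le_trans ?_ h3
        norm_num
  refine key.trans (le_of_eq ?_)
  rw [Finset.prod_mul_distrib, Finset.prod_ite_eq']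
  simp

open scoped Classical in
/-- Volume of a norm-symmetric set in exponential coordinates. -/
theorem volume_param (K : Type*) [Field K] [NumberField K] :
    ∃ C : ℝ≥0∞, C ≠ ⊤ ∧ ∀ T : Set (realSpace K), MeasurableSet T →
      volume (normAtAllPlaces ⁻¹' (expMapBasis '' T)) =
        C * ∫⁻ (x : realSpace K) in T, .ofReal (Real.exp (x w₀ * Module.finrank ℚ K)) := by
  classical
  refine ⟨2 ^ nrRealPlaces K * .ofReal (2 * Real.pi) ^ nrComplexPlaces K *
    ((2 : ℝ≥0∞)⁻¹ ^ nrComplexPlaces K * ENNReal.ofReal (regulator K) * (Module.finrank ℚ K)), ?_, ?_⟩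
  · finiteness
  intro T hT
  have h₂ : MeasurableSet (normAtAllPlaces ⁻¹' (expMapBasis '' T)) := by
    refine MeasurableSet.preimage ?_ (continuous_normAtAllPlaces K).measurable
    exact MeasurableSet.image_of_continuousOn_injOn hT (continuous_expMapBasis K).continuousOn
      (injective_expMapBasis K).injOn
  rw [volume_eq_two_pow_mul_two_pi_pow_mul_integral Set.preimage_image_preimage h₂,
    normAtAllPlaces_image_preimage_expMapBasis,
    setLIntegral_expMapBasis_image hT (by fun_prop)]
  simp_rw [ENNReal.inv_mul_cancel_right
    (Finset.prod_ne_zero_iff.mpr fun _ _ ↦ ofReal_ne_zero_iff.mpr (expMapBasis_pos _ _))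
    (prod_ne_top fun _ _ ↦ ofReal_ne_top)]
  ring

end HFC
end HFC_A2

section HFC_A3
open MeasureTheory Module NumberField NumberField.InfinitePlace NumberField.mixedEmbedding
  NumberField.mixedEmbedding.fundamentalCone NumberField.Units NumberField.Units.dirichletUnitTheorem ENNReal Pointwise

namespace HFC

theorem expMapBasis_comparable (K : Type*) [Field K] [NumberField K] :
    ∃ M : ℝ, 0 ≤ M ∧ ∀ a ∈ paramSet K, ∀ v w : InfinitePlace K,
      expMapBasis a v ≤ M * expMapBasis a w := by
  classical
  have hQ : IsCompact (Set.univ.pi fun _ : InfinitePlace K => Set.Icc (0:ℝ) 1) :=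
    isCompact_univ_pi fun _ => isCompact_Icc
  have hc : ∀ v : InfinitePlace K, Continuous fun x : realSpace K => expMapBasis x v := fun v =>
    (continuous_apply v).comp (continuous_expMapBasis K)
  obtain ⟨M, hM⟩ := hQ.exists_bound_of_continuousOn
    (f := fun x : realSpace K => ∑ v : InfinitePlace K, ∑ w : InfinitePlace K,
      expMapBasis x v / expMapBasis x w)
    (Continuous.continuousOn (by
      refine continuous_finsetSum _ fun v _ => continuous_finsetSum _ fun w _ => ?_
      exact (hc v).div (hc w) fun x => (expMapBasis_pos x w).ne'))
  have hpos : ∀ x : realSpace K, ∀ v w, 0 ≤ expMapBasis x v / expMapBasis x w := fun x v w =>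
    div_nonneg (expMapBasis_nonneg x v) (expMapBasis_nonneg x w)
  refine ⟨M, le_trans (norm_nonneg _) (hM (fun _ => 0) (by intro i _; simp)), ?_⟩
  intro a ha v w
  rw [expMapBasis_apply'' a]
  simp only [Pi.smul_apply, smul_eq_mul]
  set x : realSpace K := fun i => if i = w₀ then 0 else a i with hx
  have hxQ : x ∈ Set.univ.pi fun _ : InfinitePlace K => Set.Icc (0:ℝ) 1 := by
    intro i _
    have := ha i trivial
    simp only [hx]
    split_ifs with h
    · simp
    · simp only [h, if_false] at this
      exact ⟨this.1, this.2.le⟩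
  have h1 := (le_abs_self _).trans (hM x hxQ)
  have h2 : expMapBasis x v / expMapBasis x w ≤ M := by
    refine le_trans ?_ h1
    refine le_trans ?_ (Finset.single_le_sum (f := fun v => ∑ w, expMapBasis x v / expMapBasis x w)
      (fun v _ => Finset.sum_nonneg fun w _ => hpos x v w) (Finset.mem_univ v))
    exact Finset.single_le_sum (f := fun w => expMapBasis x v / expMapBasis x w)
      (fun w _ => hpos x v w) (Finset.mem_univ w)
  rw [div_le_iff₀ (expMapBasis_pos x w)] at h2
  rw [mul_left_comm]
  gcongr

theorem abs_log_sub_log_le {x y c e : ℝ} (hc : 0 < c) (hx : c ≤ x) (hy : c ≤ y) (h : |x - y| ≤ e) :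
    |Real.log x - Real.log y| ≤ e / c := by
  have hx0 : 0 < x := hc.trans_le hx
  have hy0 : 0 < y := hc.trans_le hy
  have aux : ∀ x y : ℝ, c ≤ x → c ≤ y → |x - y| ≤ e → Real.log x - Real.log y ≤ e / c := by
    intro x y hx hy h
    have hx0 : 0 < x := hc.trans_le hx
    have hy0 : 0 < y := hc.trans_le hy
    rw [← Real.log_div hx0.ne' hy0.ne']
    have h1 := Real.log_le_sub_one_of_pos (div_pos hx0 hy0)
    have h2 : x / y - 1 = (x - y) / y := by field_simp
    rw [h2] at h1
    refine h1.trans ?_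
    have he : 0 ≤ e := (abs_nonneg _).trans h
    gcongr
    exact (le_abs_self _).trans h
  rw [abs_le]
  constructor
  · have := aux y x hy hx (by rwa [abs_sub_comm])
    linarith
  · exact aux x y hx hy h

theorem expMapBasis_log_lipschitz (K : Type*) [Field K] [NumberField K] :
    ∃ C : ℝ, 0 < C ∧ ∀ (a b : realSpace K) (c e : ℝ), 0 < c → (∀ w, c ≤ expMapBasis a w) →
      (∀ w, c ≤ expMapBasis b w) → (∀ w, |expMapBasis a w - expMapBasis b w| ≤ e) →
      ∀ i, |a i - b i| ≤ C * (e / c) := by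
  set L : realSpace K →L[ℝ] (InfinitePlace K → ℝ) := ((completeBasis K).equivFunL : realSpace K →L[ℝ] (InfinitePlace K → ℝ)) with hL
  refine ⟨(‖L‖ + 1) * 2, by positivity, ?_⟩
  intro a b c e hc ha hb hab i
  have he : 0 ≤ e := (abs_nonneg _).trans (hab i)
  set a' := (completeBasis K).equivFunL.symm a with ha'
  set b' := (completeBasis K).equivFunL.symm b with hb'
  have hLa : L a' = a := by simp [hL, ha']
  have hLb : L b' = b := by simp [hL, hb']
  have hea : ∀ w, expMapBasis a w = Real.exp ((w.mult : ℝ)⁻¹ * a' w) := fun w => rfl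
  have heb : ∀ w, expMapBasis b w = Real.exp ((w.mult : ℝ)⁻¹ * b' w) := fun w => rfl
  have hd : ‖a' - b'‖ ≤ 2 * (e / c) := by
    rw [pi_norm_le_iff_of_nonneg (by positivity)]
    intro w
    have h1 := abs_log_sub_log_le hc (ha w) (hb w) (hab w)
    rw [hea, heb, Real.log_exp, Real.log_exp, ← mul_sub, abs_mul, abs_of_nonneg (by positivity)] at h1
    have hm : (0:ℝ) < w.mult := by exact_mod_cast w.mult_pos
    have hm2 : (w.mult : ℝ) ≤ 2 := by
      rw [InfinitePlace.mult]; split_ifs <;> norm_num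
    rw [Pi.sub_apply, Real.norm_eq_abs]
    rw [inv_mul_le_iff₀ hm] at h1
    refine h1.trans ?_
    gcongr
  calc |a i - b i| = ‖(L (a' - b')) i‖ := by rw [map_sub, hLa, hLb]; rfl
    _ ≤ ‖L (a' - b')‖ := norm_le_pi_norm _ i
    _ ≤ ‖L‖ * ‖a' - b'‖ := L.le_opNorm _
    _ ≤ (‖L‖ + 1) * (2 * (e / c)) := by gcongr; linarith
    _ = _ := by ring

open scoped Classical in
theorem abs_normAtPlace_sub_le {K : Type*} [Field K] [NumberField K] (x y : mixedSpace K) (w : InfinitePlace K) :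
    |normAtPlace w x - normAtPlace w y| ≤ dist x y := by
  have aux : ∀ x y : mixedSpace K, normAtPlace w x - normAtPlace w y ≤ dist x y := by
    intro x y
    have h1 := normAtPlace_add_le w (x - y) y
    rw [sub_add_cancel] at h1
    have h2 : normAtPlace w (x - y) ≤ ‖x - y‖ := by
      rw [norm_eq_sup'_normAtPlace]
      exact Finset.le_sup' (fun w => normAtPlace w (x - y)) (Finset.mem_univ w)
    rw [dist_eq_norm]; linarith
  rw [abs_le]
  constructor
  · have := aux y x
    rw [dist_comm] at this; linarith
  · exact aux x y

open scoped Classical in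
theorem slab_mem {K : Type*} [Field K] [NumberField K] {a b : realSpace K} {δ : ℝ} (hδ1 : δ ≤ 1)
    (ha : a ∈ paramSet K) (hb : b ∉ paramSet K) (hab : ∀ i, |a i - b i| ≤ δ) :
    ∃ i : InfinitePlace K, ∃ c : ℝ, (c = 0 ∨ c = if i = w₀ then 0 else 1) ∧
      a ∈ Set.univ.pi (slab K i c δ) ∧ b ∈ Set.univ.pi (slab K i c δ) := by
  have hgen : ∀ i c, |a i - c| ≤ δ → |b i - c| ≤ δ → a ∈ Set.univ.pi (slab K i c δ) ∧ b ∈ Set.univ.pi (slab K i c δ) := by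
    intro i c h1 h2
    rw [abs_le] at h1 h2
    constructor
    · intro w _
      have := ha w trivial
      unfold slab
      split_ifs with h h'
      · subst h; constructor <;> linarith
      · simp only [h', if_true, Set.mem_Iic] at this ⊢; linarith
      · simp only [h', if_false, Set.mem_Ico] at this
        constructor <;> linarith
    · intro w _
      have := ha w trivial
      have h3 := abs_le.1 (hab w)
      unfold slab
      split_ifs with h h'
      · subst h; constructor <;> linarith
      · simp only [h', if_true, Set.mem_Iic] at this h3 ⊢; linarith
      · simp only [h', if_false, Set.mem_Ico] at this
        constructor <;> linarith
  simp only [Set.mem_pi, Set.mem_univ, true_implies, not_forall] at hb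
  obtain ⟨i, hi⟩ := hb
  have hai := ha i trivial
  have h3 := abs_le.1 (hab i)
  by_cases h : i = w₀
  · simp only [h, if_true, Set.mem_Iic] at hi hai h3
    refine ⟨i, 0, Or.inl rfl, hgen _ _ ?_ ?_⟩ <;> rw [abs_le] <;> constructor <;> simp only [h] <;> linarith
  · simp only [h, if_false, Set.mem_Ico, not_and_or, not_le, not_lt] at hi hai
    rcases hi with hi | hi
    · refine ⟨i, 0, Or.inl rfl, hgen _ _ ?_ ?_⟩ <;> rw [abs_le] <;> constructor <;> linarith
    · refine ⟨i, 1, Or.inr (by simp [h]), hgen _ _ ?_ ?_⟩ <;> rw [abs_le] <;> constructor <;> linarith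

open scoped Classical in
/-- The boundary of `normLeOne K` is thin. -/
theorem thin_boundary (K : Type*) [Field K] [NumberField K] :
    ∃ C : ℝ, 0 ≤ C ∧ ∃ ε₀ : ℝ, 0 < ε₀ ∧ ∀ ε : ℝ, 0 < ε → ε ≤ ε₀ → ∃ E : Set (mixedSpace K),
      volume E ≤ ENNReal.ofReal (C * √ε) ∧
      ∀ x ∈ normLeOne K, ∀ y ∉ normLeOne K, dist x y ≤ ε → x ∈ E ∧ y ∈ E := by
  obtain ⟨M, hM0, hM⟩ := expMapBasis_comparable K
  obtain ⟨L, hL0, hL⟩ := expMapBasis_log_lipschitz K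
  obtain ⟨D₁, hD₁, hvol⟩ := volume_param K
  obtain ⟨D₂, hD₂, hslab⟩ := lintegral_slab_le K (Module.finrank ℚ K) Module.finrank_pos
  set V : ℝ≥0∞ := volume (Metric.closedBall (0 : mixedSpace K) (M + 1)) with hV
  have hVfin : V ≠ ⊤ := (isCompact_closedBall _ _).measure_lt_top.ne
  set r := Fintype.card (InfinitePlace K) with hr
  set CC : ℝ≥0∞ := V + (r * (D₁ * D₂ * ENNReal.ofReal (2 * L)) + r * (D₁ * D₂ * ENNReal.ofReal (2 * L))) with hCC
  have hCCfin : CC ≠ ⊤ := by rw [hCC]; finiteness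
  refine ⟨CC.toReal, toReal_nonneg, min (1/4) ((1 / (2 * L)) ^ 2), by positivity, ?_⟩
  intro ε hε hε1
  set η := √ε with hη
  have hη0 : 0 < η := Real.sqrt_pos.2 hε
  have hηη : η * η = ε := Real.mul_self_sqrt hε.le
  have hη2 : η ≤ 1 / 2 := by
    rw [hη, Real.sqrt_le_left (by norm_num)]
    refine hε1.trans ((min_le_left _ _).trans (by norm_num))
  have hηL : 2 * L * η ≤ 1 := by
    have : η ≤ 1 / (2 * L) := by
      rw [hη, Real.sqrt_le_left (by positivity)]
      exact hε1.trans (min_le_right _ _)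
    rwa [le_div_iff₀' (by positivity)] at this
  set δ := 2 * L * η with hδ
  have hδ0 : 0 < δ := by positivity
  set G : InfinitePlace K → ℝ → Set (mixedSpace K) := fun i c =>
    normAtAllPlaces ⁻¹' (expMapBasis '' (Set.univ.pi (slab K i c δ))) with hG
  have hGvol : ∀ i c, (i = w₀ → c = 0) → volume (G i c) ≤ D₁ * D₂ * ENNReal.ofReal (2 * L) * ENNReal.ofReal η := by
    intro i c hic
    have hmeas : MeasurableSet (Set.univ.pi (slab K i c δ)) := by
      refine MeasurableSet.univ_pi fun w => ?_
      unfold slab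
      split_ifs
      · exact measurableSet_Icc
      · exact measurableSet_Iic
      · exact measurableSet_Icc
    rw [hG]
    simp only
    rw [hvol _ hmeas, mul_assoc, mul_assoc, ← ENNReal.ofReal_mul (by positivity)]
    gcongr
    exact hslab i c δ hδ0 hηL hic
  refine ⟨Metric.closedBall 0 ((M + 1) * η) ∪ ((⋃ i, G i 0) ∪ ⋃ i, G i (if i = w₀ then 0 else 1)), ?_, ?_⟩
  · rw [ENNReal.ofReal_mul toReal_nonneg, ENNReal.ofReal_toReal hCCfin, hCC, add_mul V, add_mul (_ * _) (_ * _)]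
    refine (measure_union_le _ _).trans (add_le_add ?_ ((measure_union_le _ _).trans (add_le_add ?_ ?_)))
    · have : Metric.closedBall (0 : mixedSpace K) ((M + 1) * η) = η • Metric.closedBall (0 : mixedSpace K) (M + 1) := by
        rw [smul_closedBall _ _ (by positivity), smul_zero, Real.norm_of_nonneg hη0.le, mul_comm]
      rw [this, Measure.addHaar_smul, mul_comm, abs_of_nonneg (by positivity)]
      gcongr
      refine pow_le_of_le_one hη0.le (by linarith) ?_
      rw [mixedEmbedding.finrank]
      exact Module.finrank_pos.ne'
    · refine (measure_iUnion_fintype_le _ _).trans ?_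
      refine (Finset.sum_le_sum fun i _ => hGvol i 0 fun _ => rfl).trans ?_
      rw [Finset.sum_const, nsmul_eq_mul, Finset.card_univ]
      rw [mul_assoc (r : ℝ≥0∞)]
    · refine (measure_iUnion_fintype_le _ _).trans ?_
      refine (Finset.sum_le_sum fun i _ => hGvol i _ fun h => by simp [h]).trans ?_
      rw [Finset.sum_const, nsmul_eq_mul, Finset.card_univ]
      rw [mul_assoc (r : ℝ≥0∞)]
  · intro x hx y hy hxy
    rw [normLeOne_eq_preimage] at hx hy
    obtain ⟨a, ha, hax⟩ := hx
    have hax' : ∀ w, expMapBasis a w = normAtPlace w x := fun w => congrFun hax w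
    have hdiff : ∀ w, |normAtPlace w x - normAtPlace w y| ≤ ε := fun w =>
      (abs_normAtPlace_sub_le x y w).trans hxy
    by_cases hsmall : ∃ w, normAtPlace w x < η
    · obtain ⟨w, hw⟩ := hsmall
      have hxv : ∀ v, normAtPlace v x ≤ M * η := by
        intro v
        have := hM a ha v w
        rw [hax', hax'] at this
        refine this.trans ?_
        gcongr
      have hball : ∀ z : mixedSpace K, (∀ v, normAtPlace v z ≤ (M + 1) * η) → z ∈ Metric.closedBall 0 ((M + 1) * η) := by
        intro z hz
        rw [mem_closedBall_zero_iff, norm_eq_sup'_normAtPlace]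
        exact Finset.sup'_le _ _ fun v _ => hz v
      refine ⟨Or.inl (hball x fun v => (hxv v).trans ?_), Or.inl (hball y fun v => ?_)⟩
      · gcongr; linarith
      · have h1 := (abs_le.1 (hdiff v)).1
        have h2 := hxv v
        nlinarith
    · push Not at hsmall
      have hηε : ε ≤ η / 2 := by nlinarith
      have hyw : ∀ w, η / 2 ≤ normAtPlace w y := by
        intro w
        have h1 := (abs_le.1 (hdiff w)).2
        have h2 := hsmall w
        linarith
      obtain ⟨b, hb⟩ : ∃ b, expMapBasis b = normAtAllPlaces y := by
        refine ⟨expMapBasis.symm (normAtAllPlaces y), expMapBasis.right_inv ?_⟩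
        refine Set.mem_univ_pi.mpr fun w => ?_
        have := hyw w
        change 0 < normAtPlace w y
        linarith
      have hbx' : ∀ w, expMapBasis b w = normAtPlace w y := fun w => congrFun hb w
      have hbP : b ∉ paramSet K := fun h => hy ⟨b, h, hb⟩
      have hab : ∀ i, |a i - b i| ≤ δ := by
        intro i
        refine (hL a b (η/2) ε (by positivity) ?_ ?_ ?_ i).trans (le_of_eq ?_)
        · intro w; rw [hax']; linarith [hsmall w]
        · intro w; rw [hbx']; exact hyw w
        · intro w; rw [hax', hbx']; exact hdiff w
        · rw [hδ, ← hηη]; field_simp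
      obtain ⟨i, c, hc, h1, h2⟩ := slab_mem hηL ha hbP hab
      have hxG : x ∈ G i c := ⟨a, h1, hax⟩
      have hyG : y ∈ G i c := ⟨b, h2, hb⟩
      rcases hc with rfl | rfl
      · exact ⟨Or.inr (Or.inl (Set.mem_iUnion.2 ⟨i, hxG⟩)), Or.inr (Or.inl (Set.mem_iUnion.2 ⟨i, hyG⟩))⟩
      · exact ⟨Or.inr (Or.inr (Set.mem_iUnion.2 ⟨i, hxG⟩)), Or.inr (Or.inr (Set.mem_iUnion.2 ⟨i, hyG⟩))⟩

end HFC
end HFC_A3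

section HFC_A4
open MeasureTheory Module NumberField NumberField.InfinitePlace NumberField.mixedEmbedding
  NumberField.mixedEmbedding.fundamentalCone NumberField.Units NumberField.Units.dirichletUnitTheorem
open scoped nonZeroDivisors
open Filter Topology Asymptotics

namespace HFC

theorem card_class_eq {K : Type*} [Field K] [NumberField K] {C : ClassGroup (𝓞 K)} {J : (Ideal (𝓞 K))⁰} {s : ℝ} (hJ : ClassGroup.mk0 J = C⁻¹) :
    Nat.card {I : (Ideal (𝓞 K))⁰ // Ideal.absNorm (I : Ideal (𝓞 K)) ≤ s ∧ ClassGroup.mk0 I = C}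
      = Nat.card {I : (Ideal (𝓞 K))⁰ // (J : Ideal (𝓞 K)) ∣ I ∧ Submodule.IsPrincipal (I : Ideal (𝓞 K)) ∧
        Ideal.absNorm (I : Ideal (𝓞 K)) ≤ s * Ideal.absNorm (J : Ideal (𝓞 K))} := by
  simp_rw [← nonZeroDivisors_dvd_iff_dvd_coe]
  refine Nat.card_congr ?_
  refine ((Equiv.dvd J).subtypeEquiv fun I ↦ ?_).trans
    (Equiv.subtypeSubtypeEquivSubtypeInter (fun I : (Ideal (𝓞 K))⁰ ↦ J ∣ I) _)
  rw [← ClassGroup.mk0_eq_one_iff (SetLike.coe_mem _)]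
  simp_rw [Equiv.dvd_apply, Submonoid.coe_mul, ← Submonoid.mul_def, _root_.map_mul, hJ,
    inv_mul_eq_one, Nat.cast_mul, mul_comm s, eq_comm, and_comm, and_congr_left_iff]
  exact fun _ ↦
    (mul_le_mul_iff_of_pos_left (Nat.cast_pos.mpr (Ideal.absNorm_pos_of_nonZeroDivisors J))).symm

open scoped Classical in
theorem class_count (K : Type*) [Field K] [NumberField K] (C : ClassGroup (𝓞 K)) :
    ∃ c : ℝ, (fun s : ℝ => (Nat.card {I : (Ideal (𝓞 K))⁰ // Ideal.absNorm (I : Ideal (𝓞 K)) ≤ s ∧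
        ClassGroup.mk0 I = C} : ℝ) - c * s) =O[atTop]
      fun s : ℝ => s ^ (1 - 1 / (2 * (finrank ℚ K : ℝ))) := by
  obtain ⟨J, hJ⟩ := ClassGroup.mk0_surjective C⁻¹
  have hJ0 : (0:ℝ) < ((Ideal.absNorm J.1 : ℕ) : ℝ) := (Nat.cast_pos.mpr (Ideal.absNorm_pos_of_nonZeroDivisors J))
  set nJ : ℝ := ((Ideal.absNorm J.1 : ℕ) : ℝ) with hnJ
  set n := finrank ℚ K with hn
  have hn0 : 0 < n := Module.finrank_pos
  have hn0' : (0:ℝ) < n := Nat.cast_pos.2 hn0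
  have hw0 : (0:ℝ) < torsionOrder K := Nat.cast_pos.mpr (torsionOrder_pos K)
  obtain ⟨D, hD0, ε₀, hε₀, hE⟩ := thin_boundary K
  set b := fractionalIdealLatticeBasis K (FractionalIdeal.mk0 K J) with hb
  set B : ℝ := ∑ i, ‖b i‖ with hB
  have hB0 : 0 < B := by
    have hnt : Nontrivial (mixedSpace K) :=
      Module.nontrivial_of_finrank_pos (R := ℝ) (by rw [mixedEmbedding.finrank]; exact hn0)
    have hne := b.index_nonempty
    refine Finset.sum_pos (fun i _ => norm_pos_iff.2 (b.ne_zero i)) ?_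
    exact Finset.univ_nonempty
  set F : ℝ := volume.real (ZSpan.fundamentalDomain b) with hF
  have hF0 : 0 < F := by
    refine ENNReal.toReal_pos (ZSpan.measure_fundamentalDomain_ne_zero b) ?_
    exact (ZSpan.fundamentalDomain_isBounded b).measure_lt_top.ne
  set V : ℝ := volume.real (normLeOne K) with hV
  refine ⟨nJ * V / (torsionOrder K * F), ?_⟩
  refine IsBigO.of_bound (nJ * D * √ B / (torsionOrder K * F) * nJ ^ (-(1 / (2 * (n : ℝ))))) ?_
  have htend : Tendsto (fun s : ℝ => (s * nJ) ^ (1 / (n : ℝ))) atTop atTop :=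
    (tendsto_rpow_atTop (by positivity)).comp (tendsto_id.atTop_mul_const hJ0)
  filter_upwards [eventually_gt_atTop 0, htend.eventually_ge_atTop (B / ε₀)] with s hs hts
  set t : ℝ := (s * nJ) ^ (1 / (n : ℝ)) with ht
  have ht0 : 0 < t := by positivity
  have htn : t ^ n = s * nJ := by
    rw [ht, one_div, Real.rpow_inv_natCast_pow (by positivity) hn0.ne']
  obtain ⟨E, hEv, hE⟩ := hE (B / t) (by positivity) (by
    rw [div_le_iff₀ ht0]; rwa [div_le_iff₀' hε₀] at hts)
  have key := lattice_count volume b (normLeOne K) (isBounded_normLeOne K) t ht0 E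
    (ne_top_of_le_ne_top ENNReal.ofReal_ne_top hEv) hE
  have hEr : volume.real E ≤ D * √ (B / t) := ENNReal.toReal_le_of_le_ofReal (by positivity) hEv
  rw [mixedEmbedding.finrank, ← hn, htn] at key
  have hcard : (Set.ncard {l : mixedSpace K | l ∈ Submodule.span ℤ (Set.range b) ∧ t⁻¹ • l ∈ normLeOne K} : ℝ) =
      Nat.card {I : (Ideal (𝓞 K))⁰ // Ideal.absNorm (I : Ideal (𝓞 K)) ≤ s ∧ ClassGroup.mk0 I = C} * torsionOrder K := by
    rw [card_class_eq hJ, ← Nat.cast_mul, card_isPrincipal_dvd_norm_le, ← Nat.card_coe_set_eq]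
    congr 1
    refine Nat.card_congr ?_
    refine (Equiv.subtypeEquivProp ?_).trans (Equiv.subtypeSubtypeEquivSubtypeInter _ (fun x : mixedSpace K => mixedEmbedding.norm x ≤ s * nJ)).symm
    ext l
    change (_ ∧ _) ↔ (_ ∧ _)
    rw [mem_normLeOne, smul_mem_iff_mem (inv_ne_zero ht0.ne'), mixedEmbedding.norm_smul,
      abs_of_pos (inv_pos.2 ht0), inv_pow, htn, inv_mul_le_iff₀ (by positivity), mul_one,
      ← SetLike.mem_coe, span_idealLatticeBasis]
    rw [idealSet]
    simp only [Set.mem_inter_iff]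
    tauto
  rw [hcard] at key
  set N : ℝ := (Nat.card {I : (Ideal (𝓞 K))⁰ // Ideal.absNorm (I : Ideal (𝓞 K)) ≤ s ∧ ClassGroup.mk0 I = C} : ℝ)
  have h1 : N - nJ * V / (torsionOrder K * F) * s = (N * torsionOrder K * F - s * nJ * V) / (torsionOrder K * F) := by
    field_simp
  rw [Real.norm_eq_abs, h1, abs_div, abs_of_pos (mul_pos hw0 hF0), div_le_iff₀ (mul_pos hw0 hF0)]
  refine key.trans ?_
  rw [Real.norm_of_nonneg (by positivity)]
  calc s * nJ * volume.real E ≤ s * nJ * (D * √ (B / t)) := by gcongr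
    _ = _ := by
      have h2 : √ (B / t) = √ B * (s ^ (-(1 / (2 * (n:ℝ)))) * nJ ^ (-(1 / (2 * (n : ℝ))))) := by
        rw [Real.sqrt_div hB0.le, div_eq_mul_inv, ht, Real.sqrt_eq_rpow ((s * nJ) ^ (1 / (n:ℝ))), ← Real.rpow_mul (by positivity),
          ← Real.rpow_neg (by positivity), Real.mul_rpow hs.le hJ0.le]
        congr 3 <;> field_simp
      rw [h2, sub_eq_add_neg, Real.rpow_add hs, Real.rpow_one]
      field_simp

theorem ideal_count (K : Type*) [Field K] [NumberField K] :
    (fun s : ℝ => (Nat.card {I : (Ideal (𝓞 K))⁰ // Ideal.absNorm (I : Ideal (𝓞 K)) ≤ s} : ℝ) -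
        ((2 ^ nrRealPlaces K * (2 * Real.pi) ^ nrComplexPlaces K * regulator K * classNumber K) /
            (torsionOrder K * Real.sqrt |discr K|)) * s) =O[atTop]
      fun s : ℝ => s ^ (1 - 1 / (2 * (finrank ℚ K : ℝ))) := by
  classical
  choose c hc using class_count K
  have hn0' : (0:ℝ) < finrank ℚ K := Nat.cast_pos.2 Module.finrank_pos
  have hsum := IsBigO.sum (s := Finset.univ) fun C _ => hc C
  have hsum2 : (fun s : ℝ => (Nat.card {I : (Ideal (𝓞 K))⁰ // Ideal.absNorm (I : Ideal (𝓞 K)) ≤ s} : ℝ) -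
        (∑ C, c C) * s) =O[atTop]
      fun s : ℝ => s ^ (1 - 1 / (2 * (finrank ℚ K : ℝ))) := by
    refine hsum.congr' ?_ EventuallyEq.rfl
    filter_upwards [eventually_ge_atTop 0] with s hs
    rw [Finset.sum_apply, Finset.sum_sub_distrib, ← Finset.sum_mul]
    congr 1
    have : Fintype {I : (Ideal (𝓞 K))⁰ // Ideal.absNorm (I : Ideal (𝓞 K)) ≤ s} := by
      simp_rw [← Nat.le_floor_iff hs]
      refine @Fintype.ofFinite _ (Ideal.finite_setOfPred_absNorm_le₀ ⌊s⌋₊)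
    let e := fun C : ClassGroup (𝓞 K) ↦ Equiv.subtypeSubtypeEquivSubtypeInter
      (fun I : (Ideal (𝓞 K))⁰ ↦ Ideal.absNorm I.1 ≤ s) (fun I ↦ ClassGroup.mk0 I = C)
    simp_rw [← Nat.card_congr (e _), Nat.card_eq_fintype_card, Fintype.subtype_card]
    rw [Fintype.card, Finset.card_eq_sum_card_fiberwise (f := fun I ↦ ClassGroup.mk0 I.1)
      (t := Finset.univ) (fun _ _ ↦ Finset.mem_univ _), Nat.cast_sum]
  have hlim : Tendsto (fun s : ℝ ↦
      (Nat.card {I : (Ideal (𝓞 K))⁰ // Ideal.absNorm (I : Ideal (𝓞 K)) ≤ s} : ℝ) / s) atTop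
          (𝓝 (∑ C, c C)) := by
    have h1 : (fun s : ℝ => s ^ (1 - 1 / (2 * (finrank ℚ K : ℝ)))) =o[atTop] fun s : ℝ => s := by
      refine (isLittleO_iff_tendsto' ?_).2 ?_
      · filter_upwards [eventually_gt_atTop 0] with s hs h using absurd h hs.ne'
      · refine (tendsto_rpow_neg_atTop (y := 1 / (2 * (finrank ℚ K : ℝ))) (by positivity)).congr' ?_
        filter_upwards [eventually_gt_atTop 0] with s hs
        rw [sub_eq_add_neg, Real.rpow_add hs, Real.rpow_one]
        field_simp
    have h2 := (hsum2.trans_isLittleO h1).tendsto_div_nhds_zero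
    have h3 := h2.add_const (∑ C, c C)
    rw [zero_add] at h3
    refine h3.congr' ?_
    filter_upwards [eventually_gt_atTop 0] with s hs
    field_simp
    ring
  rw [tendsto_nhds_unique (NumberField.Ideal.tendsto_norm_le_div_atTop₀ K) hlim]
  exact hsum2

theorem finite_norm_le (K : Type*) [Field K] [NumberField K] (s : ℝ) :
    Finite {I : (Ideal (𝓞 K))⁰ // Ideal.absNorm (I : Ideal (𝓞 K)) ≤ s} := by
  have h : Set.Finite {I : (Ideal (𝓞 K))⁰ | Ideal.absNorm (I : Ideal (𝓞 K)) ≤ ⌊s⌋₊} :=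
    Ideal.finite_setOfPred_absNorm_le₀ ⌊s⌋₊
  refine (h.subset ?_).to_subtype
  intro I hI
  exact Nat.le_floor hI

theorem ideal_count_bound (K : Type*) [Field K] [NumberField K] (κ : ℝ)
    (hκ : κ = ((2 ^ nrRealPlaces K * (2 * Real.pi) ^ nrComplexPlaces K * regulator K * classNumber K) /
            (torsionOrder K * Real.sqrt |discr K|))) (θ : ℝ)
    (hθ : 1 - 1 / (2 * (finrank ℚ K : ℝ)) ≤ θ) (hθ0 : 0 ≤ θ) (hθ1 : θ ≤ 1) :
    ∃ C : ℝ, 0 ≤ C ∧ ∀ y : ℝ, 0 < y →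
      |(Nat.card {I : (Ideal (𝓞 K))⁰ // Ideal.absNorm (I : Ideal (𝓞 K)) ≤ y} : ℝ) - κ * y| ≤ C * y ^ θ := by
  have hO := ideal_count K
  rw [← hκ] at hO
  obtain ⟨c, hc0, hc⟩ := hO.exists_nonneg
  rw [isBigOWith_iff, eventually_atTop] at hc
  obtain ⟨s₁, hs₁⟩ := hc
  set s₀ := max s₁ 1 with hs₀
  have hs01 : 1 ≤ s₀ := le_max_right _ _
  set A : ℝ → ℕ := fun y => Nat.card {I : (Ideal (𝓞 K))⁰ // Ideal.absNorm (I : Ideal (𝓞 K)) ≤ y} with hA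
  have hmono : ∀ y z, y ≤ z → A y ≤ A z := by
    intro y z hyz
    have := finite_norm_le K z
    exact Nat.card_le_card_of_injective (fun I : {I : (Ideal (𝓞 K))⁰ // Ideal.absNorm (I : Ideal (𝓞 K)) ≤ y} =>
      (⟨I.1, I.2.trans hyz⟩ : {I : (Ideal (𝓞 K))⁰ // Ideal.absNorm (I : Ideal (𝓞 K)) ≤ z})) (by
        intro I J h
        exact Subtype.ext (congrArg (fun x => x.1) h))
  refine ⟨c + A s₀ + |κ| * s₀, by positivity, ?_⟩
  intro y hy
  change |(A y : ℝ) - κ * y| ≤ _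
  have hyθ : 0 < y ^ θ := by positivity
  rcases lt_or_ge y 1 with h1 | h1
  · have hA0 : A y = 0 := by
      have : IsEmpty {I : (Ideal (𝓞 K))⁰ // Ideal.absNorm (I : Ideal (𝓞 K)) ≤ y} := by
        refine ⟨fun I => ?_⟩
        have h3 : (1:ℝ) ≤ Ideal.absNorm (I.1 : Ideal (𝓞 K)) := by
          exact_mod_cast Ideal.absNorm_pos_of_nonZeroDivisors I.1
        linarith [I.2]
      exact Nat.card_of_isEmpty
    rw [hA0, Nat.cast_zero, zero_sub, abs_neg, abs_mul, abs_of_pos hy]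
    have h2 : y ≤ y ^ θ := by
      have := Real.rpow_le_rpow_of_exponent_ge hy h1.le hθ1
      rwa [Real.rpow_one] at this
    calc |κ| * y ≤ |κ| * s₀ * y ^ θ := by
          have : |κ| ≤ |κ| * s₀ := le_mul_of_one_le_right (abs_nonneg _) hs01
          gcongr
      _ ≤ _ := by gcongr; linarith [show (0:ℝ) ≤ A s₀ by positivity]
  · have h1θ : 1 ≤ y ^ θ := Real.one_le_rpow h1 hθ0
    rcases le_or_gt s₀ y with h2 | h2
    · have h3 := hs₁ y ((le_max_left _ _).trans h2)
      rw [Real.norm_eq_abs, Real.norm_of_nonneg (by positivity)] at h3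
      calc |(A y : ℝ) - κ * y| ≤ c * y ^ (1 - 1 / (2 * (finrank ℚ K : ℝ))) := h3
        _ ≤ c * y ^ θ := by gcongr
        _ ≤ _ := by
          gcongr
          have : 0 ≤ |κ| * s₀ := by positivity
          linarith [show (0:ℝ) ≤ A s₀ by positivity]
    · have h3 : (A y : ℝ) ≤ A s₀ := by exact_mod_cast hmono y s₀ h2.le
      calc |(A y : ℝ) - κ * y| ≤ |(A y : ℝ)| + |κ * y| := abs_sub _ _
        _ ≤ A s₀ + |κ| * s₀ := by
          rw [abs_mul, abs_of_pos hy, abs_of_nonneg (by positivity)]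
          gcongr
        _ ≤ (c + A s₀ + |κ| * s₀) * 1 := by linarith
        _ ≤ _ := by gcongr

end HFC
end HFC_A4

section HFC_B1
open Filter Topology

namespace HFC

/-- The index set of exponent vectors with prescribed allowed exponents. -/
abbrev Allowed {P : Type*} (E : P → Finset ℕ) : Type _ := {b : P →₀ ℕ // ∀ p, b p ∈ E p}

theorem sum_finsupp_prod {P : Type*} (E : P → Finset ℕ) (hE : ∀ p, 0 ∈ E p) (r : P → ℕ → ℝ)
    (hr0 : ∀ p, r p 0 = 1) (T : Finset P) :
    ∑ b ∈ T.finsupp E, b.prod r = ∏ p ∈ T, ∑ e ∈ E p, r p e := by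
  classical
  rw [Finset.finsupp, Finset.sum_map, Finset.prod_sum]
  refine Finset.sum_congr rfl fun f hf => ?_
  change (Finsupp.indicator T f).prod r = _
  rw [Finsupp.prod_of_support_subset (s := T) _ (Finsupp.support_indicator_subset _ _) _ (fun p _ => hr0 p)]
  rw [← Finset.prod_attach]
  refine Finset.prod_congr rfl fun p _ => ?_
  simp [Finsupp.indicator_of_mem]

theorem euler_hasSum {P : Type*} (E : P → Finset ℕ) (hE : ∀ p, 0 ∈ E p) (r : P → ℕ → ℝ)
    (hr0 : ∀ p, r p 0 = 1) (hr : ∀ p e, 0 ≤ r p e)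
    (hs : Summable fun p => (∑ e ∈ E p, r p e) - 1) :
    Multipliable (fun p => ∑ e ∈ E p, r p e) ∧
    HasSum (fun b : Allowed E => b.1.prod r) (∏' p, ∑ e ∈ E p, r p e) := by
  classical
  have h1 : ∀ p, 1 ≤ ∑ e ∈ E p, r p e := fun p => by
    rw [← hr0 p]
    exact Finset.single_le_sum (f := r p) (fun e _ => hr p e) (hE p)
  have hm : Multipliable (fun p => ∑ e ∈ E p, r p e) := by
    have := Real.multipliable_one_add_of_summable hs
    simpa using this
  refine ⟨hm, ?_⟩
  have hmono : Monotone fun T : Finset P => ∏ p ∈ T, ∑ e ∈ E p, r p e := by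
    intro T T' h
    exact Finset.prod_le_prod_of_subset_of_one_le h (fun p _ => zero_le_one.trans (h1 p)) fun p _ _ => h1 p
  have hle : ∀ T : Finset P, ∏ p ∈ T, ∑ e ∈ E p, r p e ≤ ∏' p, ∑ e ∈ E p, r p e :=
    fun T => hmono.ge_of_tendsto hm.hasProd T
  have hpos : ∀ b : P →₀ ℕ, 0 ≤ b.prod r := fun b => Finset.prod_nonneg fun p _ => hr p _
  refine hasSum_of_isLUB_of_nonneg _ (fun b => hpos b.1) ⟨?_, ?_⟩
  · rintro _ ⟨U, rfl⟩
    set T : Finset P := U.biUnion fun b => b.1.support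
    refine le_trans ?_ (hle T)
    beta_reduce
    rw [← sum_finsupp_prod E hE r hr0, ← Finset.sum_image (f := fun b : P →₀ ℕ => b.prod r) (g := fun b : Allowed E => b.1)
      (fun a _ b _ hab => Subtype.ext hab)]
    refine Finset.sum_le_sum_of_subset_of_nonneg ?_ fun b _ _ => hpos b
    intro b hb
    obtain ⟨c, hc, rfl⟩ := Finset.mem_image.1 hb
    rw [Finset.mem_finsupp_iff]
    exact ⟨Finset.subset_biUnion_of_mem (fun b : Allowed E => b.1.support) hc, fun p _ => c.2 p⟩
  · intro c hc
    refine le_of_tendsto' hm.hasProd fun T => ?_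
    rw [← sum_finsupp_prod E hE r hr0]
    have hmem : ∀ b ∈ T.finsupp E, ∀ p, b p ∈ E p := by
      intro b hb p
      rw [Finset.mem_finsupp_iff] at hb
      by_cases hp : p ∈ T
      · exact hb.2 p hp
      · have : b p = 0 := by
          by_contra h
          exact hp (hb.1 (Finsupp.mem_support_iff.2 h))
        rw [this]; exact hE p
    have := hc ⟨(T.finsupp E).attach.image (fun b => (⟨b.1, hmem b.1 b.2⟩ : Allowed E)), rfl⟩
    refine le_trans (le_of_eq ?_) this
    beta_reduce
    rw [Finset.sum_image]
    · exact (Finset.sum_attach (T.finsupp E) (fun b => b.prod r)).symm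
    · intro a _ b _ hab
      exact Subtype.ext (congrArg (fun z : Allowed E => z.1) hab)

theorem summable_of_count {X : Type*} (ν : X → ℕ) (hν : ∀ x, 1 ≤ ν x)
    (hfin : ∀ n : ℕ, Finite {x // ν x ≤ n}) (C : ℝ)
    (hC : ∀ n : ℕ, (Nat.card {x // ν x ≤ n} : ℝ) ≤ C * n) (σ : ℝ) (hσ : 1 < σ) :
    Summable fun x => (ν x : ℝ) ^ (-σ) := by
  classical
  have hfin' : ∀ n : ℕ, Finite {x // ν x = n} := fun n =>
    Finite.of_injective (fun x : {x // ν x = n} => (⟨x.1, x.2.le⟩ : {x // ν x ≤ n})) (by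
      intro x y h
      exact Subtype.ext (congrArg (fun z : {x // ν x ≤ n} => z.1) h))
  have hsumcard : ∀ n : ℕ, ∑ k ∈ Finset.Icc 1 n, Nat.card {x // ν x = k} = Nat.card {x // ν x ≤ n} := by
    intro n
    have : Fintype {x // ν x ≤ n} := Fintype.ofFinite _
    rw [Nat.card_eq_fintype_card, Fintype.card, Finset.card_eq_sum_card_fiberwise (f := fun x => ν x.1)
      (t := Finset.Icc 1 n) (fun x _ => by simpa using ⟨hν x.1, x.2⟩)]
    refine Finset.sum_congr rfl fun k hk => ?_
    have hk := (Finset.mem_Icc.1 hk).2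
    rw [← Fintype.card_subtype, ← Nat.card_eq_fintype_card]
    exact Nat.card_congr (Equiv.subtypeSubtypeEquivSubtype (p := fun x => ν x ≤ n) (q := fun x => ν x = k) (fun {x} h => h.le.trans hk)).symm
  have hL : LSeriesSummable (fun n => ((Nat.card {x // ν x = n} : ℕ) : ℂ)) (σ : ℂ) := by
    refine LSeriesSummable_of_sum_norm_bigO (r := 1) ?_ zero_le_one (by simpa using hσ)
    refine Asymptotics.IsBigO.of_bound C (Eventually.of_forall fun n => ?_)
    simp only [Complex.norm_natCast, Real.rpow_one]
    rw [← Nat.cast_sum, hsumcard]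
    simpa using hC n
  have hs : Summable fun n : ℕ => (Nat.card {x // ν x = n} : ℝ) * (n : ℝ) ^ (-σ) := by
    refine hL.norm.congr fun n => ?_
    rw [LSeries.norm_term_eq]
    split_ifs with h
    · subst h
      have : IsEmpty {x // ν x = 0} := ⟨fun x => by have := hν x.1; omega⟩
      simp
    · rw [Real.rpow_neg (by positivity)]
      simp [div_eq_mul_inv]
  have hsig : Summable fun z : (Σ n, {x // ν x = n}) => (ν z.2.1 : ℝ) ^ (-σ) := by
    rw [summable_sigma_of_nonneg (fun z => by positivity)]
    refine ⟨fun n => ?_, hs.congr fun n => ?_⟩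
    · have := hfin' n
      have : Fintype {x // ν x = n} := Fintype.ofFinite _
      exact (hasSum_fintype _).summable
    · have := hfin' n
      have : Fintype {x // ν x = n} := Fintype.ofFinite _
      rw [tsum_fintype, Finset.sum_congr rfl (g := fun _ => (n:ℝ) ^ (-σ)) (fun x _ => by simp only [x.2])]
      simp [Nat.card_eq_fintype_card]
  exact (Equiv.sigmaFiberEquiv ν).summable_iff.1 hsig

end HFC
end HFC_B1

section HFC_B2
open Filter Topology

namespace HFC

/-- The norm attached to an exponent vector. -/
def nrm {P : Type*} (q : P → ℕ) (f : P →₀ ℕ) : ℕ := f.prod fun p k => q p ^ k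

theorem nrm_add {P : Type*} (q : P → ℕ) (f g : P →₀ ℕ) : nrm q (f + g) = nrm q f * nrm q g :=
  Finsupp.prod_add_index' (fun p => pow_zero _) (fun p a b => pow_add _ _ _)

theorem nrm_nsmul {P : Type*} (q : P → ℕ) (n : ℕ) (f : P →₀ ℕ) : nrm q (n • f) = nrm q f ^ n := by
  induction n with
  | zero => simp [nrm]
  | succ n ih => rw [succ_nsmul, nrm_add, ih, pow_succ]

theorem nrm_pos {P : Type*} (q : P → ℕ) (hq : ∀ p, 2 ≤ q p) (f : P →₀ ℕ) : 0 < nrm q f :=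
  Finset.prod_pos fun p _ => pow_pos (by have := hq p; omega) _

/-- The indicator exponent vector of a finite set. -/
noncomputable def ind {P : Type*} (S : Finset P) : P →₀ ℕ := Finsupp.indicator S fun _ _ => 1

open Classical in
theorem ind_apply {P : Type*} (S : Finset P) (p : P) : ind S p = if p ∈ S then 1 else 0 := by
  simp [ind, Finsupp.indicator_apply]

theorem nrm_ind {P : Type*} (q : P → ℕ) (S : Finset P) : nrm q (ind S) = ∏ p ∈ S, q p := by
  classical
  have hs : (ind S).support ⊆ S := by
    unfold ind
    exact Finsupp.support_indicator_subset _ _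
  rw [nrm, Finsupp.prod_of_support_subset _ hs _ (fun p _ => pow_zero _)]
  refine Finset.prod_congr rfl fun p hp => ?_
  rw [ind_apply, if_pos hp, pow_one]

open Classical in
/-- Allowed exponents in the complementary factor. -/
noncomputable def Ex {P : Type*} (h : ℕ) (S : Finset P) (p : P) : Finset ℕ :=
  if p ∈ S then Finset.range h else insert 0 (Finset.Ico (h + 1) (2 * h))

theorem zero_mem_Ex {P : Type*} (h : ℕ) (hh : 2 ≤ h) (S : Finset P) (p : P) : 0 ∈ Ex h S p := by
  unfold Ex
  split_ifs
  · simp; omega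
  · simp

theorem coord_unique {P : Type*} (h : ℕ) (hh : 2 ≤ h) (S : Finset P) (p : P) {a a' e e' : ℕ}
    (he : e ∈ Ex h S p) (he' : e' ∈ Ex h S p) (H : h * a + e = h * a' + e') : a = a' ∧ e = e' := by
  have hmod : e % h = e' % h := by
    have := congrArg (· % h) H
    simpa [Nat.mul_add_mod] using this
  have hee : e = e' := by
    unfold Ex at he he'
    split_ifs at he he' with hp
    · rw [Finset.mem_range] at he he'
      rwa [Nat.mod_eq_of_lt he, Nat.mod_eq_of_lt he'] at hmod
    · have key : ∀ e, e ∈ insert 0 (Finset.Ico (h + 1) (2 * h)) → e = 0 ∧ e % h = 0 ∨ e = h + e % h ∧ e % h ≠ 0 := by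
        intro e he
        rw [Finset.mem_insert, Finset.mem_Ico] at he
        rcases he with rfl | he
        · simp
        · right
          have h1 : e % h = e - h := by
            rw [Nat.mod_eq_sub_mod (by omega), Nat.mod_eq_of_lt (by omega)]
          omega
      rcases key e he with h1 | h1 <;> rcases key e' he' with h2 | h2 <;> omega
  refine ⟨?_, hee⟩
  subst hee
  exact Nat.eq_of_mul_eq_mul_left (by omega) (Nat.add_right_cancel H)

theorem coord_exists {P : Type*} (h : ℕ) (hh : 2 ≤ h) (S : Finset P) (p : P) (k : ℕ)
    (h1 : k ≠ 0 → h ≤ k) (h2 : p ∈ S → k ≠ 0) :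
    ∃ a e, e ∈ Ex h S p ∧ k = h * a + (h * ind S p + e) := by
  classical
  rw [ind_apply]
  unfold Ex
  have hd := Nat.div_add_mod k h
  have hlt := Nat.mod_lt k (show 0 < h by omega)
  split_ifs with hp
  · have h3 := h1 (h2 hp)
    have h4 : 1 ≤ k / h := (Nat.one_le_div_iff (by omega)).2 h3
    obtain ⟨j, hj⟩ := Nat.exists_eq_add_of_le h4
    refine ⟨j, k % h, by simpa using hlt, ?_⟩
    rw [hj, mul_add] at hd
    omega
  · by_cases h0 : k % h = 0
    · refine ⟨k / h, 0, by simp, by omega⟩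
    · have h3 := h1 (by rintro rfl; simp at h0)
      have h4 : 1 ≤ k / h := (Nat.one_le_div_iff (by omega)).2 h3
      obtain ⟨j, hj⟩ := Nat.exists_eq_add_of_le h4
      refine ⟨j, h + k % h, by simp; omega, ?_⟩
      rw [hj, mul_add] at hd
      omega

/-- The decomposition map. -/
noncomputable def comb {P : Type*} (h : ℕ) (S : Finset P) (a b : P →₀ ℕ) : P →₀ ℕ := h • a + (h • ind S + b)

theorem comb_inj {P : Type*} (h : ℕ) (hh : 2 ≤ h) (S : Finset P) {a a' : P →₀ ℕ}
    {b b' : Allowed (Ex h S)} (H : comb h S a b.1 = comb h S a' b'.1) : a = a' ∧ b = b' := by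
  have key : ∀ p, a p = a' p ∧ b.1 p = b'.1 p := by
    intro p
    have := DFunLike.congr_fun H p
    simp only [comb, Finsupp.add_apply, Finsupp.smul_apply, smul_eq_mul] at this
    exact coord_unique h hh S p (b.2 p) (b'.2 p) (by omega)
  exact ⟨Finsupp.ext fun p => (key p).1, Subtype.ext (Finsupp.ext fun p => (key p).2)⟩

theorem comb_surj {P : Type*} (h : ℕ) (hh : 2 ≤ h) (S : Finset P) (f : P →₀ ℕ)
    (h1 : ∀ p, f p ≠ 0 → h ≤ f p) (h2 : ∀ p ∈ S, f p ≠ 0) :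
    ∃ (a : P →₀ ℕ) (b : Allowed (Ex h S)), comb h S a b.1 = f := by
  choose a e he hae using fun p => coord_exists h hh S p (f p) (h1 p) (h2 p)
  refine ⟨Finsupp.onFinset f.support a ?_, ⟨Finsupp.onFinset f.support e ?_, ?_⟩, ?_⟩
  · intro p hp
    rw [Finsupp.mem_support_iff, hae p]
    have : 0 < h * a p := Nat.mul_pos (by omega) (Nat.pos_of_ne_zero hp)
    omega
  · intro p hp
    rw [Finsupp.mem_support_iff, hae p]
    omega
  · intro p; exact he p
  · ext p
    simp only [comb, Finsupp.add_apply, Finsupp.smul_apply, smul_eq_mul, Finsupp.onFinset_apply]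
    exact (hae p).symm

theorem comb_prop {P : Type*} (h : ℕ) (hh : 2 ≤ h) (S : Finset P) (a : P →₀ ℕ) (b : Allowed (Ex h S)) :
    (∀ p, comb h S a b.1 p ≠ 0 → h ≤ comb h S a b.1 p) ∧ ∀ p ∈ S, comb h S a b.1 p ≠ 0 := by
  classical
  simp only [comb, Finsupp.add_apply, Finsupp.smul_apply, smul_eq_mul]
  constructor
  · intro p
    rcases Nat.eq_zero_or_pos (a p) with h0 | h0
    · rw [h0, ind_apply]
      have := b.2 p
      unfold Ex at this
      split_ifs at this ⊢ with hp
      · omega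
      · simp only [Finset.mem_insert, Finset.mem_Ico] at this
        omega
    · have : h * 1 ≤ h * a p := Nat.mul_le_mul_left _ h0
      omega
  · intro p hp
    rw [ind_apply, if_pos hp]
    omega

theorem nrm_comb {P : Type*} (q : P → ℕ) (h : ℕ) (S : Finset P) (a b : P →₀ ℕ) :
    nrm q (comb h S a b) = nrm q a ^ h * ((∏ p ∈ S, q p) ^ h * nrm q b) := by
  rw [comb, nrm_add, nrm_add, nrm_nsmul, nrm_nsmul, nrm_ind]

theorem prod_rpow_eq {P : Type*} (q : P → ℕ) (s : ℝ) (b : P →₀ ℕ) :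
    (b.prod fun p e => ((q p : ℝ) ^ (-s)) ^ e) = (nrm q b : ℝ) ^ (-s) := by
  rw [nrm, Finsupp.prod, Finsupp.prod, Nat.cast_prod, ← Real.finsetProd_rpow _ _ (fun p _ => by positivity)]
  refine Finset.prod_congr rfl fun p _ => ?_
  rw [Nat.cast_pow, ← Real.rpow_natCast, ← Real.rpow_natCast, ← Real.rpow_mul (by positivity), ← Real.rpow_mul (by positivity),
    mul_comm]

theorem abstract_count {P : Type*} (q : P → ℕ) (hq : ∀ p, 2 ≤ q p) (h : ℕ) (hh : 2 ≤ h)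
    (κ C θ : ℝ) (hfin : ∀ y : ℝ, Finite {a : P →₀ ℕ // (nrm q a : ℝ) ≤ y})
    (hA : ∀ y : ℝ, 0 < y → |(Nat.card {a : P →₀ ℕ // (nrm q a : ℝ) ≤ y} : ℝ) - κ * y| ≤ C * y ^ θ)
    (S : Finset P) (Z₁ Z₂ : ℝ)
    (hZ₁ : HasSum (fun b : Allowed (Ex h S) => (nrm q b.1 : ℝ) ^ (-(1 / (h:ℝ)))) Z₁)
    (hZ₂ : HasSum (fun b : Allowed (Ex h S) => (nrm q b.1 : ℝ) ^ (-(θ / (h:ℝ)))) Z₂)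
    (x : ℝ) (hx : 0 < x) :
    |(Nat.card {f : P →₀ ℕ // (∀ p, f p ≠ 0 → h ≤ f p) ∧ (∀ p ∈ S, f p ≠ 0) ∧ (nrm q f : ℝ) ≤ x} : ℝ) -
      κ * (x ^ (1 / (h:ℝ)) * ((∏ p ∈ S, q p : ℕ) : ℝ)⁻¹ * Z₁)| ≤
      C * (x ^ (θ / h) * (((∏ p ∈ S, q p : ℕ) : ℝ) ^ θ)⁻¹ * Z₂) := by
  classical
  set Q : ℝ := ((∏ p ∈ S, q p : ℕ) : ℝ) with hQ
  have hh0 : (0:ℝ) < h := by positivity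
  have hQ0 : 0 < Q := by
    rw [hQ]; exact_mod_cast Finset.prod_pos fun p _ => by have := hq p; omega
  have hn0 : ∀ a : P →₀ ℕ, (0:ℝ) < nrm q a := fun a => by exact_mod_cast nrm_pos q hq a
  set y : Allowed (Ex h S) → ℝ := fun b => x ^ (1 / (h:ℝ)) * Q⁻¹ * (nrm q b.1 : ℝ) ^ (-(1 / (h:ℝ))) with hy
  have hy0 : ∀ b, 0 < y b := fun b => by have := hn0 b.1; simp only [hy]; positivity
  have hyh : ∀ b, y b ^ h = x / (Q ^ h * nrm q b.1) := by
    intro b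
    have := hn0 b.1
    simp only [hy]
    rw [mul_pow, mul_pow, Real.rpow_neg this.le, inv_pow, inv_pow, one_div,
      Real.rpow_inv_natCast_pow hx.le (by omega), Real.rpow_inv_natCast_pow this.le (by omega)]
    field_simp
  have hcond : ∀ (b : Allowed (Ex h S)) (a : P →₀ ℕ), (nrm q (comb h S a b.1) : ℝ) ≤ x ↔ (nrm q a : ℝ) ≤ y b := by
    intro b a
    have := hn0 b.1
    rw [← pow_le_pow_iff_left₀ (hn0 a).le (hy0 b).le (show h ≠ 0 by omega), hyh, le_div_iff₀ (by positivity), nrm_comb]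
    push_cast
    rw [hQ]; push_cast
    rfl
  set T := {f : P →₀ ℕ // (∀ p, f p ≠ 0 → h ≤ f p) ∧ (∀ p ∈ S, f p ≠ 0) ∧ (nrm q f : ℝ) ≤ x} with hT
  have hTfin : Finite T := by
    have := hfin x
    refine Finite.of_injective (fun f : T => (⟨f.1, f.2.2.2⟩ : {a : P →₀ ℕ // (nrm q a : ℝ) ≤ x})) ?_
    intro f g hfg
    exact Subtype.ext (congrArg (fun z : {a : P →₀ ℕ // (nrm q a : ℝ) ≤ x} => z.1) hfg)
  let φ : (Σ b : Allowed (Ex h S), {a : P →₀ ℕ // (nrm q a : ℝ) ≤ y b}) → T := fun z =>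
    ⟨comb h S z.2.1 z.1.1, (comb_prop h hh S z.2.1 z.1).1, (comb_prop h hh S z.2.1 z.1).2, (hcond z.1 z.2.1).2 z.2.2⟩
  have hφ : Function.Bijective φ := by
    constructor
    · rintro ⟨b, a, ha⟩ ⟨b', a', ha'⟩ H
      obtain ⟨rfl, rfl⟩ := comb_inj h hh S (congrArg (fun z : T => z.1) H)
      rfl
    · rintro ⟨f, h1, h2, h3⟩
      obtain ⟨a, b, rfl⟩ := comb_surj h hh S f h1 h2
      exact ⟨⟨b, a, (hcond b a).1 h3⟩, rfl⟩
  have hsum : HasSum (fun b => (Nat.card {a : P →₀ ℕ // (nrm q a : ℝ) ≤ y b} : ℝ)) (Nat.card T : ℝ) := by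
    have : Finite (Σ b : Allowed (Ex h S), {a : P →₀ ℕ // (nrm q a : ℝ) ≤ y b}) := Finite.of_injective φ hφ.1
    have : Fintype (Σ b : Allowed (Ex h S), {a : P →₀ ℕ // (nrm q a : ℝ) ≤ y b}) := Fintype.ofFinite _
    rw [← Nat.card_congr (Equiv.ofBijective φ hφ)]
    have h1 := hasSum_fintype (fun _ : (Σ b : Allowed (Ex h S), {a : P →₀ ℕ // (nrm q a : ℝ) ≤ y b}) => (1:ℝ))
    rw [Finset.sum_const, nsmul_eq_mul, mul_one, Finset.card_univ, ← Nat.card_eq_fintype_card] at h1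
    refine h1.sigma fun b => ?_
    have := hfin (y b)
    have : Fintype {a : P →₀ ℕ // (nrm q a : ℝ) ≤ y b} := Fintype.ofFinite _
    have h2 := hasSum_fintype (fun _ : {a : P →₀ ℕ // (nrm q a : ℝ) ≤ y b} => (1:ℝ))
    rwa [Finset.sum_const, nsmul_eq_mul, mul_one, Finset.card_univ, ← Nat.card_eq_fintype_card] at h2
  have hsum2 := hsum.sub ((hZ₁.mul_left (x ^ (1 / (h:ℝ)) * Q⁻¹)).mul_left κ)
  have hsum3 := (hZ₂.mul_left (x ^ (θ / (h:ℝ)) * (Q ^ θ)⁻¹)).mul_left C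
  rw [← Real.norm_eq_abs, ← hsum2.tsum_eq]
  refine tsum_of_norm_bounded (E := ℝ) hsum3 (fun b => ?_)
  rw [Real.norm_eq_abs]
  refine (hA (y b) (hy0 b)).trans (le_of_eq ?_)
  have := hn0 b.1
  simp only [hy]
  rw [Real.mul_rpow (by positivity) (by positivity), Real.mul_rpow (by positivity) (by positivity),
    ← Real.rpow_mul hx.le, ← Real.rpow_mul this.le, Real.inv_rpow hQ0.le]
  congr 4 <;> ring

end HFC
end HFC_B2

section HFC_B3
open Filter Topology

namespace HFC

/-- Euler factor of the complementary factor at a generic prime. -/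
noncomputable def F (h : ℕ) (w : ℝ) : ℝ := 1 + ∑ e ∈ Finset.Ico (h + 1) (2 * h), w ^ e

/-- Euler factor at a prescribed prime. -/
noncomputable def F' (h : ℕ) (w : ℝ) : ℝ := ∑ e ∈ Finset.range h, w ^ e

theorem F_ge_one (h : ℕ) (w : ℝ) (hw : 0 ≤ w) : 1 ≤ F h w := by
  unfold F
  have : 0 ≤ ∑ e ∈ Finset.Ico (h + 1) (2 * h), w ^ e := Finset.sum_nonneg fun e _ => by positivity
  linarith

theorem F'_nonneg (h : ℕ) (w : ℝ) (hw : 0 ≤ w) : 0 ≤ F' h w :=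
  Finset.sum_nonneg fun e _ => by positivity

theorem F'_le (h : ℕ) (w : ℝ) (hw : 0 ≤ w) (hw1 : w ≤ 1) : F' h w ≤ h := by
  unfold F'
  calc _ ≤ ∑ e ∈ Finset.range h, (1:ℝ) := Finset.sum_le_sum fun e _ => pow_le_one₀ hw hw1
    _ = h := by simp

theorem F_sub_one_le (h : ℕ) (w : ℝ) (hw : 0 ≤ w) (hw1 : w ≤ 1) : F h w - 1 ≤ h * w ^ (h + 1) := by
  unfold F
  have : ∑ e ∈ Finset.Ico (h + 1) (2 * h), w ^ e ≤ ∑ e ∈ Finset.Ico (h + 1) (2 * h), w ^ (h + 1) :=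
    Finset.sum_le_sum fun e he => pow_le_pow_of_le_one hw hw1 (Finset.mem_Ico.1 he).1
  rw [Finset.sum_const, Nat.card_Ico, nsmul_eq_mul] at this
  have h2 : ((2 * h - (h + 1) : ℕ) : ℝ) ≤ h := by exact_mod_cast (by omega : 2 * h - (h + 1) ≤ h)
  have h3 : ((2 * h - (h + 1) : ℕ) : ℝ) * w ^ (h + 1) ≤ h * w ^ (h + 1) :=
    mul_le_mul_of_nonneg_right h2 (by positivity)
  linarith

theorem F'_mul (h : ℕ) (hh : 2 ≤ h) (w : ℝ) : F' h w * (1 - w + w ^ h) = F h w := by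
  unfold F F'
  have h1 : (∑ e ∈ Finset.range h, w ^ e) * (1 - w) = 1 - w ^ h := by
    have := geom_sum_mul w h
    linarith
  have h2 : (∑ e ∈ Finset.range h, w ^ e) * w ^ h = w ^ h + ∑ e ∈ Finset.Ico (h + 1) (2 * h), w ^ e := by
    rw [← Finset.sum_eq_sum_Ico_succ_bot (by omega) (fun e => w ^ e), Finset.sum_Ico_eq_sum_range, Finset.sum_mul]
    rw [show 2 * h - h = h by omega]
    exact Finset.sum_congr rfl fun e _ => by rw [pow_add, mul_comm]
  rw [mul_add, h1, h2]
  ring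

theorem F_eq (h : ℕ) (hh : 2 ≤ h) (v : ℝ) (hv : 1 < v) :
    F h v⁻¹ = 1 + (v ^ h - v) / ((v ^ h) ^ 2 * (v - 1)) := by
  unfold F
  have hv0 : v ≠ 0 := by positivity
  have hv1 : v - 1 ≠ 0 := by linarith
  have hw1 : v⁻¹ ≠ 1 := by
    intro H
    rw [inv_eq_one] at H
    linarith
  rw [geom_sum_Ico hw1 (by omega)]
  congr 1
  have hw2 : v⁻¹ - 1 ≠ 0 := sub_ne_zero.2 hw1
  rw [div_eq_div_iff hw2 (by positivity)]
  rw [pow_succ, two_mul, pow_add]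
  simp only [inv_pow]
  field_simp
  ring

theorem sum_Ex {P : Type*} [DecidableEq P] (h : ℕ) (S : Finset P) (p : P) (w : ℝ) :
    ∑ e ∈ Ex h S p, w ^ e = if p ∈ S then F' h w else F h w := by
  unfold Ex F F'
  split_ifs with hp
  · rfl
  · rw [Finset.sum_insert (by simp)]
    simp

theorem euler_Z {P : Type*} (q : P → ℕ) (hq : ∀ p, 2 ≤ q p) (h : ℕ) (hh : 2 ≤ h) (s : ℝ) (hs : 0 ≤ s)
    (hsum : Summable fun p => (q p : ℝ) ^ (-(s * ((h:ℝ) + 1)))) (S : Finset P) :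
    HasSum (fun b : Allowed (Ex h S) => (nrm q b.1 : ℝ) ^ (-s))
      ((∏ p ∈ S, F' h ((q p : ℝ) ^ (-s)) / F h ((q p : ℝ) ^ (-s))) * ∏' p, F h ((q p : ℝ) ^ (-s))) := by
  classical
  have hw0 : ∀ p, 0 ≤ (q p : ℝ) ^ (-s) := fun p => by positivity
  have hw1 : ∀ p, (q p : ℝ) ^ (-s) ≤ 1 := fun p =>
    Real.rpow_le_one_of_one_le_of_nonpos (by have := hq p; exact_mod_cast (by omega : 1 ≤ q p)) (by linarith)
  have hFs : Summable fun p => F h ((q p : ℝ) ^ (-s)) - 1 := by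
    refine Summable.of_nonneg_of_le (fun p => ?_) (fun p => F_sub_one_le h _ (hw0 p) (hw1 p)) ?_
    · have := F_ge_one h _ (hw0 p); linarith
    · refine Summable.mul_left _ (hsum.congr fun p => ?_)
      rw [← Real.rpow_natCast, ← Real.rpow_mul (by positivity)]
      congr 1
      push_cast
      ring
  have hmain : ∀ S : Finset P, Summable fun p => (∑ e ∈ Ex h S p, ((q p : ℝ) ^ (-s)) ^ e) - 1 := by
    intro S
    have h1 : Summable fun p => if p ∈ S then F' h ((q p : ℝ) ^ (-s)) - F h ((q p : ℝ) ^ (-s)) else 0 :=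
      summable_of_ne_finset_zero (s := S) fun p hp => if_neg hp
    refine (hFs.add h1).congr fun p => ?_
    rw [sum_Ex]
    split_ifs <;> ring
  have hE := fun S : Finset P => euler_hasSum (Ex h S) (zero_mem_Ex h hh S) (fun p e => ((q p : ℝ) ^ (-s)) ^ e)
    (fun p => pow_zero _) (fun p e => by positivity) (hmain S)
  have hS := (hE S).2
  have h0 := (hE ∅).1.hasProd
  simp only [sum_Ex, Finset.notMem_empty, if_false] at h0
  have hρ : HasProd (fun p => if p ∈ S then F' h ((q p : ℝ) ^ (-s)) / F h ((q p : ℝ) ^ (-s)) else 1)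
      (∏ p ∈ S, F' h ((q p : ℝ) ^ (-s)) / F h ((q p : ℝ) ^ (-s))) := by
    have := hasProd_prod_of_ne_finset_one (L := SummationFilter.unconditional P) (s := S)
      (f := fun p => if p ∈ S then F' h ((q p : ℝ) ^ (-s)) / F h ((q p : ℝ) ^ (-s)) else 1) (fun p hp => if_neg hp)
    rwa [Finset.prod_congr rfl fun p hp => if_pos hp] at this
  have hmul := (hρ.mul h0).tprod_eq
  have hcongr : (fun p => ∑ e ∈ Ex h S p, ((q p : ℝ) ^ (-s)) ^ e) = fun p =>
      (if p ∈ S then F' h ((q p : ℝ) ^ (-s)) / F h ((q p : ℝ) ^ (-s)) else 1) * F h ((q p : ℝ) ^ (-s)) := by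
    funext p
    have := F_ge_one h _ (hw0 p)
    rw [sum_Ex]
    split_ifs
    · field_simp
    · rw [one_mul]
  rw [hcongr, hmul] at hS
  simpa only [prod_rpow_eq] using hS

theorem ratio_prod_le {P : Type*} (q : P → ℕ) (hq : ∀ p, 2 ≤ q p) (h : ℕ) (s : ℝ) (hs : 0 ≤ s) (S : Finset P) :
    (∏ p ∈ S, F' h ((q p : ℝ) ^ (-s)) / F h ((q p : ℝ) ^ (-s))) ≤ (h:ℝ) ^ S.card := by
  have hw0 : ∀ p, 0 ≤ (q p : ℝ) ^ (-s) := fun p => by positivity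
  have hw1 : ∀ p, (q p : ℝ) ^ (-s) ≤ 1 := fun p =>
    Real.rpow_le_one_of_one_le_of_nonpos (by have := hq p; exact_mod_cast (by omega : 1 ≤ q p)) (by linarith)
  rw [← Finset.prod_const]
  refine Finset.prod_le_prod (fun p _ => ?_) fun p _ => ?_
  · exact div_nonneg (F'_nonneg _ _ (hw0 p)) (by linarith [F_ge_one h _ (hw0 p)])
  · exact (div_le_self (F'_nonneg _ _ (hw0 p)) (F_ge_one h _ (hw0 p))).trans (F'_le h _ (hw0 p) (hw1 p))

theorem tprod_F_nonneg {P : Type*} (q : P → ℕ) (hq : ∀ p, 2 ≤ q p) (h : ℕ) (hh : 2 ≤ h) (s : ℝ) (hs : 0 ≤ s)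
    (hsum : Summable fun p => (q p : ℝ) ^ (-(s * ((h:ℝ) + 1)))) :
    0 ≤ ∏' p, F h ((q p : ℝ) ^ (-s)) := by
  have := (euler_Z q hq h hh s hs hsum ∅).nonneg fun b => by positivity
  simpa using this

theorem final_abstract {P : Type*} (q : P → ℕ) (hq : ∀ p, 2 ≤ q p) (h : ℕ) (hh : 2 ≤ h)
    (κ C θ : ℝ) (hC : 0 ≤ C) (hθ : 0 ≤ θ)
    (hfin : ∀ y : ℝ, Finite {a : P →₀ ℕ // (nrm q a : ℝ) ≤ y})
    (hA : ∀ y : ℝ, 0 < y → |(Nat.card {a : P →₀ ℕ // (nrm q a : ℝ) ≤ y} : ℝ) - κ * y| ≤ C * y ^ θ)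
    (hs1 : Summable fun p => (q p : ℝ) ^ (-(1 / (h:ℝ) * ((h:ℝ) + 1))))
    (hs2 : Summable fun p => (q p : ℝ) ^ (-(θ / (h:ℝ) * ((h:ℝ) + 1)))) :
    ∃ G : ℝ, ∀ (S : Finset P) (x : ℝ), 0 < x →
    |(Nat.card {f : P →₀ ℕ // (∀ p, f p ≠ 0 → h ≤ f p) ∧ (∀ p ∈ S, f p ≠ 0) ∧ (nrm q f : ℝ) ≤ x} : ℝ) -
      (∏ p ∈ S, ((q p : ℝ) * (1 - (q p : ℝ) ^ (-(1 : ℝ)/h) + (q p : ℝ)⁻¹))⁻¹) *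
       (κ * ∏' p, (1 + ((q p : ℝ) - (q p : ℝ) ^ ((1 : ℝ)/h)) /
      ((q p : ℝ) ^ 2 * ((q p : ℝ) ^ ((1 : ℝ)/h) - 1)))) * x ^ ((1 : ℝ) / h)| ≤
      (G * (h:ℝ) ^ S.card) * x ^ (θ / h) / ∏ p ∈ S, (q p : ℝ) ^ θ := by
  have hh0 : (0:ℝ) < h := by positivity
  have hq0 : ∀ p, (0:ℝ) < q p := fun p => by have := hq p; exact_mod_cast (by omega : 0 < q p)
  have hq1 : ∀ p, (1:ℝ) < q p := fun p => by have := hq p; exact_mod_cast (by omega : 1 < q p)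
  have hFe : ∀ p, (1 + ((q p : ℝ) - (q p : ℝ) ^ ((1 : ℝ)/h)) /
      ((q p : ℝ) ^ 2 * ((q p : ℝ) ^ ((1 : ℝ)/h) - 1))) = F h ((q p : ℝ) ^ (-(1 / (h:ℝ)))) := by
    intro p
    have hpow : ((q p : ℝ) ^ ((1 : ℝ)/h)) ^ h = q p := by
      rw [one_div, Real.rpow_inv_natCast_pow (hq0 p).le (by omega)]
    rw [Real.rpow_neg (hq0 p).le, F_eq h hh _ (Real.one_lt_rpow (hq1 p) (by positivity)), hpow]
  have hratio : ∀ p, ((q p : ℝ) * (1 - (q p : ℝ) ^ (-(1 : ℝ)/h) + (q p : ℝ)⁻¹))⁻¹ =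
      (q p : ℝ)⁻¹ * (F' h ((q p : ℝ) ^ (-(1 / (h:ℝ)))) / F h ((q p : ℝ) ^ (-(1 / (h:ℝ))))) := by
    intro p
    have e1 : (-(1 : ℝ)/h) = -(1 / (h:ℝ)) := by ring
    rw [e1]
    have hw0 : 0 ≤ (q p : ℝ) ^ (-(1 / (h:ℝ))) := by positivity
    have hpow : ((q p : ℝ) ^ (-(1 / (h:ℝ)))) ^ h = (q p : ℝ)⁻¹ := by
      rw [Real.rpow_neg (hq0 p).le, inv_pow, one_div, Real.rpow_inv_natCast_pow (hq0 p).le (by omega)]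
    have hmul := F'_mul h hh ((q p : ℝ) ^ (-(1 / (h:ℝ))))
    have hF := F_ge_one h _ hw0
    rw [hpow] at hmul
    rw [mul_inv]
    congr 1
    have hne : F' h ((q p : ℝ) ^ (-(1 / (h:ℝ)))) ≠ 0 := by
      intro H; rw [H, zero_mul] at hmul; linarith
    rw [← hmul, div_mul_eq_div_div, div_self hne, one_div (1 - _ + _)]
  refine ⟨C * ∏' p, F h ((q p : ℝ) ^ (-(θ / (h:ℝ)))), fun S x hx => ?_⟩
  have hmain := abstract_count q hq h hh κ C θ hfin hA S _ _
    (euler_Z q hq h hh (1 / (h:ℝ)) (by positivity) hs1 S) (euler_Z q hq h hh (θ / (h:ℝ)) (by positivity) hs2 S) x hx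
  simp only [hFe, hratio]
  have e1 : ((∏ p ∈ S, q p : ℕ) : ℝ) = ∏ p ∈ S, (q p : ℝ) := by push_cast; rfl
  rw [e1] at hmain
  rw [Finset.prod_mul_distrib, Finset.prod_inv_distrib]
  have hQ : 0 < ∏ p ∈ S, (q p : ℝ) := Finset.prod_pos fun p _ => hq0 p
  rw [Real.finsetProd_rpow _ _ (fun p _ => (hq0 p).le)]
  refine le_trans (le_of_eq ?_) (hmain.trans ?_)
  · congr 2
    ring
  · have hG := tprod_F_nonneg q hq h hh (θ / (h:ℝ)) (by positivity) hs2
    have hr := ratio_prod_le q hq h (θ / (h:ℝ)) (by positivity) S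
    have := mul_le_mul_of_nonneg_right hr hG
    calc _ ≤ C * (x ^ (θ / h) * ((∏ p ∈ S, (q p : ℝ)) ^ θ)⁻¹ * ((h:ℝ) ^ S.card * ∏' p, F h ((q p : ℝ) ^ (-(θ / (h:ℝ)))))) := by
          gcongr
      _ = _ := by rw [div_eq_mul_inv]; ring

end HFC
end HFC_B3

section HFC_B4
open Filter Topology

namespace HFC

/-- The ideal with given exponent vector. -/
noncomputable def Phi {R : Type*} [CommRing R] (f : {p : Ideal R // p.IsPrime ∧ p ≠ ⊥} →₀ ℕ) : Ideal R :=
  f.prod fun p k => p.1 ^ k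

theorem Phi_add {R : Type*} [CommRing R] (f g : {p : Ideal R // p.IsPrime ∧ p ≠ ⊥} →₀ ℕ) :
    Phi (f + g) = Phi f * Phi g :=
  Finsupp.prod_add_index' (fun _ => pow_zero _) (fun _ _ _ => pow_add _ _ _)

theorem Phi_single {R : Type*} [CommRing R] (p : {p : Ideal R // p.IsPrime ∧ p ≠ ⊥}) (k : ℕ) :
    Phi (Finsupp.single p k) = p.1 ^ k :=
  Finsupp.prod_single_index (pow_zero _)

theorem Phi_ne_zero {R : Type*} [CommRing R] [IsDedekindDomain R]
    (f : {p : Ideal R // p.IsPrime ∧ p ≠ ⊥} →₀ ℕ) : Phi f ≠ 0 :=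
  Finset.prod_ne_zero_iff.2 fun p _ => pow_ne_zero _ p.2.2

theorem pow_dvd_Phi {R : Type*} [CommRing R] [IsDedekindDomain R]
    (f : {p : Ideal R // p.IsPrime ∧ p ≠ ⊥} →₀ ℕ) (p : {p : Ideal R // p.IsPrime ∧ p ≠ ⊥}) (k : ℕ) :
    p.1 ^ k ∣ Phi f ↔ k ≤ f p := by
  have hpr : Prime p.1 := Ideal.prime_of_isPrime p.2.2 p.2.1
  have hdec : Phi f = p.1 ^ f p * Phi (f.erase p) := by
    rw [← Phi_single, ← Phi_add, Finsupp.single_add_erase]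
  have hnd : ¬ p.1 ∣ Phi (f.erase p) := by
    intro H
    obtain ⟨r, hr, hr2⟩ := (Prime.dvd_finsetProd_iff hpr _).1 H
    have h1 : p.1 ∣ r.1 := hpr.dvd_of_dvd_pow hr2
    have h2 : Prime r.1 := Ideal.prime_of_isPrime r.2.2 r.2.1
    have h3 : p = r := Subtype.ext ((prime_dvd_prime_iff_eq hpr h2).1 h1)
    subst h3
    simp at hr
  constructor
  · intro H
    by_contra hlt
    push Not at hlt
    have h1 : p.1 ^ (f p + 1) ∣ p.1 ^ f p * Phi (f.erase p) := by
      rw [← hdec]; exact (pow_dvd_pow _ hlt).trans H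
    rw [pow_succ] at h1
    exact hnd ((mul_dvd_mul_iff_left (pow_ne_zero _ p.2.2)).1 h1)
  · intro H
    rw [hdec]
    exact (pow_dvd_pow _ H).trans (dvd_mul_right _ _)

theorem Phi_injective {R : Type*} [CommRing R] [IsDedekindDomain R] :
    Function.Injective (Phi : ({p : Ideal R // p.IsPrime ∧ p ≠ ⊥} →₀ ℕ) → Ideal R) := by
  intro f g H
  ext p
  apply le_antisymm
  · rw [← pow_dvd_Phi, ← H, pow_dvd_Phi]
  · rw [← pow_dvd_Phi, H, pow_dvd_Phi]

theorem Phi_surj {R : Type*} [CommRing R] [IsDedekindDomain R] (I : Ideal R) (hI : I ≠ 0) :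
    ∃ f, Phi f = I := by
  revert hI
  refine UniqueFactorizationMonoid.induction_on_prime (P := fun I : Ideal R => I ≠ 0 → ∃ f, Phi f = I) I ?_ ?_ ?_
  · intro h; exact absurd rfl h
  · intro J hJ _
    refine ⟨0, ?_⟩
    rw [isUnit_iff_eq_one.1 hJ]
    exact Finsupp.prod_zero_index
  · intro J p hJ hp ih _
    obtain ⟨f, rfl⟩ := ih hJ
    refine ⟨Finsupp.single ⟨p, Ideal.isPrime_of_prime hp, hp.ne_zero⟩ 1 + f, ?_⟩
    rw [Phi_add, Phi_single, pow_one]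

theorem absNorm_Phi {R : Type*} [CommRing R] [IsDedekindDomain R] [Module.Free ℤ R]
    (f : {p : Ideal R // p.IsPrime ∧ p ≠ ⊥} →₀ ℕ) :
    Ideal.absNorm (Phi f) = nrm (fun p => Ideal.absNorm p.1) f := by
  rw [Phi, nrm, Finsupp.prod, Finsupp.prod, map_prod]
  exact Finset.prod_congr rfl fun p _ => map_pow _ _ _

end HFC
end HFC_B4

section HFCFinal
open scoped nonZeroDivisors

/-- Exponent vectors of bounded norm correspond to nonzero ideals of bounded norm. -/
theorem HFC.equiv_norm_le (y : ℝ) :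
    Nonempty ({a : {p : Ideal (NumberField.RingOfIntegers K) // p.IsPrime ∧ p ≠ ⊥} →₀ ℕ //
      (HFC.nrm (fun p => Ideal.absNorm p.1) a : ℝ) ≤ y} ≃
      {I : (Ideal (NumberField.RingOfIntegers K))⁰ //
        (Ideal.absNorm (I : Ideal (NumberField.RingOfIntegers K)) : ℝ) ≤ y}) := by
  refine ⟨Equiv.ofBijective (fun a => ⟨⟨HFC.Phi a.1, mem_nonZeroDivisors_of_ne_zero (HFC.Phi_ne_zero _)⟩, ?_⟩) ⟨?_, ?_⟩⟩
  · change (Ideal.absNorm (HFC.Phi a.1) : ℝ) ≤ y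
    rw [HFC.absNorm_Phi]
    exact a.2
  · intro a b H
    have H2 := congrArg (fun z => ((z.1 : (Ideal (NumberField.RingOfIntegers K))⁰) : Ideal (NumberField.RingOfIntegers K))) H
    exact Subtype.ext (HFC.Phi_injective H2)
  · rintro ⟨⟨I, hI⟩, hy⟩
    obtain ⟨f, rfl⟩ := HFC.Phi_surj I (nonZeroDivisors.ne_zero hI)
    refine ⟨⟨f, ?_⟩, rfl⟩
    rw [← HFC.absNorm_Phi]
    exact hy

theorem HFC.two_le_absNorm (p : {p : Ideal (NumberField.RingOfIntegers K) // p.IsPrime ∧ p ≠ ⊥}) :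
    2 ≤ Ideal.absNorm p.1 := by
  have h0 : Ideal.absNorm p.1 ≠ 0 := fun H => p.2.2 (Ideal.absNorm_eq_zero_iff.1 H)
  have h1 : Ideal.absNorm p.1 ≠ 1 := fun H => p.2.1.ne_top (Ideal.absNorm_eq_one_iff.1 H)
  omega

set_option maxHeartbeats 1000000 in
theorem HFC.main_primes (h : ℕ) (hh : 2 ≤ h) :
    ∃ ξ : ℝ, ξ < 1 ∧ ∃ G : ℝ, ∀ (S : Finset {p : Ideal (NumberField.RingOfIntegers K) // p.IsPrime ∧ p ≠ ⊥})
      (x : ℝ), 0 < x →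
    |(Nat.card {f : {p : Ideal (NumberField.RingOfIntegers K) // p.IsPrime ∧ p ≠ ⊥} →₀ ℕ //
        (∀ p, f p ≠ 0 → h ≤ f p) ∧ (∀ p ∈ S, f p ≠ 0) ∧
        (HFC.nrm (fun p => Ideal.absNorm p.1) f : ℝ) ≤ x} : ℝ) -
      (∏ p ∈ S, ((Ideal.absNorm p.1 : ℝ) * (1 - (Ideal.absNorm p.1 : ℝ) ^ (-(1 : ℝ)/h) + (Ideal.absNorm p.1 : ℝ)⁻¹))⁻¹) *
       (kappa K * gammaH K h) * x ^ ((1 : ℝ) / h)| ≤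
      (G * (h:ℝ) ^ S.card) * x ^ (ξ / h) / ∏ p ∈ S, (Ideal.absNorm p.1 : ℝ) ^ ξ := by
  have hh0 : (0:ℝ) < h := by positivity
  have hn : (0:ℝ) < Module.finrank ℚ K := by exact_mod_cast Module.finrank_pos
  set θ : ℝ := max (1 - 1 / (2 * (Module.finrank ℚ K : ℝ))) ((2 * h + 1) / (2 * h + 2)) with hθ
  have hθ1 : θ < 1 := by
    refine max_lt ?_ ?_
    · have : 0 < 1 / (2 * (Module.finrank ℚ K : ℝ)) := by positivity
      linarith
    · rw [div_lt_one (by positivity)]; linarith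
  have hθ2 : (2 * (h:ℝ) + 1) / (2 * h + 2) ≤ θ := le_max_right _ _
  have hθ0 : 0 ≤ θ := le_trans (by positivity) hθ2
  obtain ⟨C, hC, hA⟩ := HFC.ideal_count_bound K (kappa K) (by unfold kappa; congr 1; ring) θ (le_max_left _ _) hθ0 hθ1.le
  have hfin : ∀ y : ℝ, Finite {a : {p : Ideal (NumberField.RingOfIntegers K) // p.IsPrime ∧ p ≠ ⊥} →₀ ℕ //
      (HFC.nrm (fun p => Ideal.absNorm p.1) a : ℝ) ≤ y} := by
    intro y
    obtain ⟨e⟩ := HFC.equiv_norm_le K y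
    have := HFC.finite_norm_le K y
    exact Finite.of_equiv _ e.symm
  have hA' : ∀ y : ℝ, 0 < y → |(Nat.card {a : {p : Ideal (NumberField.RingOfIntegers K) // p.IsPrime ∧ p ≠ ⊥} →₀ ℕ //
      (HFC.nrm (fun p => Ideal.absNorm p.1) a : ℝ) ≤ y} : ℝ) - kappa K * y| ≤ C * y ^ θ := by
    intro y hy
    obtain ⟨e⟩ := HFC.equiv_norm_le K y
    rw [Nat.card_congr e]
    exact hA y hy
  have hinj : ∀ n : ℕ, ∃ g : {p : {p : Ideal (NumberField.RingOfIntegers K) // p.IsPrime ∧ p ≠ ⊥} // Ideal.absNorm p.1 ≤ n} →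
      {I : (Ideal (NumberField.RingOfIntegers K))⁰ //
        (Ideal.absNorm (I : Ideal (NumberField.RingOfIntegers K)) : ℝ) ≤ n}, Function.Injective g := by
    intro n
    refine ⟨fun p => ⟨⟨p.1.1, mem_nonZeroDivisors_of_ne_zero p.1.2.2⟩, by exact_mod_cast p.2⟩, ?_⟩
    intro a b H
    have H2 := congrArg (fun z => ((z.1 : (Ideal (NumberField.RingOfIntegers K))⁰) : Ideal (NumberField.RingOfIntegers K))) H
    exact Subtype.ext (Subtype.ext H2)
  have hsum : ∀ σ : ℝ, 1 < σ → Summable fun p : {p : Ideal (NumberField.RingOfIntegers K) // p.IsPrime ∧ p ≠ ⊥} =>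
      (Ideal.absNorm p.1 : ℝ) ^ (-σ) := by
    intro σ hσ
    refine HFC.summable_of_count (fun p : {p : Ideal (NumberField.RingOfIntegers K) // p.IsPrime ∧ p ≠ ⊥} => Ideal.absNorm p.1)
      (fun p => (by have := HFC.two_le_absNorm K p; omega)) ?_ (kappa K + C) ?_ σ hσ
    · intro n
      obtain ⟨g, hg⟩ := hinj n
      have := HFC.finite_norm_le K n
      exact Finite.of_injective g hg
    · intro n
      rcases Nat.eq_zero_or_pos n with rfl | hn
      · have : IsEmpty {p : {p : Ideal (NumberField.RingOfIntegers K) // p.IsPrime ∧ p ≠ ⊥} // Ideal.absNorm p.1 ≤ 0} :=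
          ⟨fun p => by have := HFC.two_le_absNorm K p.1; have := p.2; omega⟩
        rw [Nat.card_of_isEmpty]
        simp
      · obtain ⟨g, hg⟩ := hinj n
        have := HFC.finite_norm_le K n
        have h1 := Nat.card_le_card_of_injective g hg
        have hn1 : (1:ℝ) ≤ n := by exact_mod_cast hn
        have h2 := hA n (by linarith)
        have h3 := (abs_le.1 h2).2
        have h4 : (n:ℝ) ^ θ ≤ n := by
          calc (n:ℝ) ^ θ ≤ (n:ℝ) ^ (1:ℝ) := Real.rpow_le_rpow_of_exponent_le hn1 hθ1.le
            _ = n := Real.rpow_one _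
        have h5 : C * (n:ℝ) ^ θ ≤ C * n := mul_le_mul_of_nonneg_left h4 hC
        have h6 := (Nat.cast_le (α := ℝ)).2 h1
        linarith
  have hs1 : 1 < 1 / (h:ℝ) * ((h:ℝ) + 1) := by
    rw [div_mul_eq_mul_div, one_lt_div hh0]; linarith
  have hs2 : 1 < θ / (h:ℝ) * ((h:ℝ) + 1) := by
    rw [div_mul_eq_mul_div, one_lt_div hh0]
    rw [div_le_iff₀ (by positivity)] at hθ2
    linarith
  clear_value θ
  unfold gammaH
  have key := HFC.final_abstract (fun p : {p : Ideal (NumberField.RingOfIntegers K) // p.IsPrime ∧ p ≠ ⊥} => Ideal.absNorm p.1)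
    (HFC.two_le_absNorm K) h hh (kappa K) C θ hC hθ0 hfin hA' (hsum _ hs1) (hsum _ hs2)
  obtain ⟨G, hG⟩ := key
  exact ⟨θ, hθ1, G, hG⟩

end HFCFinal

/-- **Counting `h`-full ideals divisible by given distinct primes `p_1, …, p_u`**:
there is `ξ = ξ(h,K) < 1` such that the count equals
`(∏_i 1/(N(p_i)(1 - N(p_i)^{-1/h} + N(p_i)^{-1}))) κ γ_h x^{1/h}
  + O_{h,u}(x^{ξ/h}/∏_i N(p_i)^ξ)`. -/
theorem count_hFull_ideals_divisible (h : ℕ) (hh : 2 ≤ h) :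
    ∃ ξ : ℝ, ξ < 1 ∧ ∀ u : ℕ, ∃ C : ℝ,
      ∀ p : Fin u → Ideal (NumberField.RingOfIntegers K),
        Function.Injective p → (∀ i, (p i).IsPrime) → (∀ i, p i ≠ ⊥) →
        ∀ x : ℝ, 2 ≤ x →
        |(Nat.card {m : Ideal (NumberField.RingOfIntegers K) //
            IsHFull K h m ∧ (Ideal.absNorm m : ℝ) ≤ x ∧ ∀ i, p i ∣ m} : ℝ) -
          (∏ i : Fin u, ((Ideal.absNorm (p i) : ℝ) *
              (1 - (Ideal.absNorm (p i) : ℝ) ^ (-(1 : ℝ)/h) +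
                (Ideal.absNorm (p i) : ℝ)⁻¹))⁻¹) *
            (kappa K * gammaH K h) * x ^ ((1 : ℝ)/h)| ≤
        C * x ^ (ξ/h) / ∏ i : Fin u, (Ideal.absNorm (p i) : ℝ) ^ ξ := by
  obtain ⟨ξ, hξ, G, hG⟩ := HFC.main_primes K h hh
  refine ⟨ξ, hξ, fun u => ⟨G * (h:ℝ) ^ u, fun p hinj hp hp0 x hx => ?_⟩⟩
  let e : Fin u ↪ {p : Ideal (NumberField.RingOfIntegers K) // p.IsPrime ∧ p ≠ ⊥} :=
    ⟨fun i => ⟨p i, hp i, hp0 i⟩, fun i j H => hinj (congrArg (fun z => z.1) H)⟩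
  have key := hG (Finset.univ.map e) x (by linarith)
  rw [Finset.prod_map, Finset.prod_map, Finset.card_map, Finset.card_univ, Fintype.card_fin] at key
  have hdvd : ∀ (f : {p : Ideal (NumberField.RingOfIntegers K) // p.IsPrime ∧ p ≠ ⊥} →₀ ℕ)
      (r : {p : Ideal (NumberField.RingOfIntegers K) // p.IsPrime ∧ p ≠ ⊥}), r.1 ∣ HFC.Phi f ↔ f r ≠ 0 := by
    intro f r
    have := HFC.pow_dvd_Phi f r 1
    rw [pow_one] at this
    rw [this, Nat.one_le_iff_ne_zero]
  have hiff : ∀ f : {p : Ideal (NumberField.RingOfIntegers K) // p.IsPrime ∧ p ≠ ⊥} →₀ ℕ,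
      ((∀ r, f r ≠ 0 → h ≤ f r) ∧ (∀ r ∈ Finset.univ.map e, f r ≠ 0) ∧
        (HFC.nrm (fun p => Ideal.absNorm p.1) f : ℝ) ≤ x) ↔
      (IsHFull K h (HFC.Phi f) ∧ (Ideal.absNorm (HFC.Phi f) : ℝ) ≤ x ∧ ∀ i, p i ∣ HFC.Phi f) := by
    intro f
    rw [HFC.absNorm_Phi]
    constructor
    · rintro ⟨h1, h2, h3⟩
      refine ⟨⟨HFC.Phi_ne_zero f, fun r hr hd => ?_⟩, h3, fun i => ?_⟩
      · have hr0 : r ≠ ⊥ := by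
          rintro rfl
          exact HFC.Phi_ne_zero f (zero_dvd_iff.1 hd)
        exact (HFC.pow_dvd_Phi f ⟨r, hr, hr0⟩ h).2 (h1 _ ((hdvd f ⟨r, hr, hr0⟩).1 hd))
      · exact (hdvd f (e i)).2 (h2 _ (Finset.mem_map_of_mem e (Finset.mem_univ i)))
    · rintro ⟨⟨-, h1⟩, h3, h2⟩
      refine ⟨fun r hr => ?_, fun r hr => ?_, h3⟩
      · exact (HFC.pow_dvd_Phi f r h).1 (h1 r.1 r.2.1 ((hdvd f r).2 hr))
      · obtain ⟨i, -, rfl⟩ := Finset.mem_map.1 hr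
        exact (hdvd f (e i)).1 (h2 i)
  have hcard : Nat.card {f : {p : Ideal (NumberField.RingOfIntegers K) // p.IsPrime ∧ p ≠ ⊥} →₀ ℕ //
        (∀ r, f r ≠ 0 → h ≤ f r) ∧ (∀ r ∈ Finset.univ.map e, f r ≠ 0) ∧
        (HFC.nrm (fun p => Ideal.absNorm p.1) f : ℝ) ≤ x} =
      Nat.card {m : Ideal (NumberField.RingOfIntegers K) //
            IsHFull K h m ∧ (Ideal.absNorm m : ℝ) ≤ x ∧ ∀ i, p i ∣ m} := by
    refine Nat.card_congr (Equiv.ofBijective (fun f => ⟨HFC.Phi f.1, (hiff f.1).1 f.2⟩) ⟨?_, ?_⟩)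
    · intro a b H
      exact Subtype.ext (HFC.Phi_injective (congrArg (fun z => z.1) H))
    · rintro ⟨m, hm⟩
      obtain ⟨f, rfl⟩ := HFC.Phi_surj m hm.1.1
      exact ⟨⟨f, (hiff f).2 hm⟩, rfl⟩
  rw [hcard] at key
  exact key

end
end
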